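/- arXiv:2505.13781 — 5 statements merged into one kernel-verified Lean document; each statement's English description precedes it below -/
import Mathlib

section
/- There exists a constant C > 0 such that for all t, n ∈ ℕ with n ≥ C·t⁷ and every function c from 𝔽₂ⁿ ∖ {0} to {Red, Blue}, there is either a 2-dimensional linear subspace of 𝔽₂ⁿ all of whose nonzero vectors are coloured Red, or a t-dimensional linear subspace of 𝔽₂ⁿ all of whose nonzero vectors are coloured Blue. -/
namespace RamseyF2

open Finset

set_option linter.unusedSectionVars false

section Fourier

variable {V : Type*} [AddCommGroup V] [Module (ZMod 2) V]

noncomputable instance dualFintype [Fintype V] : Fintype (Module.Dual (ZMod 2) V) :=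
  have : Finite (Module.Dual (ZMod 2) V) := DFunLike.finite _
  Fintype.ofFinite _

/-- The real-valued character attached to a linear functional. -/
noncomputable def chi (φ : Module.Dual (ZMod 2) V) (x : V) : ℝ := if φ x = 0 then 1 else -1

lemma add_self_zero (x : V) : x + x = 0 := by
  have h : (2 : ZMod 2) • x = 0 := by
    have : (2 : ZMod 2) = 0 := rfl
    rw [this, zero_smul]
  rwa [two_smul] at h

lemma add_add_cancel' (x y : V) : x + (x + y) = y := by
  rw [← add_assoc, add_self_zero, zero_add]

lemma sign_add : ∀ a b : ZMod 2, (if a + b = 0 then (1:ℝ) else -1) =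
    (if a = 0 then 1 else -1) * (if b = 0 then 1 else -1) := by
  intro a b
  have h : ∀ a b : ZMod 2, a + b = 0 ↔ (a = 0 ↔ b = 0) := by decide
  simp only [h a b]
  by_cases ha : a = 0 <;> by_cases hb : b = 0 <;> simp [ha, hb]

lemma chi_add (φ : Module.Dual (ZMod 2) V) (x y : V) : chi φ (x + y) = chi φ x * chi φ y := by
  simp only [chi, map_add]; exact sign_add _ _

lemma chi_add_left (φ ψ : Module.Dual (ZMod 2) V) (x : V) :
    chi (φ + ψ) x = chi φ x * chi ψ x := by
  simp only [chi, LinearMap.add_apply]; exact sign_add _ _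

@[simp] lemma chi_zero (φ : Module.Dual (ZMod 2) V) : chi φ 0 = 1 := by simp [chi]
@[simp] lemma chi_zero_left (x : V) : chi (0 : Module.Dual (ZMod 2) V) x = 1 := by simp [chi]

lemma chi_sq (φ : Module.Dual (ZMod 2) V) (x : V) : chi φ x * chi φ x = 1 := by
  unfold chi; split_ifs <;> norm_num

lemma chi_abs (φ : Module.Dual (ZMod 2) V) (x : V) : |chi φ x| = 1 := by
  unfold chi; split_ifs <;> norm_num

lemma chi_sum {ι : Type*} (s : Finset ι) (φ : Module.Dual (ZMod 2) V) (x : ι → V) :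
    chi φ (∑ i ∈ s, x i) = ∏ i ∈ s, chi φ (x i) := by
  classical
  induction s using Finset.induction_on with
  | empty => simp
  | insert a s ha ih => rw [sum_insert ha, prod_insert ha, chi_add, ih]

lemma chi_sum_left {ι : Type*} (s : Finset ι) (φ : ι → Module.Dual (ZMod 2) V) (x : V) :
    chi (∑ i ∈ s, φ i) x = ∏ i ∈ s, chi (φ i) x := by
  classical
  induction s using Finset.induction_on with
  | empty => simp
  | insert a s ha ih => rw [sum_insert ha, prod_insert ha, chi_add_left, ih]

variable [Fintype V]

lemma sum_chi_eq_zero {φ : Module.Dual (ZMod 2) V} (h : φ ≠ 0) : ∑ x, chi φ x = 0 := by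
  obtain ⟨y, hy⟩ : ∃ y, φ y ≠ 0 := by
    by_contra! hc
    exact h (LinearMap.ext hc)
  have h1 : ∑ x, chi φ x = ∑ x, chi φ (x + y) :=
    (Equiv.sum_comp (Equiv.addRight y) (fun x => chi φ x)).symm
  have h2 : chi φ y = -1 := by simp [chi, hy]
  simp only [chi_add, h2, mul_neg, mul_one, sum_neg_distrib] at h1
  linarith

lemma sum_chi_nonneg (φ : Module.Dual (ZMod 2) V) : 0 ≤ ∑ x, chi φ x := by
  by_cases h : φ = 0
  · subst h; simp
  · rw [sum_chi_eq_zero h]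

lemma sum_chi_left_eq_zero {x : V} (h : x ≠ 0) :
    ∑ φ : Module.Dual (ZMod 2) V, chi φ x = 0 := by
  obtain ⟨ψ, hy⟩ : ∃ ψ : Module.Dual (ZMod 2) V, ψ x ≠ 0 := by
    by_contra! hc
    exact h ((Module.forall_dual_apply_eq_zero_iff (ZMod 2) x).1 hc)
  have h1 : ∑ φ : Module.Dual (ZMod 2) V, chi φ x = ∑ φ : Module.Dual (ZMod 2) V, chi (φ + ψ) x :=
    (Equiv.sum_comp (Equiv.addRight ψ) (fun φ => chi φ x)).symm
  have h2 : chi ψ x = -1 := by simp [chi, hy]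
  simp only [chi_add_left, h2, mul_neg, mul_one, sum_neg_distrib] at h1
  linarith

lemma card_dual : Fintype.card (Module.Dual (ZMod 2) V) = Fintype.card V := by
  rw [Module.card_eq_pow_finrank (K := ZMod 2) (V := V),
    Module.card_eq_pow_finrank (K := ZMod 2) (V := Module.Dual (ZMod 2) V),
    Subspace.dual_finrank_eq]

lemma sum_chi_left [DecidableEq V] (x : V) :
    ∑ φ : Module.Dual (ZMod 2) V, chi φ x = if x = 0 then (Fintype.card V : ℝ) else 0 := by
  split_ifs with h
  · subst h; simp [card_dual]
  · exact sum_chi_left_eq_zero h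

/-- Majorant property for powers. -/
lemma majorant (c d : Module.Dual (ZMod 2) V → ℝ) (hcd : ∀ φ, |c φ| ≤ d φ) (p : ℕ) :
    ∀ ψ : Module.Dual (ZMod 2) V, |∑ x : V, (∑ φ, c φ * chi φ x) ^ p * chi ψ x| ≤
      ∑ x : V, (∑ φ, d φ * chi φ x) ^ p * chi ψ x := by
  induction p with
  | zero => intro ψ; simp only [pow_zero, one_mul]; rw [abs_of_nonneg (sum_chi_nonneg ψ)]
  | succ p ih =>
    intro ψ
    have key : ∀ e : Module.Dual (ZMod 2) V → ℝ,
        ∑ x : V, (∑ φ, e φ * chi φ x) ^ (p+1) * chi ψ x =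
        ∑ φ, e φ * ∑ x : V, (∑ φ, e φ * chi φ x) ^ p * chi (φ + ψ) x := by
      intro e
      simp only [mul_sum]
      rw [sum_comm]
      refine sum_congr rfl fun x _ => ?_
      rw [pow_succ, mul_sum, sum_mul]
      refine sum_congr rfl fun φ _ => ?_
      rw [chi_add_left]; ring
    rw [key, key]
    refine (abs_sum_le_sum_abs _ _).trans (sum_le_sum fun φ _ => ?_)
    rw [abs_mul]
    exact mul_le_mul (hcd φ) (ih _) (abs_nonneg _) ((abs_nonneg _).trans (hcd φ))

/-- Normalised Fourier coefficient of a finite set. -/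
noncomputable def fc (A : Finset V) (φ : Module.Dual (ZMod 2) V) : ℝ :=
  (∑ a ∈ A, chi φ a) / A.card

/-- Normalised self-convolution of a finite set. -/
noncomputable def cv (A : Finset V) (x : V) : ℝ :=
  ∑ φ : Module.Dual (ZMod 2) V, fc A φ ^ 2 * chi φ x

/-- Representation count. -/
def rep [DecidableEq V] (A : Finset V) (x : V) : ℕ := (A.filter (fun a => a + x ∈ A)).card

lemma fc_zero {A : Finset V} (hA : A.Nonempty) : fc A 0 = 1 := by
  have : (A.card : ℝ) ≠ 0 := by exact_mod_cast hA.card_pos.ne'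
  simp [fc, this]

lemma add_eq_zero_iff2 (x y : V) : x + y = 0 ↔ y = x := by
  constructor
  · intro h
    have := add_add_cancel' x y
    rw [h, add_zero] at this
    exact this.symm
  · rintro rfl; exact add_self_zero _

lemma cv_eq [DecidableEq V] (A : Finset V) (x : V) :
    cv A x = Fintype.card V * rep A x / (A.card : ℝ) ^ 2 := by
  unfold cv fc
  have h1 : ∀ φ : Module.Dual (ZMod 2) V, ((∑ a ∈ A, chi φ a) / A.card) ^ 2 * chi φ x =
      (∑ a ∈ A, ∑ b ∈ A, chi φ (a + x + b)) / (A.card : ℝ)^2 := by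
    intro φ
    rw [div_pow, sq (∑ a ∈ A, chi φ a), sum_mul_sum, div_mul_eq_mul_div, sum_mul]
    congr 1
    refine sum_congr rfl fun a _ => ?_
    rw [sum_mul]
    refine sum_congr rfl fun b _ => ?_
    rw [chi_add, chi_add]; ring
  simp only [h1]
  rw [← sum_div]
  congr 1
  rw [sum_comm]
  have h2 : ∀ a ∈ A, ∑ φ : Module.Dual (ZMod 2) V, ∑ b ∈ A, chi φ (a + x + b) =
      if a + x ∈ A then (Fintype.card V : ℝ) else 0 := by
    intro a _
    rw [sum_comm]
    simp only [sum_chi_left, add_eq_zero_iff2]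
    rw [sum_ite_eq']
  rw [sum_congr rfl h2, ← sum_filter, sum_const, rep, nsmul_eq_mul, mul_comm]

lemma cv_nonneg (A : Finset V) (x : V) : 0 ≤ cv A x := by
  classical
  rw [cv_eq]; positivity

lemma sum_fc_sq {A : Finset V} (hA : A.Nonempty) :
    ∑ φ, fc A φ ^ 2 = Fintype.card V / (A.card : ℝ) := by
  classical
  have h : (A.card : ℝ) ≠ 0 := by exact_mod_cast hA.card_pos.ne'
  have := cv_eq A 0
  simp only [cv, chi_zero, mul_one, rep, add_zero] at this
  rw [this, filter_true_of_mem (fun _ h => h)]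
  field_simp

lemma moment {A C : Finset V} (hA : A.Nonempty) (hC : ∀ x ∈ C, cv A x = 0) {p : ℕ} (hp : Even p) :
    (C.card : ℝ) * 2 ^ p ≤ ∑ x, cv A x ^ p := by
  classical
  have h := majorant (fun φ => (if φ = 0 then 2 else 0) - fc A φ ^ 2) (fun φ => fc A φ ^ 2)
    (by
      intro φ
      split_ifs with h
      · subst h; rw [fc_zero hA]; norm_num
      · rw [zero_sub, abs_neg, abs_of_nonneg (sq_nonneg _)]) p (0 : Module.Dual (ZMod 2) V)
  simp only [chi_zero_left, mul_one, sub_mul, sum_sub_distrib, ite_mul, zero_mul, sum_ite_eq',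
    mem_univ, if_true] at h
  change _ ≤ ∑ x, cv A x ^ p at h
  change |∑ x, (2 - cv A x) ^ p| ≤ _ at h
  refine le_trans ?_ ((le_abs_self _).trans h)
  calc (C.card : ℝ) * 2 ^ p = ∑ x ∈ C, (2 - cv A x) ^ p := by
        rw [sum_congr rfl (fun x hx => by rw [hC x hx, sub_zero])]; simp
    _ ≤ _ := sum_le_sum_of_subset_of_nonneg (subset_univ _) (fun _ _ _ => hp.pow_nonneg _)

end Fourier

section Sift

variable {V : Type*} [AddCommGroup V] [Module (ZMod 2) V] [Fintype V] [DecidableEq V]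

/-- The sifted set. -/
def sv (A : Finset V) {p : ℕ} (s : Fin p → V) : Finset V :=
  univ.filter (fun x => ∀ i, x + s i ∈ A)

lemma rep_eq (A : Finset V) (x b : V) :
    (rep A x : ℝ) = ∑ s : V, if (b + s ∈ A ∧ b + x + s ∈ A) then (1:ℝ) else 0 := by
  rw [← Equiv.sum_comp (Equiv.addLeft b)]
  simp only [Equiv.coe_addLeft, add_add_cancel']
  have : ∀ s : V, b + x + (b + s) = s + x := by
    intro s
    have : b + x + (b + s) = (b + (b + (s + x))) := by abel
    rw [this, add_add_cancel']
  simp only [this]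
  rw [← sum_filter, sum_const, nsmul_eq_mul, mul_one, rep]
  congr 2
  ext a; simp

lemma sift_identity (A : Finset V) (w : V → ℝ) (p : ℕ) :
    ∑ s : Fin p → V, ∑ b ∈ sv A s, ∑ b' ∈ sv A s, w (b + b') =
      Fintype.card V * ∑ x, w x * (rep A x : ℝ) ^ p := by
  have h1 : ∀ s : Fin p → V, ∑ b ∈ sv A s, ∑ b' ∈ sv A s, w (b + b') =
      ∑ b : V, ∑ x : V, w x * ∏ i, (if (b + s i ∈ A ∧ b + x + s i ∈ A) then (1:ℝ) else 0) := by
    intro s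
    rw [sv, sum_filter]
    refine sum_congr rfl fun b _ => ?_
    rw [sum_filter, ← Equiv.sum_comp (Equiv.addLeft b)]
    simp only [Equiv.coe_addLeft, add_add_cancel', prod_boole, mem_univ, true_implies]
    split_ifs with h
    · refine sum_congr rfl fun x _ => ?_
      simp [h]
    · symm
      apply sum_eq_zero
      intro x _
      rw [if_neg, mul_zero]
      intro hh; exact h fun i => (hh i).1
  simp only [h1]
  rw [sum_comm]
  have h2 : ∀ b : V, ∑ s : Fin p → V, ∑ x : V, w x *
      ∏ i, (if (b + s i ∈ A ∧ b + x + s i ∈ A) then (1:ℝ) else 0) =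
      ∑ x, w x * (rep A x : ℝ) ^ p := by
    intro b
    rw [sum_comm]
    refine sum_congr rfl fun x _ => ?_
    rw [← mul_sum, rep_eq A x b, Fintype.sum_pow]
  simp only [h2]
  simp

lemma sift_exists {A C : Finset V} (hA : A.Nonempty) (hC : ∀ x ∈ C, cv A x = 0) {p : ℕ}
    (hp : Even p) {γ : ℝ} (hγ : γ * Fintype.card V ≤ C.card)
    (hpγ : 32 * (3/2 : ℝ) ^ p ≤ γ * 2 ^ p) :
    ∃ B : Finset V, ((A.card : ℝ) / Fintype.card V) ^ p * Fintype.card V ≤ B.card ∧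
      16 * ∑ b ∈ B, ∑ b' ∈ B, (if cv A (b + b') < 3/2 then (1:ℝ) else 0) ≤ (B.card : ℝ) ^ 2 := by
  set N : ℝ := (Fintype.card V : ℝ) with hN
  have hNpos : 0 < N := by
    rw [hN]; exact_mod_cast Fintype.card_pos
  have hApos : (0:ℝ) < A.card := by exact_mod_cast hA.card_pos
  set κ : ℝ := (A.card : ℝ) ^ 2 / N with hκ
  have hκpos : 0 < κ := by positivity
  have hrep : ∀ x, (rep A x : ℝ) = κ * cv A x := by
    intro x
    rw [cv_eq, hκ, ← hN]; field_simp
  have hid := sift_identity A (fun x => 1 - 16 * (if cv A x < 3/2 then (1:ℝ) else 0)) p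
  have hlow : N * κ ^ p ≤
      ∑ x, (1 - 16 * (if cv A x < 3/2 then (1:ℝ) else 0)) * (rep A x : ℝ) ^ p := by
    have e1 : ∀ x, κ ^ p * (cv A x ^ p - 16 * (3/2:ℝ)^p) ≤
        (1 - 16 * (if cv A x < 3/2 then (1:ℝ) else 0)) * (rep A x : ℝ) ^ p := by
      intro x
      rw [hrep, mul_pow]
      have h0 : 0 < κ ^ p := by positivity
      have h1 := cv_nonneg A x
      split_ifs with h
      · have : cv A x ^ p ≤ (3/2:ℝ)^p := pow_le_pow_left₀ h1 h.le _
        nlinarith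
      · have : (0:ℝ) < (3/2:ℝ)^p := by positivity
        nlinarith
    refine le_trans ?_ (sum_le_sum fun x _ => e1 x)
    rw [← mul_sum, sum_sub_distrib, sum_const, card_univ, nsmul_eq_mul, ← hN]
    have h2 := moment hA hC hp
    have h3 : γ * N * 2 ^ p ≤ C.card * 2 ^ p := by gcongr
    have h4 : (1:ℝ) ≤ (3/2:ℝ)^p := one_le_pow₀ (by norm_num)
    have h0 : 0 < κ ^ p := by positivity
    rw [mul_comm N]
    gcongr
    nlinarith
  have hcard : (Fintype.card (Fin p → V) : ℝ) = N ^ p := by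
    rw [Fintype.card_fun, Fintype.card_fin]; push_cast; rfl
  have hsum : ∑ _s : Fin p → V, (((A.card : ℝ) / N) ^ p * N) ^ 2 ≤
      ∑ s : Fin p → V, ∑ b ∈ sv A s, ∑ b' ∈ sv A s,
        (1 - 16 * (if cv A (b + b') < 3/2 then (1:ℝ) else 0)) := by
    rw [hid, sum_const, card_univ, nsmul_eq_mul, hcard]
    calc N ^ p * (((A.card : ℝ) / N) ^ p * N) ^ 2 = N * (N * κ ^ p) := by
          rw [hκ, mul_pow, ← pow_mul, mul_comm p 2, pow_mul, ← mul_assoc, ← mul_pow]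
          have : N * ((A.card : ℝ) / N) ^ 2 = (A.card : ℝ) ^ 2 / N := by field_simp
          rw [this]; ring
      _ ≤ _ := by rw [← hN]; gcongr
  obtain ⟨s, -, hs⟩ := exists_le_of_sum_le univ_nonempty hsum
  refine ⟨sv A s, ?_, ?_⟩
  all_goals
    simp only [sum_sub_distrib, sum_const, nsmul_eq_mul, mul_one, ← mul_sum] at hs
    have hbad : 0 ≤ ∑ b ∈ sv A s, ∑ b' ∈ sv A s, (if cv A (b + b') < 3/2 then (1:ℝ) else 0) :=
      sum_nonneg fun b _ => sum_nonneg fun b' _ => by split_ifs <;> norm_num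
  · rw [← pow_le_pow_iff_left₀ (by positivity) (by positivity) two_ne_zero]
    nlinarith
  · nlinarith [sq_nonneg (((A.card : ℝ) / N) ^ p * N)]

end Sift

section Hoeffding

lemma exp_le_cosh {l x : ℝ} (hx : |x| ≤ 1) :
    Real.exp (l * x) ≤ Real.cosh l + x * Real.sinh l := by
  obtain ⟨h1, h2⟩ := abs_le.1 hx
  have := convexOn_exp.2 (Set.mem_univ l) (Set.mem_univ (-l))
    (show (0:ℝ) ≤ (1+x)/2 by linarith) (show (0:ℝ) ≤ (1-x)/2 by linarith) (by ring)
  simp only [smul_eq_mul] at this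
  have e : (1+x)/2 * l + (1-x)/2 * (-l) = l * x := by ring
  rw [e] at this
  rw [Real.cosh_eq, Real.sinh_eq]
  linarith

lemma hoeffding_one {ι : Type*} (B : Finset ι) (X : ι → ℝ) (hX : ∀ b ∈ B, |X b| ≤ 1)
    (h0 : ∑ b ∈ B, X b = 0) (M : ℕ) (η : ℝ) (hη : 0 ≤ η) :
    (((Fintype.piFinset (fun _ : Fin M => B)).filter
      (fun b => η * M < ∑ i, X (b i))).card : ℝ) ≤
      Real.exp (-(M * η ^ 2 / 2)) * (B.card : ℝ) ^ M := by
  have h1 : ∑ b ∈ B, Real.exp (η * X b) ≤ B.card * Real.exp (η ^ 2 / 2) := by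
    calc ∑ b ∈ B, Real.exp (η * X b) ≤ ∑ b ∈ B, (Real.cosh η + X b * Real.sinh η) :=
          sum_le_sum fun b hb => exp_le_cosh (hX b hb)
      _ = B.card * Real.cosh η := by
          rw [sum_add_distrib, ← sum_mul, h0]; simp
      _ ≤ _ := by gcongr; exact Real.cosh_le_exp_half_sq η
  have h2 : ∑ b ∈ Fintype.piFinset (fun _ : Fin M => B), Real.exp (η * ∑ i, X (b i)) ≤
      (B.card * Real.exp (η ^ 2 / 2)) ^ M := by
    have e : (∑ b ∈ B, Real.exp (η * X b)) ^ M =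
        ∑ b ∈ Fintype.piFinset (fun _ : Fin M => B), Real.exp (η * ∑ i, X (b i)) := by
      have := prod_univ_sum (fun _ : Fin M => B) (fun _ b => Real.exp (η * X b))
      simp only [prod_const, card_univ, Fintype.card_fin] at this
      rw [this]
      refine sum_congr rfl fun b _ => ?_
      rw [mul_sum, Real.exp_sum]
    rw [← e]
    exact pow_le_pow_left₀ (sum_nonneg fun _ _ => (Real.exp_pos _).le) h1 _
  set L := (Fintype.piFinset (fun _ : Fin M => B)).filter (fun b => η * M < ∑ i, X (b i)) with hL
  have h3 : (L.card : ℝ) * Real.exp (η * (η * M)) ≤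
      ∑ b ∈ Fintype.piFinset (fun _ : Fin M => B), Real.exp (η * ∑ i, X (b i)) := by
    calc (L.card : ℝ) * Real.exp (η * (η * M)) = ∑ b ∈ L, Real.exp (η * (η * M)) := by simp
      _ ≤ ∑ b ∈ L, Real.exp (η * ∑ i, X (b i)) := by
          refine sum_le_sum fun b hb => ?_
          have := (mem_filter.1 hb).2
          gcongr
      _ ≤ _ := sum_le_sum_of_subset_of_nonneg (filter_subset _ _) fun _ _ _ => (Real.exp_pos _).le
  have h4 := h3.trans h2
  rw [mul_pow, ← Real.exp_nat_mul] at h4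
  have h5 : Real.exp (-(M * η ^ 2 / 2)) = Real.exp (M * (η^2/2)) / Real.exp (η * (η * M)) := by
    rw [← Real.exp_sub]; congr 1; ring
  rw [h5, div_mul_eq_mul_div, le_div_iff₀ (Real.exp_pos _)]
  linarith

lemma hoeffding {ι : Type*} (B : Finset ι) (X : ι → ℝ) (hX : ∀ b ∈ B, |X b| ≤ 1)
    (h0 : ∑ b ∈ B, X b = 0) (M : ℕ) (η : ℝ) (hη : 0 ≤ η) :
    (((Fintype.piFinset (fun _ : Fin M => B)).filter
      (fun b => η * M < |∑ i, X (b i)|)).card : ℝ) ≤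
      2 * Real.exp (-(M * η ^ 2 / 2)) * (B.card : ℝ) ^ M := by
  classical
  have h1 := hoeffding_one B X hX h0 M η hη
  have h2 := hoeffding_one B (fun b => - X b) (by simpa using hX) (by simpa using h0) M η hη
  have h3 : (Fintype.piFinset (fun _ : Fin M => B)).filter (fun b => η * M < |∑ i, X (b i)|) ⊆
      (Fintype.piFinset (fun _ : Fin M => B)).filter (fun b => η * M < ∑ i, X (b i)) ∪
      (Fintype.piFinset (fun _ : Fin M => B)).filter (fun b => η * M < ∑ i, - X (b i)) := by
    intro b hb
    rw [mem_filter, lt_abs] at hb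
    rw [mem_union, mem_filter, mem_filter, sum_neg_distrib]
    tauto
  have h4 := (card_le_card h3).trans (card_union_le _ _)
  have h5 : (((Fintype.piFinset (fun _ : Fin M => B)).filter
      (fun b => η * M < |∑ i, X (b i)|)).card : ℝ) ≤
      ((Fintype.piFinset (fun _ : Fin M => B)).filter (fun b => η * M < ∑ i, X (b i))).card +
      ((Fintype.piFinset (fun _ : Fin M => B)).filter (fun b => η * M < ∑ i, - X (b i))).card := by
    exact_mod_cast h4
  linarith

end Hoeffding

section Periodicity

variable {V : Type*} [AddCommGroup V] [Module (ZMod 2) V] [Fintype V] [DecidableEq V]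

/-- Number of points where a real function exceeds a threshold. -/
noncomputable def exc (f : V → ℝ) (a : ℝ) : ℝ := ((univ.filter (fun y => a < f y)).card : ℝ)

lemma exc_translate (f : V → ℝ) (a : ℝ) (x : V) : exc (fun y => f (y + x)) a = exc f a := by
  unfold exc
  congr 1
  apply card_bij (fun y _ => y + x)
  · intro y hy; simpa using hy
  · intro y _ z _ h; exact add_right_cancel h
  · intro y hy
    refine ⟨y + x, ?_, ?_⟩
    · simp only [mem_filter, mem_univ, true_and, add_assoc, add_self_zero, add_zero] at hy ⊢
      exact hy
    · rw [add_assoc, add_self_zero, add_zero]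

lemma exc_le_add {f g h : V → ℝ} {a b : ℝ} (hf : ∀ y, f y ≤ g y + h y) :
    exc f (a + b) ≤ exc g a + exc h b := by
  unfold exc
  have : univ.filter (fun y => a + b < f y) ⊆
      univ.filter (fun y => a < g y) ∪ univ.filter (fun y => b < h y) := by
    intro y hy
    simp only [mem_filter, mem_univ, true_and, mem_union] at hy ⊢
    by_contra! hc
    linarith [hf y, hc.1, hc.2]
  exact_mod_cast (card_le_card this).trans (card_union_le _ _)

/-- Average of `s` over the translate of `B` by `y`. -/
noncomputable def av (B : Finset V) (s : V → ℝ) (y : V) : ℝ := (∑ b ∈ B, s (y + b)) / B.card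

lemma av_mem {B : Finset V} (hB : B.Nonempty) {s : V → ℝ} (hs : ∀ y, 0 ≤ s y ∧ s y ≤ 1) (y : V) :
    0 ≤ av B s y ∧ av B s y ≤ 1 := by
  have hB' : (0:ℝ) < B.card := by exact_mod_cast hB.card_pos
  unfold av
  constructor
  · exact div_nonneg (sum_nonneg fun b _ => (hs _).1) hB'.le
  · rw [div_le_one hB']
    calc ∑ b ∈ B, s (y + b) ≤ ∑ b ∈ B, 1 := sum_le_sum fun b _ => (hs _).2
      _ = _ := by simp

lemma croot_sisask {B : Finset V} (hB : B.Nonempty) {s : V → ℝ} (hs : ∀ y, 0 ≤ s y ∧ s y ≤ 1)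
    (M : ℕ) (hM0 : 0 < M) {η D : ℝ} (hη : 0 ≤ η) (hD : 0 < D)
    (hM : 2 * Real.exp (-(M * η ^ 2 / 2)) * Fintype.card V ≤ D / 2) :
    ∃ X : Finset V, (1/2) * ((B.card : ℝ) / Fintype.card V) ^ M * Fintype.card V ≤ X.card ∧
      ∀ x ∈ X, ∀ x' ∈ X, exc (fun y => |av B s (y + x) - av B s (y + x')|) (η + η) ≤ D + D := by
  have hB' : (0:ℝ) < B.card := by exact_mod_cast hB.card_pos
  have hMpos : (0:ℝ) < M := by exact_mod_cast hM0
  set N : ℝ := (Fintype.card V : ℝ) with hN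
  have hNpos : 0 < N := by rw [hN]; exact_mod_cast Fintype.card_pos
  set P := Fintype.piFinset (fun _ : Fin M => B) with hP
  have hPcard : (P.card : ℝ) = (B.card : ℝ) ^ M := by
    rw [hP, Fintype.card_piFinset]; simp
  let e : (Fin M → V) → V → ℝ := fun b y => |(∑ i, s (y + b i)) / M - av B s y|
  set L := P.filter (fun b => exc (e b) η ≤ D) with hL
  have hpt : ∀ y, ((P.filter (fun b => η < e b y)).card : ℝ) ≤
      2 * Real.exp (-(M * η ^ 2 / 2)) * (B.card : ℝ) ^ M := by
    intro y
    have h := hoeffding B (fun b => s (y + b) - av B s y) (by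
      intro b _
      have h1 := hs (y + b)
      have h2 := av_mem hB hs y
      rw [abs_le]; constructor <;> linarith [h1.1, h1.2, h2.1, h2.2]) (by
      rw [sum_sub_distrib, sum_const, nsmul_eq_mul, av]; field_simp; ring) M η hη
    refine le_trans (le_of_eq ?_) h
    congr 2
    refine filter_congr fun b _ => ?_
    have : ∑ i, (s (y + b i) - av B s y) = M * ((∑ i, s (y + b i)) / M - av B s y) := by
      rw [sum_sub_distrib, sum_const, card_univ, Fintype.card_fin, nsmul_eq_mul]; field_simp
    rw [this, abs_mul, abs_of_pos hMpos, mul_comm η, mul_lt_mul_iff_right₀ hMpos]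
  have hsum : ∑ b ∈ P, exc (e b) η ≤ D / 2 * (B.card : ℝ) ^ M := by
    have h1 : ∑ b ∈ P, exc (e b) η = ∑ y : V, ((P.filter (fun b => η < e b y)).card : ℝ) := by
      simp only [exc, card_filter, Nat.cast_sum]
      rw [sum_comm]
    rw [h1]
    calc _ ≤ ∑ y : V, 2 * Real.exp (-(M * η ^ 2 / 2)) * (B.card : ℝ) ^ M :=
          sum_le_sum fun y _ => hpt y
      _ = (2 * Real.exp (-(M * η ^ 2 / 2)) * N) * (B.card : ℝ) ^ M := by
          rw [sum_const, card_univ, nsmul_eq_mul, ← hN]; ring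
      _ ≤ _ := by gcongr
  have hLcard : (1/2) * (B.card : ℝ) ^ M ≤ L.card := by
    have h1 : ((P.filter (fun b => ¬ exc (e b) η ≤ D)).card : ℝ) * D ≤ ∑ b ∈ P, exc (e b) η := by
      calc _ = ∑ b ∈ P.filter (fun b => ¬ exc (e b) η ≤ D), D := by simp
        _ ≤ ∑ b ∈ P.filter (fun b => ¬ exc (e b) η ≤ D), exc (e b) η :=
            sum_le_sum fun b hb => (not_le.1 (mem_filter.1 hb).2).le
        _ ≤ _ := sum_le_sum_of_subset_of_nonneg (filter_subset _ _) fun _ _ _ => by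
            unfold exc; positivity
    have h2 : (L.card : ℝ) + ((P.filter (fun b => ¬ exc (e b) η ≤ D)).card : ℝ) = P.card := by
      exact_mod_cast card_filter_add_card_filter_not (s := P) (fun b => exc (e b) η ≤ D)
    have h3 := h1.trans hsum
    have h4 : ((P.filter (fun b => ¬ exc (e b) η ≤ D)).card : ℝ) ≤ 1/2 * (B.card : ℝ) ^ M := by
      refine le_of_mul_le_mul_right ?_ hD
      linarith
    rw [hPcard] at h2
    linarith
  -- pigeonhole
  have hfib : ∑ z : Fin M → V, ((univ.filter (fun x : V => (fun i => z i + x) ∈ L)).card : ℝ) =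
      N * L.card := by
    simp only [card_filter, Nat.cast_sum]
    rw [sum_comm]
    have : ∀ x : V, ∑ z : Fin M → V, (((if (fun i => z i + x) ∈ L then 1 else 0 : ℕ)) : ℝ) =
        L.card := by
      intro x
      have := Equiv.sum_comp (Equiv.addRight (fun _ : Fin M => x))
        (fun z => (((if z ∈ L then 1 else 0 : ℕ)) : ℝ))
      have h2 : ∑ z : Fin M → V, (((if z ∈ L then 1 else 0 : ℕ)) : ℝ) = L.card := by
        simp
      rw [← h2, ← this]
      rfl
    simp only [this]
    simp [hN]
  have hex : ∑ z : Fin M → V, (1/2) * ((B.card : ℝ) / N) ^ M * N ≤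
      ∑ z : Fin M → V, ((univ.filter (fun x : V => (fun i => z i + x) ∈ L)).card : ℝ) := by
    rw [hfib, sum_const, card_univ, nsmul_eq_mul, Fintype.card_fun, Fintype.card_fin]
    push_cast
    rw [← hN, div_pow]
    calc N ^ M * (1 / 2 * ((B.card : ℝ) ^ M / N ^ M) * N) = N * ((1/2) * (B.card : ℝ) ^ M) := by
          field_simp
      _ ≤ _ := by gcongr
  obtain ⟨z, -, hz⟩ := exists_le_of_sum_le univ_nonempty hex
  refine ⟨_, hz, ?_⟩
  have hone : ∀ x ∈ univ.filter (fun x : V => (fun i => z i + x) ∈ L),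
      exc (fun y => |(∑ i, s (y + z i)) / M - av B s (y + x)|) η ≤ D := by
    intro x hx
    have h1 := (mem_filter.1 (mem_filter.1 hx).2).2
    rw [← exc_translate _ _ x] at h1
    refine le_trans (le_of_eq ?_) h1
    congr 1
    funext y
    simp only [e]
    have : ∀ i, y + x + (z i + x) = y + z i := by
      intro i
      have : y + x + (z i + x) = y + z i + (x + x) := by abel
      rw [this, add_self_zero, add_zero]
    simp only [this]
  intro x hx x' hx'
  refine (exc_le_add ?_).trans (add_le_add (hone x hx) (hone x' hx'))
  intro y
  rw [abs_sub_comm ((∑ i, s (y + z i)) / M) (av B s (y + x))]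
  exact abs_sub_le _ _ _

lemma iterate_periods {g : V → ℝ} {X : Finset V} {η D : ℝ}
    (h : ∀ x ∈ X, ∀ x' ∈ X, exc (fun y => |g (y + x) - g (y + x')|) η ≤ D)
    {k : ℕ} (u v : Fin k → V) (hu : ∀ i, u i ∈ X) (hv : ∀ i, v i ∈ X) (t : Finset (Fin k)) :
    exc (fun y => |g (y + ∑ i ∈ t, (u i + v i)) - g y|) (t.card * η) ≤ t.card * D := by
  induction t using Finset.induction_on with
  | empty => simp [exc]
  | insert a t ha ih =>
    rw [card_insert_of_notMem ha]
    push_cast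
    rw [add_mul, add_mul, one_mul, one_mul, add_comm _ η, add_comm _ D]
    have h1 := h (u a) (hu a) (v a) (hv a)
    rw [← exc_translate _ _ (∑ i ∈ t, (u i + v i) + v a)] at h1
    refine (exc_le_add ?_).trans (add_le_add h1 ih)
    intro y
    have e1 : y + (∑ i ∈ t, (u i + v i) + v a) + u a = y + ∑ i ∈ insert a t, (u i + v i) := by
      rw [sum_insert ha]; abel
    have e2 : y + (∑ i ∈ t, (u i + v i) + v a) + v a = y + ∑ i ∈ t, (u i + v i) := by
      have : y + (∑ i ∈ t, (u i + v i) + v a) + v a =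
        y + ∑ i ∈ t, (u i + v i) + (v a + v a) := by abel
      rw [this, add_self_zero, add_zero]
    simp only [e1, e2]
    exact abs_sub_le _ _ _

lemma sum_chi_pow (X : Finset V) (φ : Module.Dual (ZMod 2) V) (k : ℕ) :
    ∑ u ∈ Fintype.piFinset (fun _ : Fin k => X), chi φ (∑ i, u i) = (∑ x ∈ X, chi φ x) ^ k := by
  have := prod_univ_sum (fun _ : Fin k => X) (fun _ b => chi φ b)
  simp only [prod_const, card_univ, Fintype.card_fin] at this
  rw [this]
  refine sum_congr rfl fun b _ => chi_sum _ _ _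

lemma spectral_mass {A B : Finset V} (hB : B.Nonempty)
    (hbad : 16 * ∑ b ∈ B, ∑ b' ∈ B, (if cv A (b + b') < 3/2 then (1:ℝ) else 0) ≤ (B.card : ℝ) ^ 2)
    {k M : ℕ} (hk : 0 < k) (hM0 : 0 < M)
    (hM : 2 * Real.exp (-(M * (1 / (64 * k : ℝ)) ^ 2 / 2)) * Fintype.card V ≤
      ((B.card : ℝ) / (64 * k)) / 2) :
    ∃ X : Finset V, X.Nonempty ∧
      (1/2) * ((B.card : ℝ) / Fintype.card V) ^ M * Fintype.card V ≤ X.card ∧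
      21/16 ≤ ∑ φ, fc A φ ^ 2 * fc X φ ^ (2 * k) := by
  have hB' : (0:ℝ) < B.card := by exact_mod_cast hB.card_pos
  have hk' : (0:ℝ) < k := by exact_mod_cast hk
  have hNpos : (0:ℝ) < Fintype.card V := by exact_mod_cast Fintype.card_pos
  set s : V → ℝ := fun y => if cv A y < 3/2 then 0 else 1 with hsdef
  have hs : ∀ y, 0 ≤ s y ∧ s y ≤ 1 := by
    intro y; simp only [hsdef]; split_ifs <;> norm_num
  obtain ⟨X, hXc, hX⟩ := croot_sisask hB hs M hM0 (η := 1 / (64 * k)) (D := B.card / (64 * k))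
    (by positivity) (by positivity) hM
  have hXpos : (0:ℝ) < X.card := lt_of_lt_of_le (by positivity) hXc
  have hXne : X.Nonempty := by
    rw [← card_pos]; exact_mod_cast hXpos
  refine ⟨X, hXne, hXc, ?_⟩
  -- the base average
  have hbase : 15/16 * (B.card : ℝ) ≤ ∑ y ∈ B, av B s y := by
    have h1 : ∑ b ∈ B, ∑ b' ∈ B, s (b + b') = (B.card : ℝ) ^ 2 -
        ∑ b ∈ B, ∑ b' ∈ B, (if cv A (b + b') < 3/2 then (1:ℝ) else 0) := by
      have : ∀ y, s y = 1 - (if cv A y < 3/2 then (1:ℝ) else 0) := by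
        intro y; simp only [hsdef]; split_ifs <;> norm_num
      simp only [this, sum_sub_distrib, sum_const, nsmul_eq_mul, mul_one]; ring
    simp only [av]
    rw [← sum_div, le_div_iff₀ hB', h1]
    nlinarith
  have hshift : ∀ u ∈ Fintype.piFinset (fun _ : Fin k => X),
      ∀ v ∈ Fintype.piFinset (fun _ : Fin k => X),
      7/8 * (B.card : ℝ) ^ 2 ≤ ∑ b ∈ B, ∑ b' ∈ B, s (b + b' + (∑ i, u i + ∑ i, v i)) := by
    intro u hu v hv
    have h := iterate_periods hX u v (Fintype.mem_piFinset.1 hu) (Fintype.mem_piFinset.1 hv) univ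
    rw [sum_add_distrib] at h
    set σ := ∑ i, u i + ∑ i, v i with hσ
    rw [card_univ, Fintype.card_fin] at h
    have ea : (k:ℝ) * (1 / (64 * k) + 1 / (64 * k)) = 1/32 := by field_simp; norm_num
    have eb : (k:ℝ) * ((B.card:ℝ) / (64 * k) + (B.card:ℝ) / (64 * k)) = B.card/32 := by
      field_simp; norm_num
    rw [ea, eb] at h
    have hpt : ∀ y, av B s y - 1/32 - (if 1/32 < |av B s (y + σ) - av B s y| then (1:ℝ) else 0) ≤
        av B s (y + σ) := by
      intro y
      have h1 := av_mem hB hs y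
      have h2 := av_mem hB hs (y + σ)
      split_ifs with hc
      · linarith [h1.2, h2.1]
      · have := (abs_le.1 (not_lt.1 hc)).1
        linarith
    have hcount : ∑ y ∈ B, (if 1/32 < |av B s (y + σ) - av B s y| then (1:ℝ) else 0) ≤
        B.card / 32 := by
      refine le_trans ?_ h
      unfold exc
      rw [← sum_filter, sum_const, nsmul_eq_mul, mul_one]
      exact_mod_cast card_le_card (filter_subset_filter _ (subset_univ _))
    have hsum : 7/8 * (B.card : ℝ) ≤ ∑ y ∈ B, av B s (y + σ) := by
      have := sum_le_sum (s := B) fun y _ => hpt y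
      simp only [sum_sub_distrib, sum_const, nsmul_eq_mul] at this
      linarith
    simp only [av] at hsum
    rw [← sum_div, le_div_iff₀ hB'] at hsum
    have e : ∀ b b' : V, b + b' + σ = b + σ + b' := by intro b b'; abel
    simp only [e]
    nlinarith
  -- pass to cv
  have hscv : ∀ y, 3/2 * s y ≤ cv A y := by
    intro y
    simp only [hsdef]
    split_ifs with hc
    · simpa using cv_nonneg A y
    · linarith
  set P := Fintype.piFinset (fun _ : Fin k => X) with hP
  have hPcard : (P.card : ℝ) = (X.card : ℝ) ^ k := by
    rw [hP, Fintype.card_piFinset]; simp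
  have hlow : 21/16 * (B.card : ℝ) ^ 2 * ((X.card : ℝ) ^ k) ^ 2 ≤
      ∑ u ∈ P, ∑ v ∈ P, ∑ b ∈ B, ∑ b' ∈ B, cv A (b + b' + (∑ i, u i + ∑ i, v i)) := by
    calc 21/16 * (B.card : ℝ) ^ 2 * ((X.card : ℝ) ^ k) ^ 2 =
        ∑ u ∈ P, ∑ v ∈ P, 3/2 * (7/8 * (B.card : ℝ) ^ 2) := by
          simp only [sum_const, nsmul_eq_mul, hPcard]; ring
      _ ≤ _ := by
          refine sum_le_sum fun u hu => sum_le_sum fun v hv => ?_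
          refine (mul_le_mul_of_nonneg_left (hshift u hu v hv) (by norm_num)).trans ?_
          rw [mul_sum]
          refine sum_le_sum fun b _ => ?_
          rw [mul_sum]
          exact sum_le_sum fun b' _ => hscv _
  have hup : ∑ u ∈ P, ∑ v ∈ P, ∑ b ∈ B, ∑ b' ∈ B, cv A (b + b' + (∑ i, u i + ∑ i, v i)) =
      ∑ φ, fc A φ ^ 2 * ((∑ b ∈ B, chi φ b) ^ 2 * (∑ x ∈ X, chi φ x) ^ (2 * k)) := by
    have e : ∀ φ : Module.Dual (ZMod 2) V,
        (∑ b ∈ B, chi φ b) ^ 2 * (∑ x ∈ X, chi φ x) ^ (2 * k) =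
        ∑ u ∈ P, ∑ v ∈ P, ∑ b ∈ B, ∑ b' ∈ B, chi φ (b + b' + (∑ i, u i + ∑ i, v i)) := by
      intro φ
      rw [two_mul k, pow_add, ← sum_chi_pow X, ← hP, sq, sum_mul_sum P, mul_comm, sum_mul]
      refine sum_congr rfl fun u _ => ?_
      rw [sum_mul]
      refine sum_congr rfl fun v _ => ?_
      rw [sum_mul_sum, mul_sum]
      refine sum_congr rfl fun b _ => ?_
      rw [mul_sum]
      refine sum_congr rfl fun b' _ => ?_
      rw [chi_add, chi_add, chi_add]; ring
    simp only [e, mul_sum]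
    unfold cv
    symm
    rw [sum_comm]
    refine sum_congr rfl fun u _ => ?_
    rw [sum_comm]
    refine sum_congr rfl fun v _ => ?_
    rw [sum_comm]
    refine sum_congr rfl fun b _ => ?_
    rw [sum_comm]
  rw [hup] at hlow
  have hfin : ∑ φ, fc A φ ^ 2 * ((∑ b ∈ B, chi φ b) ^ 2 * (∑ x ∈ X, chi φ x) ^ (2 * k)) ≤
      ((B.card : ℝ) ^ 2 * ((X.card : ℝ) ^ k) ^ 2) * ∑ φ, fc A φ ^ 2 * fc X φ ^ (2 * k) := by
    rw [mul_sum]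
    refine sum_le_sum fun φ _ => ?_
    have h1 : (∑ b ∈ B, chi φ b) ^ 2 ≤ (B.card : ℝ) ^ 2 := by
      rw [sq_le_sq, Nat.abs_cast]
      refine (abs_sum_le_sum_abs _ _).trans ?_
      simp [chi_abs]
    have h2 : (∑ x ∈ X, chi φ x) ^ (2 * k) = ((X.card : ℝ) ^ k) ^ 2 * fc X φ ^ (2 * k) := by
      rw [fc, div_pow, ← pow_mul, mul_comm k 2]; field_simp
    have h3 : 0 ≤ fc X φ ^ (2 * k) := by rw [pow_mul]; positivity
    rw [h2]
    calc _ ≤ fc A φ ^ 2 * ((B.card : ℝ) ^ 2 * (((X.card : ℝ) ^ k) ^ 2 * fc X φ ^ (2 * k))) := by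
          gcongr
      _ = _ := by ring
  have := hlow.trans hfin
  have hpos : 0 < (B.card : ℝ) ^ 2 * ((X.card : ℝ) ^ k) ^ 2 := by positivity
  rw [mul_assoc, mul_comm (21/16 : ℝ)] at this
  exact le_of_mul_le_mul_left this hpos

end Periodicity

section Chang

variable {V : Type*} [AddCommGroup V] [Module (ZMod 2) V] [Fintype V] [DecidableEq V]

lemma riesz (b : Finset (Module.Dual (ZMod 2) V))
    (hb : LinearIndepOn (ZMod 2) id (b : Set (Module.Dual (ZMod 2) V)))
    (c : ℝ) (e : Module.Dual (ZMod 2) V → ℝ) :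
    ∑ x : V, ∏ φ ∈ b, (e φ * chi φ x + c) = Fintype.card V * c ^ b.card := by
  classical
  simp only [prod_add]
  rw [sum_comm]
  have h : ∀ t ∈ b.powerset, ∑ x : V, (∏ φ ∈ t, (e φ * chi φ x)) * ∏ φ ∈ b \ t, c =
      if t = ∅ then Fintype.card V * c ^ b.card else 0 := by
    intro t ht
    split_ifs with h0
    · subst h0; simp
    · have hsum : ∑ φ ∈ t, φ ≠ 0 := by
        intro hz
        obtain ⟨φ, hφ⟩ := nonempty_iff_ne_empty.2 h0
        have h1 := linearIndepOn_finset_iff.1 hb (fun φ => if φ ∈ t then 1 else 0) (by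
          simp only [id, ite_smul, one_smul, zero_smul]
          rw [← sum_filter, filter_mem_eq_inter, inter_eq_right.2 (mem_powerset.1 ht), hz])
          φ (mem_powerset.1 ht hφ)
        simp [hφ] at h1
      simp only [prod_mul_distrib, ← chi_sum_left]
      rw [← sum_mul, ← mul_sum, sum_chi_eq_zero hsum]
      simp
  rw [sum_congr rfl h, sum_ite_eq']
  simp

lemma chang {X : Finset V} (hX : X.Nonempty) :
    (Module.finrank (ZMod 2) (Submodule.span (ZMod 2)
      {φ : Module.Dual (ZMod 2) V | 1/2 ≤ |fc X φ|}) : ℝ) ≤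
      8 * Real.log (Fintype.card V / X.card) := by
  classical
  have hXpos : (0:ℝ) < X.card := by exact_mod_cast hX.card_pos
  have hNpos : (0:ℝ) < Fintype.card V := by exact_mod_cast Fintype.card_pos
  obtain ⟨b', hb's, hspan, hli⟩ := exists_linearIndependent (ZMod 2)
    {φ : Module.Dual (ZMod 2) V | 1/2 ≤ |fc X φ|}
  set b : Finset (Module.Dual (ZMod 2) V) := b'.toFinset with hb
  have hbb : (b : Set _) = b' := by simp [hb]
  have hli' : LinearIndepOn (ZMod 2) id (b : Set (Module.Dual (ZMod 2) V)) := by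
    rw [hbb]; exact hli
  have hrank : Module.finrank (ZMod 2) (Submodule.span (ZMod 2)
      {φ : Module.Dual (ZMod 2) V | 1/2 ≤ |fc X φ|}) = b.card := by
    rw [← hspan, ← hbb]
    exact finrank_span_finset_eq_card hli'
  rw [hrank]
  set d : ℝ := (b.card : ℝ) with hd
  let ε : Module.Dual (ZMod 2) V → ℝ := fun φ => if 0 ≤ fc X φ then 1 else -1
  have hε : ∀ φ, |ε φ| ≤ 1 := by intro φ; simp only [ε]; split_ifs <;> norm_num
  let u : V → ℝ := fun x => ∑ φ ∈ b, (1/2) * (ε φ * chi φ x)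
  have hu : d / 4 * X.card ≤ ∑ x ∈ X, u x := by
    simp only [u]
    rw [sum_comm]
    have : ∀ φ ∈ b, (1/4 : ℝ) * X.card ≤ ∑ x ∈ X, (1/2) * (ε φ * chi φ x) := by
      intro φ hφ
      have h1 : 1/2 ≤ |fc X φ| := hb's (by rw [← hbb]; exact hφ)
      have h2 : ∑ x ∈ X, (1/2) * (ε φ * chi φ x) = (1/2) * (|fc X φ| * X.card) := by
        rw [← mul_sum, ← mul_sum]
        have : ∑ x ∈ X, chi φ x = fc X φ * X.card := by rw [fc]; field_simp
        have h3 : ε φ * fc X φ = |fc X φ| := by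
          simp only [ε]
          split_ifs with h
          · rw [abs_of_nonneg h, one_mul]
          · rw [abs_of_neg (not_le.1 h)]; ring
        rw [this, ← h3]; ring
      rw [h2]; nlinarith
    calc d / 4 * X.card = ∑ φ ∈ b, (1/4 : ℝ) * X.card := by
          rw [sum_const, nsmul_eq_mul, ← hd]; ring
      _ ≤ _ := sum_le_sum this
  have hlow : X.card * Real.exp (d / 4) ≤ ∑ x ∈ X, Real.exp (u x) := by
    have h1 : ∀ x ∈ X, Real.exp (d/4) * (u x - d/4 + 1) ≤ Real.exp (u x) := by
      intro x _
      have : Real.exp (u x) = Real.exp (d/4) * Real.exp (u x - d/4) := by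
        rw [← Real.exp_add]; congr 1; ring
      rw [this]
      exact mul_le_mul_of_nonneg_left (Real.add_one_le_exp _) (Real.exp_pos _).le
    refine le_trans ?_ (sum_le_sum h1)
    rw [← mul_sum, sum_add_distrib, sum_sub_distrib, sum_const, sum_const, nsmul_eq_mul,
      nsmul_eq_mul, mul_comm]
    refine mul_le_mul_of_nonneg_left ?_ (Real.exp_pos _).le
    linarith
  have hup : ∑ x ∈ X, Real.exp (u x) ≤ Fintype.card V * Real.exp (d / 8) := by
    calc ∑ x ∈ X, Real.exp (u x) ≤ ∑ x : V, Real.exp (u x) :=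
          sum_le_sum_of_subset_of_nonneg (subset_univ _) fun _ _ _ => (Real.exp_pos _).le
      _ ≤ ∑ x : V, ∏ φ ∈ b, (ε φ * Real.sinh (1/2) * chi φ x + Real.cosh (1/2)) := by
          refine sum_le_sum fun x _ => ?_
          simp only [u]
          rw [Real.exp_sum]
          refine prod_le_prod (fun _ _ => (Real.exp_pos _).le) fun φ _ => ?_
          refine (exp_le_cosh ?_).trans (le_of_eq (by ring))
          rw [abs_mul, chi_abs, mul_one]; exact hε φ
      _ = Fintype.card V * Real.cosh (1/2) ^ b.card := riesz b hli' _ _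
      _ ≤ _ := by
          gcongr
          calc Real.cosh (1/2) ^ b.card ≤ Real.exp ((1/2)^2/2) ^ b.card :=
                pow_le_pow_left₀ (Real.cosh_pos _).le (Real.cosh_le_exp_half_sq _) _
            _ = Real.exp (d / 8) := by
                rw [← Real.exp_nat_mul, ← hd]; congr 1; ring
  have h1 := hlow.trans hup
  have h2 : Real.exp (d / 8) ≤ Fintype.card V / X.card := by
    rw [le_div_iff₀ hXpos]
    have : Real.exp (d/4) = Real.exp (d/8) * Real.exp (d/8) := by
      rw [← Real.exp_add]; congr 1; ring
    rw [this] at h1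
    have := Real.exp_pos (d/8)
    refine le_of_mul_le_mul_right ?_ this
    linarith
  have h3 := (Real.le_log_iff_exp_le (by positivity)).2 h2
  linarith

lemma parseval (h : V → ℝ) :
    ∑ φ : Module.Dual (ZMod 2) V, (∑ x, h x * chi φ x) ^ 2 = Fintype.card V * ∑ x, h x ^ 2 := by
  have e : ∀ φ : Module.Dual (ZMod 2) V, (∑ x, h x * chi φ x) ^ 2 =
      ∑ x, ∑ y, h x * h y * chi φ (x + y) := by
    intro φ
    rw [sq, sum_mul_sum]
    refine sum_congr rfl fun x _ => sum_congr rfl fun y _ => ?_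
    rw [chi_add]; ring
  simp only [e]
  rw [sum_comm, mul_sum]
  refine sum_congr rfl fun x _ => ?_
  rw [sum_comm]
  simp only [← mul_sum, sum_chi_left, add_eq_zero_iff2, mul_ite, mul_zero, sum_ite_eq', mem_univ,
    if_true]
  ring

/-- Number of points of `A` in the coset `x + W`. -/
noncomputable def cosetCount (A : Finset V) (W : Submodule (ZMod 2) V) (x : V) : ℕ :=
  by classical exact (univ.filter (fun w : V => w ∈ W ∧ x + w ∈ A)).card

lemma coset_bound {A : Finset V} (hA : A.Nonempty) (W : Submodule (ZMod 2) V)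
    (T : Finset (Module.Dual (ZMod 2) V)) (hT : ∀ φ ∈ T, ∀ w ∈ W, φ w = 0)
    {κ : ℝ} (hκ : ∀ x, (cosetCount A W x : ℝ) ≤ κ * (A.card / Fintype.card V) * Nat.card W) :
    ∑ φ ∈ T, fc A φ ^ 2 ≤ κ := by
  classical
  have hApos : (0:ℝ) < A.card := by exact_mod_cast hA.card_pos
  have hNpos : (0:ℝ) < Fintype.card V := by exact_mod_cast Fintype.card_pos
  have hWpos : (0:ℝ) < Nat.card W := by exact_mod_cast Nat.card_pos
  have hWcard : ((univ.filter (fun w : V => w ∈ W)).card : ℝ) = Nat.card W := by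
    rw [← Fintype.card_subtype, Nat.card_eq_fintype_card]
  set h : V → ℝ := fun x => cosetCount A W x with hh
  have hexp : ∀ f : V → ℝ, ∑ x, h x * f x =
      ∑ w ∈ univ.filter (fun w : V => w ∈ W), ∑ a ∈ A, f (a + w) := by
    intro f
    have e : ∀ x, h x * f x = ∑ w ∈ univ.filter (fun w : V => w ∈ W),
        if x + w ∈ A then f x else 0 := by
      intro x
      simp only [hh, cosetCount]
      rw [← sum_filter, filter_filter, sum_const, nsmul_eq_mul]
    simp only [e]
    rw [sum_comm]
    refine sum_congr rfl fun w _ => ?_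
    rw [← Equiv.sum_comp (Equiv.addRight w)]
    simp only [Equiv.coe_addRight, add_assoc, add_self_zero, add_zero]
    rw [← sum_filter]
    congr 1; ext; simp
  have hF : ∀ φ ∈ T, (∑ x, h x * chi φ x) = Nat.card W * A.card * fc A φ := by
    intro φ hφ
    rw [hexp]
    have : ∀ w ∈ univ.filter (fun w : V => w ∈ W), ∑ a ∈ A, chi φ (a + w) = ∑ a ∈ A, chi φ a := by
      intro w hw
      refine sum_congr rfl fun a _ => ?_
      rw [chi_add]
      have : chi φ w = 1 := by rw [chi, if_pos (hT φ hφ w (mem_filter.1 hw).2)]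
      rw [this, mul_one]
    rw [sum_congr rfl this, sum_const, nsmul_eq_mul, hWcard, fc]
    field_simp
  have hsum : ∑ x, h x = Nat.card W * A.card := by
    have := hexp (fun _ => 1)
    simp only [mul_one, sum_const, nsmul_eq_mul] at this
    rw [this, hWcard]
  have hsq : ∑ x, h x ^ 2 ≤ κ * (A.card / Fintype.card V) * Nat.card W * (Nat.card W * A.card) := by
    rw [← hsum, mul_sum]
    refine sum_le_sum fun x _ => ?_
    rw [sq]
    exact mul_le_mul_of_nonneg_right (hκ x) (by simp [hh])
  have hpar := parseval h
  have hle : ∑ φ ∈ T, (∑ x, h x * chi φ x) ^ 2 ≤ Fintype.card V * ∑ x, h x ^ 2 := by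
    rw [← hpar]
    exact sum_le_sum_of_subset_of_nonneg (subset_univ _) fun _ _ _ => sq_nonneg _
  have hl : ∑ φ ∈ T, (∑ x, h x * chi φ x) ^ 2 =
      (Nat.card W * A.card : ℝ) ^ 2 * ∑ φ ∈ T, fc A φ ^ 2 := by
    rw [mul_sum]
    refine sum_congr rfl fun φ hφ => ?_
    rw [hF φ hφ]; ring
  rw [hl] at hle
  have h2 : (Nat.card W * A.card : ℝ) ^ 2 * ∑ φ ∈ T, fc A φ ^ 2 ≤
      (Nat.card W * A.card : ℝ) ^ 2 * κ := by
    refine hle.trans ((mul_le_mul_of_nonneg_left hsq hNpos.le).trans (le_of_eq ?_))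
    field_simp
  exact le_of_mul_le_mul_left h2 (by positivity)

/-- Density increment from spectral mass. -/
lemma increment_of_mass {A X : Finset V} (hA : A.Nonempty) (hX : X.Nonempty) {k : ℕ}
    (hk : (Fintype.card V : ℝ) / A.card ≤ 4 ^ k / 16)
    (hmass : 21/16 ≤ ∑ φ, fc A φ ^ 2 * fc X φ ^ (2 * k)) :
    ∃ W : Submodule (ZMod 2) V,
      (Module.finrank (ZMod 2) V : ℝ) ≤
        Module.finrank (ZMod 2) W + 8 * Real.log (Fintype.card V / X.card) ∧
      ∃ x, 6/5 * ((A.card : ℝ) / Fintype.card V) * Nat.card W ≤ cosetCount A W x := by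
  classical
  have hXpos : (0:ℝ) < X.card := by exact_mod_cast hX.card_pos
  set S : Set (Module.Dual (ZMod 2) V) := {φ | 1/2 ≤ |fc X φ|} with hS
  set U := Submodule.span (ZMod 2) S with hU
  refine ⟨U.dualCoannihilator, ?_, ?_⟩
  · have h1 := Subspace.finrank_add_finrank_dualCoannihilator_eq U
    have h2 := chang hX
    rw [← hS, ← hU] at h2
    rw [← h1]; push_cast; linarith
  · by_contra! hc
    have hb := coset_bound hA U.dualCoannihilator (univ.filter (fun φ => φ ∈ S)) (by
      intro φ hφ w hw
      exact (Submodule.mem_dualCoannihilator w).1 hw φ (Submodule.subset_span (mem_filter.1 hφ).2))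
      (κ := 6/5) (fun x => (hc x).le)
    have hsplit : ∀ φ : Module.Dual (ZMod 2) V, fc A φ ^ 2 * fc X φ ^ (2 * k) ≤
        (if φ ∈ S then fc A φ ^ 2 else 0) + (1/4) ^ k * fc A φ ^ 2 := by
      intro φ
      have h0 := sq_nonneg (fc A φ)
      have h1 : (0:ℝ) < (1/4)^k := by positivity
      have habs : |fc X φ| ≤ 1 := by
        rw [fc, abs_div, Nat.abs_cast, div_le_one hXpos]
        refine (abs_sum_le_sum_abs _ _).trans ?_
        simp [chi_abs]
      rw [pow_mul, ← sq_abs (fc X φ)]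
      split_ifs with h
      · have : (|fc X φ| ^ 2) ^ k ≤ 1 :=
          pow_le_one₀ (by positivity) (pow_le_one₀ (abs_nonneg _) habs)
        nlinarith
      · have h2 : |fc X φ| < 1/2 := not_le.1 h
        have h3 : |fc X φ| ^ 2 ≤ 1/4 := by
          have := pow_le_pow_left₀ (abs_nonneg _) h2.le 2
          norm_num at this ⊢; linarith
        have : (|fc X φ| ^ 2) ^ k ≤ (1/4)^k := pow_le_pow_left₀ (by positivity) h3 _
        nlinarith
    have h1 := hmass.trans (sum_le_sum fun φ _ => hsplit φ)
    rw [sum_add_distrib, ← mul_sum, ← sum_filter, sum_fc_sq hA] at h1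
    have h2 : (1/4 : ℝ)^k * ((Fintype.card V : ℝ) / A.card) ≤ 1/16 := by
      calc (1/4 : ℝ)^k * ((Fintype.card V : ℝ) / A.card) ≤ (1/4 : ℝ)^k * (4 ^ k / 16) := by gcongr
        _ = 1/16 := by
          rw [← mul_div_assoc, ← mul_pow]; norm_num
    linarith

end Chang

section Step

variable {V : Type*} [AddCommGroup V] [Module (ZMod 2) V] [Fintype V] [DecidableEq V]

lemma increment_step {t : ℕ} (ht : 1 ≤ t) {A C : Finset V}
    (hA : (Fintype.card V : ℝ) ≤ 2 ^ t * A.card) (hC : (Fintype.card V : ℝ) ≤ 2 ^ t * C.card)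
    (hAC : ∀ a ∈ A, ∀ x ∈ C, a + x ∉ A) :
    ∃ W : Submodule (ZMod 2) V,
      (Module.finrank (ZMod 2) V : ℝ) ≤ Module.finrank (ZMod 2) W + 16 * 10 ^ 9 * (t:ℝ) ^ 6 ∧
      ∃ x, 6/5 * ((A.card : ℝ) / Fintype.card V) * Nat.card W ≤ cosetCount A W x := by
  have hNpos : (0:ℝ) < Fintype.card V := by exact_mod_cast Fintype.card_pos
  set N : ℝ := (Fintype.card V : ℝ) with hN
  have ht' : (1:ℝ) ≤ t := by exact_mod_cast ht
  have hApos : (0:ℝ) < A.card := by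
    by_contra! hc
    have : (A.card : ℝ) = 0 := le_antisymm hc (by positivity)
    rw [this, mul_zero] at hA; linarith
  have hAne : A.Nonempty := by rw [← card_pos]; exact_mod_cast hApos
  have hcv : ∀ x ∈ C, cv A x = 0 := by
    intro x hx
    have : rep A x = 0 := by
      rw [rep, card_eq_zero, filter_eq_empty_iff]
      intro a ha; exact hAC a ha x hx
    rw [cv_eq, this]; simp
  have hone : (1:ℝ) ≤ 32 ^ (t-1) := one_le_pow₀ (by norm_num)
  have h32 : (32:ℝ) ≤ 32 ^ t := le_self_pow₀ (by norm_num) (by omega)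
  have h16 : (16:ℝ) ≤ 16 ^ t := le_self_pow₀ (by norm_num) (by omega)
  obtain ⟨B, hB1, hB2⟩ := sift_exists (p := 18 * t) (γ := (1/2) ^ t) hAne hcv
    (Even.mul_right (by decide) t) (by
      rw [← hN, div_pow, one_pow, div_mul_eq_mul_div, one_mul, div_le_iff₀ (by positivity)]
      linarith) (by
      rw [pow_mul, pow_mul, ← mul_pow]
      calc 32 * ((3/2:ℝ)^18)^t ≤ 32 ^ t * ((3/2:ℝ)^18)^t := by gcongr
        _ = (32 * (3/2:ℝ)^18)^t := by rw [mul_pow]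
        _ ≤ _ := pow_le_pow_left₀ (by positivity) (by norm_num) _)
  rw [← hN] at hB1
  -- lower bound on the density of `B`
  have hαlow : (1/2:ℝ) ^ t ≤ A.card / N := by
    rw [div_pow, one_pow, div_le_div_iff₀ (by positivity) hNpos]; linarith
  have hexp1 : Real.exp (-1) ≤ 1/2 := by
    rw [Real.exp_neg, one_div]
    apply inv_anti₀ (by norm_num)
    have := Real.add_one_le_exp (1:ℝ); linarith
  have hβ : Real.exp (-(18 * (t:ℝ)^2)) ≤ B.card / N := by
    have h1 : (A.card / N) ^ (18 * t) ≤ B.card / N := by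
      rw [le_div_iff₀ hNpos]; exact hB1
    refine le_trans ?_ h1
    calc Real.exp (-(18 * (t:ℝ)^2)) = (Real.exp (-1) ^ t) ^ (18 * t) := by
          rw [← pow_mul, ← Real.exp_nat_mul]; push_cast; congr 1; ring
      _ ≤ ((1/2:ℝ) ^ t) ^ (18 * t) := by gcongr
      _ ≤ _ := by gcongr
  have hBpos : (0:ℝ) < B.card := by
    have := (Real.exp_pos _).trans_le hβ
    by_contra! hc
    have h0 : (B.card : ℝ) = 0 := le_antisymm hc (by positivity)
    rw [h0, zero_div] at this; linarith
  have hBne : B.Nonempty := by rw [← card_pos]; exact_mod_cast hBpos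
  obtain ⟨X, hXne, hX1, hX2⟩ := spectral_mass (A := A) (k := 3 * t) (M := 10 ^ 8 * t ^ 4) hBne hB2
    (by omega) (by positivity) (by
      rw [← hN]
      push_cast
      have e1 : (100000000 * (t:ℝ) ^ 4) * (1 / (64 * (3 * t))) ^ 2 / 2 = (10^8 / 73728) * (t:ℝ)^2 := by
        field_simp; norm_num
      rw [e1]
      have e2 : Real.exp (-((10^8 / 73728) * (t:ℝ)^2)) ≤
          Real.exp (-(768 * t)) * Real.exp (-(18 * (t:ℝ)^2)) := by
        rw [← Real.exp_add, Real.exp_le_exp]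
        nlinarith
      have e3 : Real.exp (-(768 * (t:ℝ))) ≤ 1 / (768 * t) := by
        rw [Real.exp_neg, one_div]
        apply inv_anti₀ (by positivity)
        have := Real.add_one_le_exp (768 * (t:ℝ)); linarith
      have e4 : Real.exp (-((10^8 / 73728) * (t:ℝ)^2)) ≤ 1 / (768 * t) * (B.card / N) :=
        e2.trans (mul_le_mul e3 hβ (Real.exp_pos _).le (by positivity))
      calc 2 * Real.exp (-((10^8 / 73728) * (t:ℝ)^2)) * N
          ≤ 2 * (1 / (768 * t) * (B.card / N)) * N := by gcongr
        _ = (B.card : ℝ) / (64 * (3 * t)) / 2 := by field_simp; norm_num)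
  rw [← hN] at hX1
  have hXpos : (0:ℝ) < X.card := by exact_mod_cast hXne.card_pos
  obtain ⟨W, hW1, hW2⟩ := increment_of_mass hAne hXne (k := 3 * t) (by
    rw [← hN, div_le_div_iff₀ hApos (by norm_num), pow_mul]
    calc N * 16 ≤ (2 ^ t * A.card) * 16 ^ t := by gcongr
      _ = (2 * 16) ^ t * A.card := by rw [mul_pow]; ring
      _ ≤ _ := by gcongr; norm_num) hX2
  refine ⟨W, hW1.trans ?_, hW2⟩
  rw [← hN]
  have hlog : Real.log (N / X.card) ≤ 1 + (10 ^ 8 * t ^ 4) * (18 * (t:ℝ)^2) := by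
    rw [Real.log_le_iff_le_exp (by positivity), div_le_iff₀ hXpos]
    have h1 : Real.exp (-((10 ^ 8 * t ^ 4) * (18 * (t:ℝ)^2))) ≤
        (B.card / N) ^ (10 ^ 8 * t ^ 4) := by
      calc _ = Real.exp (-(18 * (t:ℝ)^2)) ^ (10 ^ 8 * t ^ 4) := by
            rw [← Real.exp_nat_mul]; push_cast; congr 1; ring
        _ ≤ _ := by gcongr
    have h2 : (1/2) * Real.exp (-((10 ^ 8 * t ^ 4) * (18 * (t:ℝ)^2))) * N ≤ X.card := by
      refine le_trans ?_ hX1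
      gcongr
    set q := (10 ^ 8 * (t:ℝ) ^ 4) * (18 * (t:ℝ)^2) with hq
    have h3 : Real.exp q * Real.exp (-q) = 1 := by rw [← Real.exp_add]; simp
    have h4 : (2:ℝ) ≤ Real.exp 1 := by have := Real.add_one_le_exp (1:ℝ); linarith
    rw [Real.exp_add]
    calc N = 2 * Real.exp q * ((1/2) * Real.exp (-q) * N) := by
          linear_combination (-N) * h3
      _ ≤ Real.exp 1 * Real.exp q * X.card := by gcongr
  have h6 : (1:ℝ) ≤ (t:ℝ)^6 := one_le_pow₀ ht'
  nlinarith

end Step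

section Greedy

variable {V : Type*} [AddCommGroup V] [Module (ZMod 2) V] [Fintype V] [DecidableEq V]

lemma card_two_pow (W : Submodule (ZMod 2) V) :
    Nat.card W = 2 ^ Module.finrank (ZMod 2) W := by
  have := Module.natCard_eq_pow_finrank (K := ZMod 2) (V := W)
  rwa [Nat.card_zmod] at this

lemma smul_cases (a : ZMod 2) (v : V) : a • v = 0 ∨ a • v = v := by
  have : ∀ a : ZMod 2, a = 0 ∨ a = 1 := by decide
  rcases this a with h | h <;> simp [h]

lemma greedy (R : Finset V) (h0 : (0 : V) ∉ R) (t : ℕ)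
    (h : (R.card + 1) * 2 ^ (t - 1) < Fintype.card V) (i : ℕ) (hi : i ≤ t) :
    ∃ U : Submodule (ZMod 2) V, Module.finrank (ZMod 2) U = i ∧ ∀ v ∈ U, v ∉ R := by
  classical
  induction i with
  | zero =>
    refine ⟨⊥, by simp, ?_⟩
    intro v hv
    rw [Submodule.mem_bot] at hv
    rwa [hv]
  | succ i ih =>
    obtain ⟨U, hU1, hU2⟩ := ih (by omega)
    set F : Finset V := univ.filter (fun v : V => v ∈ U) with hF
    have hFcard : F.card = 2 ^ i := by
      rw [hF, ← Fintype.card_subtype, ← Nat.card_eq_fintype_card, ← hU1]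
      exact card_two_pow U
    set G : Finset V := F ∪ (R ×ˢ F).image (fun p => p.1 + p.2) with hG
    have hGcard : G.card < Fintype.card V := by
      calc G.card ≤ F.card + (R ×ˢ F).card :=
            (card_union_le _ _).trans (Nat.add_le_add_left card_image_le _)
        _ = (R.card + 1) * 2 ^ i := by rw [card_product, hFcard]; ring
        _ ≤ (R.card + 1) * 2 ^ (t - 1) :=
            Nat.mul_le_mul_left _ (Nat.pow_le_pow_right (by norm_num) (by omega))
        _ < _ := h
    obtain ⟨v, hv⟩ : ∃ v, v ∉ G := by
      by_contra! hc
      have : G = univ := eq_univ_of_forall hc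
      rw [this, card_univ] at hGcard
      exact lt_irrefl _ hGcard
    rw [hG, mem_union, not_or] at hv
    have hvU : v ∉ U := fun hh => hv.1 (by simp [hF, hh])
    refine ⟨U ⊔ Submodule.span (ZMod 2) {v}, ?_, ?_⟩
    · rw [Submodule.finrank_sup_span_singleton hvU, hU1]
    · intro w hw hwR
      obtain ⟨u, hu, y, hy, rfl⟩ := Submodule.mem_sup.1 hw
      obtain ⟨a, rfl⟩ := Submodule.mem_span_singleton.1 hy
      rcases smul_cases a v with h1 | h1
      · rw [h1, add_zero] at hwR
        exact hU2 u hu hwR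
      · rw [h1] at hwR
        apply hv.2
        rw [mem_image]
        refine ⟨(u + v, u), mem_product.2 ⟨hwR, by simp [hF, hu]⟩, ?_⟩
        have : u + v + u = u + (u + v) := by abel
        rw [this, add_add_cancel']

lemma hereditary {t : ℕ} (ht : 1 ≤ t) (R : Finset V) (h0 : (0 : V) ∉ R)
    (hno : ¬ ∃ U : Submodule (ZMod 2) V, Module.finrank (ZMod 2) U = t ∧ ∀ v ∈ U, v ∉ R)
    (W : Submodule (ZMod 2) V) [Fintype W] (hW : t ≤ Module.finrank (ZMod 2) W) :
    (Fintype.card W : ℝ) ≤ 2 ^ t * ((univ.filter (fun w : W => (w : V) ∈ R)).card : ℝ) := by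
  classical
  set R' := univ.filter (fun w : W => (w : V) ∈ R) with hR'
  have hle : Fintype.card W ≤ (R'.card + 1) * 2 ^ (t - 1) := by
    by_contra! hc
    obtain ⟨U, hU1, hU2⟩ := greedy R' (by simp [hR', h0]) t hc t le_rfl
    refine hno ⟨U.map W.subtype, ?_, ?_⟩
    · rw [Submodule.finrank_map_subtype_eq, hU1]
    · rintro v ⟨w, hw, rfl⟩ hv
      exact hU2 w hw (by simpa [hR'] using hv)
  have hcard : Fintype.card W = 2 ^ Module.finrank (ZMod 2) W := by
    rw [← card_two_pow, Nat.card_eq_fintype_card]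
  have h2t : 2 ^ t = 2 * 2 ^ (t - 1) := by
    rw [← pow_succ']; congr 1; omega
  have hpos : 0 < R'.card := by
    by_contra! hc
    have : R'.card = 0 := by omega
    rw [this, hcard] at hle
    have h1 : 2 ^ t ≤ 2 ^ Module.finrank (ZMod 2) W := Nat.pow_le_pow_right (by norm_num) hW
    have h2 : 0 < 2 ^ (t - 1) := by positivity
    omega
  have : Fintype.card W ≤ 2 ^ t * R'.card := by
    rw [h2t]
    calc _ ≤ _ := hle
      _ ≤ (2 * R'.card) * 2 ^ (t - 1) := Nat.mul_le_mul_right _ (by omega)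
      _ = _ := by ring
  exact_mod_cast this

lemma iterate_increment {t : ℕ} (ht : 1 ≤ t) (R : Finset V) (h0 : (0 : V) ∉ R)
    (hno : ¬ ∃ U : Submodule (ZMod 2) V, Module.finrank (ZMod 2) U = t ∧ ∀ v ∈ U, v ∉ R)
    (hsf : ∀ a ∈ R, ∀ b ∈ R, a + b ∉ R)
    (hn : 10 ^ 12 * (t:ℝ) ^ 7 ≤ Module.finrank (ZMod 2) V) (j : ℕ) (hj : j ≤ 4 * t) :
    ∃ W : Submodule (ZMod 2) V,
      (Module.finrank (ZMod 2) V : ℝ) ≤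
        Module.finrank (ZMod 2) W + j * (16 * 10 ^ 9 * (t:ℝ) ^ 6) ∧
      ∃ x, (6/5) ^ j * (1/2) ^ t * (Nat.card W : ℝ) ≤ cosetCount R W x := by
  classical
  have ht' : (1:ℝ) ≤ t := by exact_mod_cast ht
  have hlarge : ∀ W : Submodule (ZMod 2) V, (Module.finrank (ZMod 2) V : ℝ) ≤
        Module.finrank (ZMod 2) W + (4 * t) * (16 * 10 ^ 9 * (t:ℝ) ^ 6) →
        t ≤ Module.finrank (ZMod 2) W := by
    intro W hW
    have h1 : (t:ℝ) ≤ (t:ℝ)^7 := le_self_pow₀ ht' (by norm_num)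
    have : (t:ℝ) ≤ Module.finrank (ZMod 2) W := by
      have e : (4 * t) * (16 * 10 ^ 9 * (t:ℝ) ^ 6) = 64 * 10 ^ 9 * (t:ℝ)^7 := by ring
      rw [e] at hW
      have h3 : 0 ≤ (t:ℝ)^7 := by positivity
      linarith
    exact_mod_cast this
  induction j with
  | zero =>
    refine ⟨⊤, by simp, 0, ?_⟩
    have htop := hlarge ⊤ (by rw [finrank_top]; have : 0 ≤ (4 * t) * (16 * 10 ^ 9 * (t:ℝ) ^ 6) := by positivity
                              linarith)
    have h1 := hereditary ht R h0 hno ⊤ htop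
    have e1 : ((univ.filter (fun w : (⊤ : Submodule (ZMod 2) V) => (w : V) ∈ R)).card) =
        cosetCount R ⊤ 0 := by
      unfold cosetCount
      apply card_bij (fun (w : (⊤ : Submodule (ZMod 2) V)) _ => (w : V))
      · intro w hw; simpa using hw
      · intro a _ b _ h; exact Subtype.ext h
      · intro w hw
        refine ⟨⟨w, Submodule.mem_top⟩, ?_, rfl⟩
        simpa using hw
    rw [e1, ← Nat.card_eq_fintype_card] at h1
    rw [pow_zero, one_mul, div_pow, one_pow, div_mul_eq_mul_div, one_mul,
      div_le_iff₀ (by positivity)]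
    linarith
  | succ j ih =>
    obtain ⟨W, hW1, x, hx⟩ := ih (by omega)
    have hjt : (j:ℝ) ≤ 4 * t := by exact_mod_cast (by omega : j ≤ 4 * t)
    have hWt := hlarge W (hW1.trans (by gcongr))
    set A : Finset W := univ.filter (fun w : W => x + (w : V) ∈ R) with hA
    set C : Finset W := univ.filter (fun w : W => (w : V) ∈ R) with hC
    have hAcard : A.card = cosetCount R W x := by
      unfold cosetCount
      apply card_bij (fun (w : W) _ => (w : V))
      · intro w hw; simpa [hA] using hw
      · intro a _ b _ h; exact Subtype.ext h
      · intro w hw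
        simp only [mem_filter, mem_univ, true_and] at hw
        exact ⟨⟨w, hw.1⟩, by simpa [hA] using hw.2, rfl⟩
    rw [← hAcard, Nat.card_eq_fintype_card] at hx
    have hWpos : (0:ℝ) < Fintype.card W := by exact_mod_cast Fintype.card_pos
    have hCd := hereditary ht R h0 hno W hWt
    have hAd : (Fintype.card W : ℝ) ≤ 2 ^ t * A.card := by
      have h1 : (1:ℝ) ≤ (6/5)^j := one_le_pow₀ (by norm_num)
      have h2 : (1/2:ℝ)^t * Fintype.card W ≤ A.card := by
        refine le_trans ?_ hx
        have : 0 < (1/2:ℝ)^t * Fintype.card W := by positivity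
        nlinarith
      rw [div_pow, one_pow, div_mul_eq_mul_div, one_mul, div_le_iff₀ (by positivity)] at h2
      linarith
    obtain ⟨W', hW'1, y, hy⟩ := increment_step ht hAd hCd (by
      intro a ha c hc hac
      simp only [hA, hC, mem_filter, mem_univ, true_and] at ha hc hac
      refine hsf _ ha _ hac ?_
      have : x + (a : V) + (x + ((a + c : W) : V)) = c := by
        have e : x + (a : V) + (x + ((a + c : W) : V)) = (x + x) + ((a:V) + ((a:V) + c)) := by
          push_cast; abel
        rw [e, add_self_zero, zero_add, add_add_cancel']
      rw [this]; exact hc)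
    refine ⟨W'.map W.subtype, ?_, x + y, ?_⟩
    · rw [Submodule.finrank_map_subtype_eq]
      push_cast
      linarith
    · have hcardW : Nat.card (W'.map W.subtype) = Nat.card W' := by
        rw [card_two_pow, card_two_pow, Submodule.finrank_map_subtype_eq]
      have hcc : cosetCount A W' y = cosetCount R (W'.map W.subtype) (x + y) := by
        unfold cosetCount
        apply card_bij (fun (w : W) _ => (w : V))
        · intro w hw
          simp only [mem_filter, mem_univ, true_and, hA] at hw ⊢
          refine ⟨⟨w, hw.1, rfl⟩, ?_⟩
          have := hw.2
          push_cast at this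
          rwa [add_assoc]
        · intro a _ b _ h; exact Subtype.ext h
        · intro w hw
          simp only [mem_filter, mem_univ, true_and] at hw
          obtain ⟨⟨w', hw', rfl⟩, h2⟩ := hw
          refine ⟨w', ?_, rfl⟩
          simp only [mem_filter, mem_univ, true_and, hA]
          refine ⟨hw', ?_⟩
          push_cast
          rw [← add_assoc]; exact h2
      rw [hcardW, ← hcc]
      refine le_trans ?_ hy
      have h3 : (6/5:ℝ)^j * (1/2)^t ≤ A.card / Fintype.card W := by
        rw [le_div_iff₀ hWpos]; exact hx
      calc (6/5:ℝ)^(j+1) * (1/2)^t * Nat.card W' = 6/5 * ((6/5)^j * (1/2)^t) * Nat.card W' := by ring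
        _ ≤ _ := by gcongr

lemma main_contra {t : ℕ} (ht : 1 ≤ t) (R : Finset V) (h0 : (0 : V) ∉ R)
    (hsf : ∀ a ∈ R, ∀ b ∈ R, a + b ∉ R)
    (hn : 10 ^ 12 * (t:ℝ) ^ 7 ≤ Module.finrank (ZMod 2) V) :
    ∃ U : Submodule (ZMod 2) V, Module.finrank (ZMod 2) U = t ∧ ∀ v ∈ U, v ∉ R := by
  classical
  by_contra hno
  obtain ⟨W, -, x, hx⟩ := iterate_increment ht R h0 hno hsf hn (4 * t) le_rfl
  have h1 : cosetCount R W x ≤ Nat.card W := by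
    unfold cosetCount
    rw [Nat.card_eq_fintype_card, Fintype.card_subtype]
    apply card_le_card
    intro w hw
    simp only [mem_filter, mem_univ, true_and] at hw ⊢
    exact hw.1
  have hWpos : (0:ℝ) < Nat.card W := by exact_mod_cast Nat.card_pos
  have h2 : (6/5:ℝ)^(4*t) * (1/2)^t * Nat.card W ≤ Nat.card W := hx.trans (by exact_mod_cast h1)
  have h3 : (1:ℝ) < (6/5:ℝ)^(4*t) * (1/2)^t := by
    rw [pow_mul, ← mul_pow]
    exact one_lt_pow₀ (by norm_num) (by omega)
  nlinarith

end Greedy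

end RamseyF2

/-- There is a constant `C > 0` such that whenever `n ≥ C t⁷` and the nonzero vectors
of `𝔽₂ⁿ` are coloured Red (`true`) and Blue (`false`), there is either a 2-dimensional
subspace all of whose nonzero vectors are Red, or a `t`-dimensional subspace all of
whose nonzero vectors are Blue. -/
theorem stmt1 :
    ∃ C : ℝ, 0 < C ∧ ∀ (t n : ℕ), C * (t : ℝ) ^ 7 ≤ (n : ℝ) →
      ∀ c : (Fin n → ZMod 2) → Bool,
        ∃ W : Submodule (ZMod 2) (Fin n → ZMod 2),
          (Module.finrank (ZMod 2) W = 2 ∧ ∀ v ∈ W, v ≠ 0 → c v = true) ∨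
          (Module.finrank (ZMod 2) W = t ∧ ∀ v ∈ W, v ≠ 0 → c v = false) := by
  classical
  refine ⟨10 ^ 12, by norm_num, ?_⟩
  intro t n hn c
  rcases Nat.eq_zero_or_pos t with rfl | ht
  · refine ⟨⊥, Or.inr ⟨by simp, ?_⟩⟩
    intro v hv h
    exact absurd ((Submodule.mem_bot _).1 hv) h
  set R : Finset (Fin n → ZMod 2) := Finset.univ.filter (fun v => v ≠ 0 ∧ c v = true) with hR
  have hmem : ∀ v, v ∈ R ↔ v ≠ 0 ∧ c v = true := by intro v; simp [hR]
  by_cases hsf : ∀ a ∈ R, ∀ b ∈ R, a + b ∉ R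
  · obtain ⟨U, hU1, hU2⟩ := RamseyF2.main_contra ht R (by simp [hmem]) hsf
      (by rw [Module.finrank_fin_fun]; exact hn)
    refine ⟨U, Or.inr ⟨hU1, ?_⟩⟩
    intro v hv hv0
    by_contra hc
    exact hU2 v hv ((hmem v).2 ⟨hv0, by simpa using hc⟩)
  · push Not at hsf
    obtain ⟨a, ha, b, hb, hab⟩ := hsf
    rw [hmem] at ha hb hab
    have hbn : b ∉ Submodule.span (ZMod 2) {a} := by
      intro hh
      obtain ⟨r, hr⟩ := Submodule.mem_span_singleton.1 hh
      rcases RamseyF2.smul_cases r a with h | h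
      · exact hb.1 (hr.symm.trans h)
      · have : b = a := hr.symm.trans h
        apply hab.1
        rw [this]; exact RamseyF2.add_self_zero a
    refine ⟨Submodule.span (ZMod 2) {a} ⊔ Submodule.span (ZMod 2) {b}, Or.inl ⟨?_, ?_⟩⟩
    · rw [Submodule.finrank_sup_span_singleton hbn, finrank_span_singleton ha.1]
    · intro v hv hv0
      obtain ⟨u, hu, w, hw, rfl⟩ := Submodule.mem_sup.1 hv
      obtain ⟨r, rfl⟩ := Submodule.mem_span_singleton.1 hu
      obtain ⟨s, rfl⟩ := Submodule.mem_span_singleton.1 hw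
      rcases RamseyF2.smul_cases r a with h | h <;> rcases RamseyF2.smul_cases s b with h' | h' <;>
        rw [h, h'] at hv0 ⊢
      · simp at hv0
      · rw [zero_add]; exact hb.2
      · rw [add_zero]; exact ha.2
      · exact hab.2
end

section
/- Let n ≥ 2 and let c : 𝔽₂ⁿ ∖ {0} → {1, 2, 3} be a colouring with no rainbow triangle, i.e., there are no distinct nonzero vectors x, y ∈ 𝔽₂ⁿ such that c(x), c(y) and c(x + y) are pairwise distinct. Then there is a linear subspace W of 𝔽₂ⁿ with dim W ≥ n/3 such that at most two colours appear among the vectors of W ∖ {0}. -/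
/-- One step inside `X` along an edge of colour `i`. -/
def GStep {α : Type} (c : α → α → Fin 3) (i : Fin 3) (X : Finset α) (a b : α) : Prop :=
  a ∈ X ∧ b ∈ X ∧ c a b = i

theorem gstep_symm {α : Type} {c : α → α → Fin 3} (hs : ∀ a b, c a b = c b a)
    {i : Fin 3} {X : Finset α} {a b : α}
    (h : Relation.ReflTransGen (GStep c i X) a b) : Relation.ReflTransGen (GStep c i X) b a := by
  induction h with
  | refl => exact .refl
  | tail _ hbc ih =>
    exact Relation.ReflTransGen.head ⟨hbc.2.1, hbc.1, by rw [hs]; exact hbc.2.2⟩ ih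

/-- Gallai: in a rainbow-triangle-free 3-edge-coloured complete graph, some colour is
disconnected. -/
theorem gallai {α : Type} [DecidableEq α] (c : α → α → Fin 3) (hs : ∀ a b, c a b = c b a)
    (hr : ∀ x y z, x ≠ y → y ≠ z → x ≠ z → c x y = c y z ∨ c x y = c x z ∨ c y z = c x z)
    (X : Finset α) : 2 ≤ X.card →
    ∃ i, ∃ x ∈ X, ∃ y ∈ X, ¬ Relation.ReflTransGen (GStep c i X) x y := by
  induction X using Finset.induction_on with
  | empty => simp
  | insert v X hv ih =>
    intro hcard
    by_contra! hcon
    rw [Finset.card_insert_of_notMem hv] at hcard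
    have hne : X.Nonempty := by
      rw [← Finset.card_pos]; omega
    obtain ⟨p0, hp0⟩ := hne
    have hedge : ∀ j, ∃ w ∈ X, c v w = j := by
      intro j
      have h := hcon j v (by simp) p0 (by simp [hp0])
      have key : ∀ z, Relation.ReflTransGen (GStep c j (insert v X)) v z →
          z = v ∨ ∃ w ∈ X, c v w = j := by
        intro z hz
        induction hz with
        | refl => exact .inl rfl
        | @tail b d hvb hbc ih2 =>
          rcases ih2 with rfl | h2
          · rcases Finset.mem_insert.1 hbc.2.1 with h3 | h3
            · exact .inl h3
            · exact .inr ⟨d, h3, hbc.2.2⟩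
          · exact .inr h2
      rcases key p0 h with h1 | h1
      · exact absurd (h1 ▸ hp0) hv
      · exact h1
    by_cases h2 : 2 ≤ X.card
    · obtain ⟨i, p, hp, q, hq, hpq⟩ := ih h2
      have huni : ∀ u x x', u ∈ X → ¬ Relation.ReflTransGen (GStep c i X) x u → x ∈ X →
          Relation.ReflTransGen (GStep c i X) x x' → c u x = c u x' := by
        intro u x x' hu hxu hx hxx
        induction hxx with
        | refl => rfl
        | @tail b d hxb hbd ih3 =>
          rw [ih3]
          have hb : ¬ Relation.ReflTransGen (GStep c i X) b u := fun h => hxu (hxb.trans h)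
          have hd : ¬ Relation.ReflTransGen (GStep c i X) d u :=
            fun h => hxu ((hxb.tail hbd).trans h)
          by_cases hbd' : b = d
          · rw [hbd']
          have h1 : c u b ≠ i := fun h => hb (.single ⟨hbd.1, hu, by rw [hs]; exact h⟩)
          have h2 : c u d ≠ i := fun h => hd (.single ⟨hbd.2.1, hu, by rw [hs]; exact h⟩)
          have hub : u ≠ b := fun h => hb (h ▸ .refl)
          have hud : u ≠ d := fun h => hd (h ▸ .refl)
          have := hr u b d hub hbd' hud
          rw [hbd.2.2] at this
          rcases this with h | h | h
          · exact absurd h h1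
          · exact h
          · exact absurd h.symm h2
      have hto : ∀ x ∈ X, ∃ y ∈ X, Relation.ReflTransGen (GStep c i X) x y ∧ c v y = i := by
        intro x hx
        have key : ∀ z, Relation.ReflTransGen (GStep c i (insert v X)) x z →
            (z ∈ X ∧ Relation.ReflTransGen (GStep c i X) x z) ∨
            ∃ y ∈ X, Relation.ReflTransGen (GStep c i X) x y ∧ c v y = i := by
          intro z hz
          induction hz with
          | refl => exact .inl ⟨hx, .refl⟩
          | @tail b d hvb hbc ih2 =>
            rcases ih2 with h2 | h2
            · rcases Finset.mem_insert.1 hbc.2.1 with h3 | h3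
              · exact .inr ⟨b, h2.1, h2.2, by rw [hs, ← h3]; exact hbc.2.2⟩
              · exact .inl ⟨h3, h2.2.tail ⟨h2.1, h3, hbc.2.2⟩⟩
            · exact .inr h2
        rcases key v (hcon i x (by simp [hx]) v (by simp)) with h | h
        · exact absurd h.1 hv
        · exact h
      -- an edge of colour `j ≠ i` from `v` forces colour `j` to other components
      have hforce : ∀ j, j ≠ i → ∀ w ∈ X, c v w = j → ∀ y ∈ X,
          ¬ Relation.ReflTransGen (GStep c i X) w y → c w y = j := by
        intro j hj w hw hvw y hy hwy
        obtain ⟨y', hy', hyy', hvy'⟩ := hto y hy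
        have hyw : ¬ Relation.ReflTransGen (GStep c i X) y w := fun h => hwy (gstep_symm hs h)
        rw [huni w y y' hw hyw hy hyy']
        have hwy' : ¬ Relation.ReflTransGen (GStep c i X) w y' :=
          fun h => hwy (h.trans (gstep_symm hs hyy'))
        have hne1 : w ≠ y' := fun h => hwy' (h ▸ .refl)
        have hne2 : v ≠ w := fun h => hv (h ▸ hw)
        have hne3 : v ≠ y' := fun h => hv (h ▸ hy')
        have hni : c w y' ≠ i := fun h => hwy' (.single ⟨hw, hy', h⟩)
        rcases hr v w y' hne2 hne1 hne3 with h | h | h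
        · rw [← h, hvw]
        · exact absurd (hvw.symm.trans (h.trans hvy')) hj
        · exact absurd (h.trans hvy') hni
      obtain ⟨j, k, hj, hk, hjk⟩ : ∃ j k : Fin 3, j ≠ i ∧ k ≠ i ∧ j ≠ k := by
        have : ∀ i : Fin 3, ∃ j k : Fin 3, j ≠ i ∧ k ≠ i ∧ j ≠ k := by decide
        exact this i
      obtain ⟨w, hw, hvw⟩ := hedge j
      obtain ⟨w', hw', hvw'⟩ := hedge k
      by_cases hww : Relation.ReflTransGen (GStep c i X) w w'
      · obtain ⟨y, hy, hwy⟩ : ∃ y ∈ X, ¬ Relation.ReflTransGen (GStep c i X) w y := by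
          by_contra! hall
          exact hpq ((gstep_symm hs (hall p hp)).trans (hall q hq))
        have hw'y : ¬ Relation.ReflTransGen (GStep c i X) w' y := fun h => hwy (hww.trans h)
        have e1 := hforce j hj w hw hvw y hy hwy
        have e2 := hforce k hk w' hw' hvw' y hy hw'y
        have e3 := huni y w w' hy hwy hw hww
        rw [hs y w, hs y w', e1, e2] at e3
        exact hjk e3
      · have e1 := hforce j hj w hw hvw w' hw' hww
        have e2 := hforce k hk w' hw' hvw' w hw (fun h => hww (gstep_symm hs h))
        rw [hs, e1] at e2
        exact hjk e2
    · obtain ⟨u, hu⟩ := Finset.card_eq_one.1 (show X.card = 1 by omega)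
      obtain ⟨w, hw, h0⟩ := hedge 0
      obtain ⟨w', hw', h1⟩ := hedge 1
      rw [hu, Finset.mem_singleton] at hw hw'
      subst hw hw'
      rw [h0] at h1
      exact absurd h1 (by decide)

theorem zsmul_cases {V : Type} [AddCommGroup V] [Module (ZMod 2) V] (a : ZMod 2) (x : V) :
    a • x = 0 ∨ a • x = x := by
  have : a = 0 ∨ a = 1 := by revert a; decide
  rcases this with rfl | rfl <;> simp

theorem decomp {V : Type} [AddCommGroup V] [Module (ZMod 2) V] [Finite V]
    (c : V → Fin 3)
    (hr : ∀ x y : V, x ≠ 0 → y ≠ 0 → x ≠ y → c x = c y ∨ c x = c (x + y) ∨ c y = c (x + y))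
    (n : ℕ) : ∀ S : Submodule (ZMod 2) V, Module.finrank (ZMod 2) S = n →
      ∃ W : Fin 3 → Submodule (ZMod 2) V, (∀ i, W i ≤ S) ∧
        (∀ i, ∀ v ∈ W i, v ≠ 0 → c v ≠ i) ∧
        n ≤ ∑ i, Module.finrank (ZMod 2) (W i) := by
  classical
  haveI := Fintype.ofFinite V
  have hself : ∀ x : V, x + x = 0 := by
    intro x
    have : (2 : ZMod 2) • x = 0 := by
      rw [show (2 : ZMod 2) = 0 from rfl, zero_smul]
    rwa [two_smul] at this
  have hsub : ∀ x y : V, x + y = 0 → x = y := fun x y h => by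
    rw [← add_zero x, ← hself y, ← add_assoc, h, zero_add]
  induction n using Nat.strong_induction_on with
  | _ n ih =>
  intro S hS
  rcases Nat.eq_zero_or_pos n with rfl | hn
  · exact ⟨fun _ => ⊥, fun _ => bot_le, fun i v hv h0 => absurd ((Submodule.mem_bot _).1 hv) h0,
      Nat.zero_le _⟩
  have hcard : 2 ≤ (Finset.univ.filter (fun x => x ∈ S)).card := by
    have hSb : S ≠ ⊥ := by
      rintro rfl
      rw [finrank_bot] at hS
      omega
    obtain ⟨x, hx, hx0⟩ := S.ne_bot_iff.1 hSb
    exact Finset.one_lt_card.2 ⟨x, by simp [hx], 0, by simp, hx0⟩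
  obtain ⟨i, x, hx, y, hy, hxy⟩ := gallai (fun a b => c (a + b))
    (fun a b => by rw [add_comm])
    (by
      intro x y z hxy hyz hxz
      have e : (x + y) + (y + z) = x + z := by
        rw [add_assoc, ← add_assoc y y z, hself, zero_add]
      have := hr (x + y) (y + z) (fun h => hxy (hsub _ _ h)) (fun h => hyz (hsub _ _ h))
        (fun h => hxz (by rw [add_comm x y] at h; exact add_left_cancel h))
      rw [e] at this
      exact this) _ hcard
  simp only [Finset.mem_filter, Finset.mem_univ, true_and] at hx hy
  set U : Submodule (ZMod 2) V := Submodule.span (ZMod 2) {s | s ∈ S ∧ c s = i} with hU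
  have hUS : U ≤ S := Submodule.span_le.2 fun s hs => hs.1
  have hpath : ∀ u ∈ U, ∀ x ∈ S, Relation.ReflTransGen
      (GStep (fun a b => c (a + b)) i (Finset.univ.filter (fun x => x ∈ S))) x (x + u) := by
    intro u hu
    induction hu using Submodule.span_induction with
    | mem s hs =>
      intro x hx
      refine .single ⟨by simp [hx], by simpa using S.add_mem hx hs.1, ?_⟩
      simp only
      rw [← add_assoc, hself, zero_add]
      exact hs.2
    | zero => intro x hx; rw [add_zero]
    | add a b ha hb iha ihb =>
      intro x hx
      rw [← add_assoc]
      exact (iha x hx).trans (ihb _ (S.add_mem hx (hUS ha)))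
    | smul r a ha iha =>
      intro x hx
      rcases zsmul_cases r a with h | h <;> rw [h]
      · rw [add_zero]
      · exact iha x hx
  have hUlt : U < S := by
    refine lt_of_le_of_ne hUS fun h => hxy ?_
    have := hpath (x + y) (h ▸ S.add_mem hx hy) x hx
    rwa [← add_assoc, hself, zero_add] at this
  have hconst : ∀ u ∈ U, ∀ x ∈ S, x ∉ U → c (x + u) = c x := by
    intro u hu
    induction hu using Submodule.span_induction with
    | mem s hs =>
      intro x hx hxU
      have hsU : s ∈ U := Submodule.subset_span hs
      by_cases hs0 : s = 0
      · rw [hs0, add_zero]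
      have hni : ∀ t ∈ S, t ∉ U → c t ≠ i := fun t ht htU h =>
        htU (Submodule.subset_span ⟨ht, h⟩)
      rcases hr x s (fun h => hxU (h ▸ U.zero_mem)) hs0 (fun h => hxU (h ▸ hsU)) with h | h | h
      · exact absurd (h.trans hs.2) (hni x hx hxU)
      · exact h.symm
      · exact absurd (h.symm.trans hs.2)
          (hni _ (S.add_mem hx hs.1) (fun h' => hxU ((U.add_mem_iff_left hsU).1 h')))
    | zero => intro x _ _; rw [add_zero]
    | add a b ha hb iha ihb =>
      intro x hx hxU
      rw [← add_assoc, ihb _ (S.add_mem hx (hUS ha)) (fun h' => hxU ((U.add_mem_iff_left ha).1 h')),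
        iha x hx hxU]
    | smul r a ha iha =>
      intro x hx hxU
      rcases zsmul_cases r a with h | h <;> rw [h]
      · rw [add_zero]
      · exact iha x hx hxU
  by_cases hUb : U = ⊥
  · refine ⟨fun j => if j = i then S else ⊥, ?_, ?_, ?_⟩
    · intro j
      by_cases h : j = i <;> simp [h]
    · intro j v hv hv0
      by_cases h : j = i
      · simp only [h, if_true] at hv ⊢
        intro hc
        have : v ∈ U := Submodule.subset_span ⟨hv, hc⟩
        rw [hUb] at this
        exact hv0 ((Submodule.mem_bot _).1 this)
      · simp only [h, if_false] at hv
        exact absurd ((Submodule.mem_bot _).1 hv) hv0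
    · have := Finset.single_le_sum
        (f := fun j => Module.finrank (ZMod 2) ((if j = i then S else ⊥ : Submodule (ZMod 2) V)))
        (fun _ _ => Nat.zero_le _) (Finset.mem_univ i)
      have h2 : Module.finrank (ZMod 2)
          ((if i = i then S else ⊥ : Submodule (ZMod 2) V)) = n := by
        rw [if_pos rfl, hS]
      exact h2 ▸ this
  obtain ⟨K', hK'⟩ := exists_isCompl U
  set K := K' ⊓ S with hK
  have hKS : K ≤ S := inf_le_right
  have hsup : U ⊔ K = S := by
    rw [hK, ← sup_inf_assoc_of_le K' hUS, hK'.sup_eq_top, top_inf_eq]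
  have hinf : Disjoint U K := hK'.disjoint.mono_right inf_le_left
  have hfin : Module.finrank (ZMod 2) U + Module.finrank (ZMod 2) K = n := by
    have := Submodule.finrank_sup_add_finrank_inf_eq U K
    rw [hsup, hinf.eq_bot, finrank_bot, hS] at this
    omega
  have hUpos : Module.finrank (ZMod 2) U ≠ 0 := fun h => hUb (Submodule.finrank_eq_zero.1 h)
  have hUl : Module.finrank (ZMod 2) U < n := hS ▸ Submodule.finrank_lt_finrank_of_lt hUlt
  obtain ⟨W1, hW1, hc1, hn1⟩ := ih _ hUl U rfl
  obtain ⟨W2, hW2, hc2, hn2⟩ := ih _ (by omega) K rfl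
  refine ⟨fun j => W1 j ⊔ W2 j, fun j => sup_le ((hW1 j).trans hUS) ((hW2 j).trans hKS), ?_, ?_⟩
  · intro j v hv hv0
    obtain ⟨a, ha, b, hb, rfl⟩ := Submodule.mem_sup.1 hv
    by_cases hb0 : b = 0
    · subst hb0
      rw [add_zero] at hv0 ⊢
      exact hc1 j a ha hv0
    · have hbU : b ∉ U := fun h => hb0 (Submodule.disjoint_def.1 hinf b h (hW2 j hb))
      rw [add_comm, hconst a (hW1 j ha) b (hKS (hW2 j hb)) hbU]
      exact hc2 j b hb hb0
  · have : ∀ j, Module.finrank (ZMod 2) (W1 j ⊔ W2 j : Submodule (ZMod 2) V) =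
        Module.finrank (ZMod 2) (W1 j) + Module.finrank (ZMod 2) (W2 j) := by
      intro j
      have := Submodule.finrank_sup_add_finrank_inf_eq (W1 j) (W2 j)
      rw [(hinf.mono (hW1 j) (hW2 j)).eq_bot, finrank_bot] at this
      omega
    simp only [this, Finset.sum_add_distrib]
    omega

/-- If `n ≥ 2` and `c` is a 3-colouring of the nonzero vectors of `𝔽₂ⁿ` with no
rainbow triangle, then there is a subspace `W` with `dim W ≥ n / 3` on whose nonzero
vectors at most two colours appear (i.e. some colour is avoided). -/
theorem stmt3 (n : ℕ) (hn : 2 ≤ n) (c : (Fin n → ZMod 2) → Fin 3)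
    (hrainbowfree : ¬ ∃ x y : Fin n → ZMod 2, x ≠ 0 ∧ y ≠ 0 ∧ x ≠ y ∧
      c x ≠ c y ∧ c x ≠ c (x + y) ∧ c y ≠ c (x + y)) :
    ∃ W : Submodule (ZMod 2) (Fin n → ZMod 2),
      (n : ℝ) / 3 ≤ (Module.finrank (ZMod 2) W : ℝ) ∧
      ∃ i : Fin 3, ∀ v ∈ W, v ≠ 0 → c v ≠ i := by
  obtain ⟨W, -, hc, hsum⟩ := decomp c (by
    intro x y hx hy hxy
    by_contra! h
    exact hrainbowfree ⟨x, y, hx, hy, hxy, h.1, h.2.1, h.2.2⟩) n ⊤ (by simp)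
  obtain ⟨i, hi⟩ : ∃ i, n ≤ 3 * Module.finrank (ZMod 2) (W i) := by
    by_contra! h
    rw [Fin.sum_univ_three] at hsum
    have h0 := h 0
    have h1 := h 1
    have h2 := h 2
    omega
  refine ⟨W i, ?_, i, hc i⟩
  have : (n : ℝ) ≤ 3 * (Module.finrank (ZMod 2) (W i) : ℝ) := by exact_mod_cast hi
  linarith
end

section
/- For all sufficiently large n, there exists a colouring c : 𝔽₂ⁿ ∖ {0} → {1, 2, 3} with no rainbow triangle such that every linear subspace W of 𝔽₂ⁿ on whose nonzero vectors at most two colours appear satisfies dim W ≤ n/3 + 6·log₂(n). -/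
/-- A random two-colouring of `𝔽₂ᵐ` has no monochromatic subspace of dimension `d`. -/
theorem exists_no_mono (m d : ℕ) (h : m * d + 2 < 2 ^ d) :
    ∃ f : (Fin m → ZMod 2) → Bool, ∀ (U : Submodule (ZMod 2) (Fin m → ZMod 2)) (b : Bool),
      (∀ u ∈ U, u ≠ 0 → f u = b) → Module.finrank (ZMod 2) U ≤ d := by
  classical
  let V := Fin m → ZMod 2
  let S : (Fin d → V) → Finset V := fun u =>
    (Finset.univ.filter (fun v : V => v ∈ Submodule.span (ZMod 2) (Set.range u))).erase 0
  let B : ((Fin d → V) × Bool) → Finset (V → Bool) := fun p =>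
    if (S p.1).card = 2 ^ d - 1 then
      Fintype.piFinset (fun v => if v ∈ S p.1 then {p.2} else Finset.univ) else ∅
  have hcardV : Fintype.card V = 2 ^ m := by simp [V, ZMod.card]
  have hB : ∀ p, (B p).card * 2 ^ (2 ^ d - 1) ≤ 2 ^ (2 ^ m) := by
    intro p
    by_cases hp : (S p.1).card = 2 ^ d - 1
    · have h1 : (B p).card = 2 ^ (Finset.univ \ S p.1).card := by
        simp only [B, if_pos hp, Fintype.card_piFinset]
        rw [Finset.card_eq_sum_ones, ← Finset.prod_pow_eq_pow_sum,
          ← Finset.prod_sdiff (Finset.subset_univ (S p.1))]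
        rw [Finset.prod_eq_one (s := S p.1)]
        · rw [mul_one]
          apply Finset.prod_congr rfl
          intro x hx
          simp [(Finset.mem_sdiff.mp hx).2]
        · intro x hx
          simp [hx]
      rw [h1, ← hp, ← pow_add, Finset.card_sdiff_add_card_eq_card (Finset.subset_univ _),
        Finset.card_univ, hcardV]
    · simp [B, if_neg hp]
  have hU : (Finset.univ.biUnion B).card < (Finset.univ : Finset (V → Bool)).card := by
    have h1 : (Finset.univ.biUnion B).card * 2 ^ (2 ^ d - 1) ≤ 2 ^ (m * d + 1) * 2 ^ (2 ^ m) := by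
      calc _ ≤ (∑ p, (B p).card) * 2 ^ (2 ^ d - 1) :=
            Nat.mul_le_mul_right _ Finset.card_biUnion_le
        _ = ∑ p, (B p).card * 2 ^ (2 ^ d - 1) := Finset.sum_mul _ _ _
        _ ≤ ∑ p : (Fin d → V) × Bool, 2 ^ (2 ^ m) := Finset.sum_le_sum (fun p _ => hB p)
        _ = _ := by
          simp only [Finset.sum_const, Finset.card_univ, smul_eq_mul, Fintype.card_prod,
            Fintype.card_fun, Fintype.card_fin, hcardV, Fintype.card_bool]
          rw [← pow_mul, ← pow_succ]
    have h2 : (2:ℕ) ^ (m * d + 1) < 2 ^ (2 ^ d - 1) :=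
      Nat.pow_lt_pow_right (by norm_num) (by omega)
    have h3 : (Finset.univ : Finset (V → Bool)).card = 2 ^ (2 ^ m) := by
      rw [Finset.card_univ, Fintype.card_fun, hcardV, Fintype.card_bool]
    rw [h3]
    by_contra hcon
    push Not at hcon
    have h4 := Nat.mul_le_mul_right (2 ^ (2 ^ d - 1)) hcon
    have h5 : (0:ℕ) < 2 ^ (2 ^ m) := by positivity
    nlinarith
  obtain ⟨f, -, hf⟩ := Finset.exists_mem_notMem_of_card_lt_card hU
  refine ⟨f, fun U b hUb => ?_⟩
  by_contra hd
  push Not at hd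
  apply hf
  let e := Module.finBasis (ZMod 2) U
  let u : Fin d → V := fun i => (e (Fin.castLE hd.le i) : V)
  have hli : LinearIndependent (ZMod 2) u := by
    have h1 : LinearIndependent (ZMod 2) (fun i : Fin d => e (Fin.castLE hd.le i)) :=
      e.linearIndependent.comp _ (Fin.castLE_injective hd.le)
    exact h1.map' U.subtype (Submodule.ker_subtype U)
  have hsp : Submodule.span (ZMod 2) (Set.range u) ≤ U := by
    rw [Submodule.span_le]
    rintro _ ⟨i, rfl⟩
    exact (e (Fin.castLE hd.le i)).2
  have hfr := finrank_span_eq_card hli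
  rw [Fintype.card_fin] at hfr
  have hc : (S u).card = 2 ^ d - 1 := by
    have h1 := Module.card_eq_pow_finrank (K := ZMod 2)
      (V := Submodule.span (ZMod 2) (Set.range u))
    rw [hfr, ZMod.card] at h1
    simp only [S]
    rw [Finset.card_erase_of_mem (by simp), ← h1, Fintype.card_subtype]
  rw [Finset.mem_biUnion]
  refine ⟨(u, b), Finset.mem_univ _, ?_⟩
  simp only [B, if_pos hc, Fintype.mem_piFinset]
  intro v
  by_cases hv : v ∈ S u
  · simp only [hv, if_true, Finset.mem_singleton]
    simp only [S, Finset.mem_erase, Finset.mem_filter, Finset.mem_univ, true_and] at hv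
    exact hUb v (hsp hv.2) hv.1
  · simp [hv]

/-- The block of `m` coordinates starting at `k`. -/
def blockMap (n m k : ℕ) : (Fin n → ZMod 2) →ₗ[ZMod 2] (Fin m → ZMod 2) where
  toFun v i := if h : k + i < n then v ⟨k + i, h⟩ else 0
  map_add' x y := by
    ext i
    simp only [Pi.add_apply]
    split_ifs <;> simp
  map_smul' r x := by
    ext i
    simp only [Pi.smul_apply, RingHom.id_apply]
    split_ifs <;> simp

theorem blockMap_inj (n m : ℕ) (h : n ≤ 3 * m) (v : Fin n → ZMod 2)
    (h0 : blockMap n m 0 v = 0) (h1 : blockMap n m m v = 0) (h2 : blockMap n m (2 * m) v = 0) :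
    v = 0 := by
  have key : ∀ k, blockMap n m k v = 0 → ∀ i : Fin n, k ≤ i → (i : ℕ) < k + m → v i = 0 := by
    intro k hk i hi hi'
    have := congrFun hk ⟨i - k, by omega⟩
    simp only [blockMap, LinearMap.coe_mk, AddHom.coe_mk, Pi.zero_apply] at this
    have e : k + ((i : ℕ) - k) = i := by omega
    rw [dif_pos (by omega)] at this
    simpa only [e] using this
  ext i
  have := i.2
  by_cases c0 : (i : ℕ) < m
  · exact key 0 h0 i (by omega) (by omega)
  by_cases c1 : (i : ℕ) < 2 * m
  · exact key m h1 i (by omega) (by omega)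
  · exact key (2 * m) h2 i (by omega) (by omega)

/-- The lexicographic colouring. -/
noncomputable def lexCol {m : ℕ} (f : (Fin m → ZMod 2) → Bool) (a b c : Fin m → ZMod 2) : Fin 3 :=
  open Classical in
  if a ≠ 0 then (if f a then 0 else 1)
  else if b ≠ 0 then (if f b then 1 else 2)
  else (if f c then 2 else 0)

theorem fin3_two (i p q r : Fin 3) (hp : p ≠ i) (hq : q ≠ i) (hr : r ≠ i) :
    ¬ (p ≠ q ∧ p ≠ r ∧ q ≠ r) := by
  revert i p q r
  decide

theorem zmod2_add_eq_zero {m : ℕ} {a b : Fin m → ZMod 2} (h : a + b = 0) : a = b := by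
  ext i
  have := congrFun h i
  simp only [Pi.add_apply, Pi.zero_apply] at this
  generalize a i = p at *
  generalize b i = q at *
  revert p q
  decide

theorem lexCol_norainbow {m : ℕ} (f : (Fin m → ZMod 2) → Bool) (a b c a' b' c' : Fin m → ZMod 2) :
    ¬ (lexCol f a b c ≠ lexCol f a' b' c' ∧
      lexCol f a b c ≠ lexCol f (a + a') (b + b') (c + c') ∧
      lexCol f a' b' c' ≠ lexCol f (a + a') (b + b') (c + c')) := by
  have hA : ∀ a b c : Fin m → ZMod 2, a ≠ 0 → lexCol f a b c = if f a then 0 else 1 := by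
    intro a b c h; simp [lexCol, h]
  have hB : ∀ b c : Fin m → ZMod 2, b ≠ 0 → lexCol f 0 b c = if f b then 1 else 2 := by
    intro b c h; simp [lexCol, h]
  have hC : ∀ c : Fin m → ZMod 2, lexCol f 0 0 c = if f c then 2 else 0 := by
    intro c; simp [lexCol]
  by_cases ha : a = 0
  · by_cases ha' : a' = 0
    · subst ha ha'
      simp only [add_zero]
      by_cases hb : b = 0
      · by_cases hb' : b' = 0
        · subst hb hb'
          simp only [add_zero, hC]
          apply fin3_two 1 <;> split_ifs <;> decide
        · subst hb
          simp [hB _ _ hb']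
      · by_cases hb' : b' = 0
        · subst hb'
          simp [hB _ _ hb]
        · by_cases hs : b + b' = 0
          · have := zmod2_add_eq_zero hs
            subst this
            simp [hB _ _ hb]
          · rw [hB _ _ hb, hB _ _ hb', hB _ _ hs]
            apply fin3_two 0 <;> split_ifs <;> decide
    · subst ha
      simp [hA _ _ _ ha']
  · by_cases ha' : a' = 0
    · subst ha'
      simp [hA _ _ _ ha]
    · by_cases hs : a + a' = 0
      · have := zmod2_add_eq_zero hs
        subst this
        simp [hA _ _ _ ha]
      · rw [hA _ _ _ ha, hA _ _ _ ha', hA _ _ _ hs]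
        apply fin3_two 2 <;> split_ifs <;> decide

theorem finrank_split {n m : ℕ} (φ : (Fin n → ZMod 2) →ₗ[ZMod 2] (Fin m → ZMod 2))
    (W : Submodule (ZMod 2) (Fin n → ZMod 2)) :
    Module.finrank (ZMod 2) W =
      Module.finrank (ZMod 2) (W.map φ) + Module.finrank (ZMod 2) ↥(W ⊓ LinearMap.ker φ) := by
  have h := (φ.domRestrict W).finrank_range_add_finrank_ker
  rw [LinearMap.range_domRestrict, LinearMap.ker_domRestrict] at h
  rw [← h]
  congr 1
  rw [← Submodule.map_comap_subtype]
  exact (Submodule.finrank_map_subtype_eq W _).symm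

theorem finrank_bound (n m d : ℕ) (h3 : n ≤ 3 * m) (f : (Fin m → ZMod 2) → Bool)
    (hf : ∀ (U : Submodule (ZMod 2) (Fin m → ZMod 2)) (b : Bool),
      (∀ u ∈ U, u ≠ 0 → f u = b) → Module.finrank (ZMod 2) U ≤ d)
    (W : Submodule (ZMod 2) (Fin n → ZMod 2)) (i : Fin 3)
    (hW : ∀ v ∈ W, v ≠ 0 →
      lexCol f (blockMap n m 0 v) (blockMap n m m v) (blockMap n m (2 * m) v) ≠ i) :
    Module.finrank (ZMod 2) W ≤ m + 2 * d := by
  set W2 := W ⊓ LinearMap.ker (blockMap n m 0) with hW2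
  set W3 := W2 ⊓ LinearMap.ker (blockMap n m m) with hW3
  have e1 := finrank_split (blockMap n m 0) W
  have e2 := finrank_split (blockMap n m m) W2
  have e3 := finrank_split (blockMap n m (2 * m)) W3
  have e4 : W3 ⊓ LinearMap.ker (blockMap n m (2 * m)) = ⊥ := by
    rw [eq_bot_iff]
    rintro v ⟨⟨⟨_, h0⟩, h1⟩, h2⟩
    exact blockMap_inj n m h3 v h0 h1 h2
  rw [e4, finrank_bot] at e3
  rw [← hW2] at e1
  rw [← hW3] at e2
  have hm : ∀ U : Submodule (ZMod 2) (Fin m → ZMod 2), Module.finrank (ZMod 2) U ≤ m := by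
    intro U
    simpa using U.finrank_le
  have hne : ∀ (k : ℕ) (v : Fin n → ZMod 2), blockMap n m k v ≠ 0 → v ≠ 0 := by
    rintro k v h rfl
    exact h (map_zero _)
  have hA : ∀ u ∈ W.map (blockMap n m 0), u ≠ 0 → (if f u then (0 : Fin 3) else 1) ≠ i := by
    rintro _ ⟨v, hv, rfl⟩ hu
    have := hW v hv (hne _ _ hu)
    simpa [lexCol, hu] using this
  have hB : ∀ u ∈ W2.map (blockMap n m m), u ≠ 0 → (if f u then (1 : Fin 3) else 2) ≠ i := by
    rintro _ ⟨v, ⟨hv, h0⟩, rfl⟩ hu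
    have h0' : blockMap n m 0 v = 0 := h0
    have := hW v hv (hne _ _ hu)
    simpa [lexCol, hu, h0'] using this
  have hC : ∀ u ∈ W3.map (blockMap n m (2 * m)), u ≠ 0 →
      (if f u then (2 : Fin 3) else 0) ≠ i := by
    rintro _ ⟨v, ⟨⟨hv, h0⟩, h1⟩, rfl⟩ hu
    have h0' : blockMap n m 0 v = 0 := h0
    have h1' : blockMap n m m v = 0 := h1
    have := hW v hv (hne _ _ hu)
    simpa [lexCol, h1', h0'] using this
  have mA := hm (W.map (blockMap n m 0))
  have mB := hm (W2.map (blockMap n m m))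
  have mC := hm (W3.map (blockMap n m (2 * m)))
  fin_cases i
  · have a := hf (W.map (blockMap n m 0)) false
      (fun u hu hu0 => by have := hA u hu hu0; cases h : f u <;> simp [h] at this ⊢)
    have c := hf (W3.map (blockMap n m (2 * m))) true
      (fun u hu hu0 => by have := hC u hu hu0; cases h : f u <;> simp [h] at this ⊢)
    omega
  · have a := hf (W.map (blockMap n m 0)) true
      (fun u hu hu0 => by have := hA u hu hu0; cases h : f u <;> simp [h] at this ⊢)
    have b := hf (W2.map (blockMap n m m)) false
      (fun u hu hu0 => by have := hB u hu hu0; cases h : f u <;> simp [h] at this ⊢)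
    omega
  · have b := hf (W2.map (blockMap n m m)) true
      (fun u hu hu0 => by have := hB u hu hu0; cases h : f u <;> simp [h] at this ⊢)
    have c := hf (W3.map (blockMap n m (2 * m))) false
      (fun u hu hu0 => by have := hC u hu hu0; cases h : f u <;> simp [h] at this ⊢)
    omega


/-- For all sufficiently large `n` there is a 3-colouring of the nonzero vectors of
`𝔽₂ⁿ` with no rainbow triangle, such that every subspace on whose nonzero vectors at
most two colours appear has dimension at most `n / 3 + 6 log₂ n`. -/
theorem stmt4 :
    ∃ N : ℕ, ∀ n : ℕ, N ≤ n →
      ∃ c : (Fin n → ZMod 2) → Fin 3,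
        (¬ ∃ x y : Fin n → ZMod 2, x ≠ 0 ∧ y ≠ 0 ∧ x ≠ y ∧
          c x ≠ c y ∧ c x ≠ c (x + y) ∧ c y ≠ c (x + y)) ∧
        ∀ W : Submodule (ZMod 2) (Fin n → ZMod 2),
          (∃ i : Fin 3, ∀ v ∈ W, v ≠ 0 → c v ≠ i) →
          (Module.finrank (ZMod 2) W : ℝ) ≤ (n : ℝ) / 3 + 6 * Real.logb 2 (n : ℝ) := by
  refine ⟨8, fun n hn => ?_⟩
  obtain ⟨L, hL⟩ : ∃ L, L = Nat.log 2 n := ⟨_, rfl⟩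
  have hL3 : 3 ≤ L := by
    rw [hL]
    exact Nat.le_log_of_pow_le (by norm_num) (by simpa using hn)
  have hlt : n < 2 ^ (L + 1) := by
    rw [hL]
    exact Nat.lt_pow_succ_log_self (by norm_num) n
  have hexp : ∀ k, 3 ≤ k → 2 * k + 1 ≤ 2 ^ k := by
    intro k hk
    induction k, hk using Nat.le_induction with
    | base => norm_num
    | succ k hk ih => rw [pow_succ]; omega
  have hL2 := hexp L hL3
  obtain ⟨m, hm⟩ : ∃ m, m = n / 3 + 1 := ⟨_, rfl⟩
  have hmd : m * (2 * L) + 2 < 2 ^ (2 * L) := by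
    have h1 : m ≤ 2 ^ L := by rw [pow_succ] at hlt; omega
    have h2 : 2 ^ (2 * L) = 2 ^ L * 2 ^ L := by rw [← pow_add]; congr 1; ring
    rw [h2]
    generalize 2 ^ L = q at *
    nlinarith
  obtain ⟨f, hf⟩ := exists_no_mono m (2 * L) hmd
  refine ⟨fun v => lexCol f (blockMap n m 0 v) (blockMap n m m v) (blockMap n m (2 * m) v),
    ?_, ?_⟩
  · rintro ⟨x, y, -, -, -, h⟩
    simp only [map_add] at h
    exact lexCol_norainbow f _ _ _ _ _ _ h
  · rintro W ⟨i, hi⟩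
    have h1 := finrank_bound n m (2 * L) (by omega) f hf W i hi
    have h2 : (L : ℝ) ≤ Real.logb 2 (n : ℝ) := by
      rw [hL]
      exact_mod_cast Real.natLog_le_logb n 2
    have h3 : 3 * Module.finrank (ZMod 2) W ≤ n + 3 + 12 * L := by omega
    have h4 : (3 : ℝ) * (Module.finrank (ZMod 2) W : ℝ) ≤ n + 3 + 12 * L := by exact_mod_cast h3
    have h5 : (3 : ℝ) ≤ L := by exact_mod_cast hL3
    linarith
end

section
/- Let n ∈ ℕ, let q be a prime power with field 𝔽_q, and let c be a colouring of the points of 𝔽_qⁿ such that for every two-dimensional linear subspace L of 𝔽_qⁿ, at most two colours appear among the points contained in L. Then there exist linear subspaces {0} = W₀ ⊆ W₁ ⊆ … ⊆ W_k = 𝔽_qⁿ such that for each 0 ≤ i < k, at most two colours appear among the points contained in W_{i+1} but not in W_i. -/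
/-- A point of `𝔽_qⁿ`: a one-dimensional linear subspace. -/
def ProjPoint (K : Type) [Field K] (n : ℕ) : Type :=
  {P : Submodule K (Fin n → K) // Module.finrank K P = 1}

/-- Three scale-invariant classes partitioning the nonzero vectors, without rainbow lines. -/
structure Tri (K : Type) {V : Type} [Field K] [AddCommGroup V] [Module K V]
    (A B C : Set V) : Prop where
  zA : (0 : V) ∉ A
  zB : (0 : V) ∉ B
  zC : (0 : V) ∉ C
  dAB : ∀ v ∈ A, v ∉ B
  dAC : ∀ v ∈ A, v ∉ C
  dBC : ∀ v ∈ B, v ∉ C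
  cover : ∀ v, v ≠ 0 → v ∈ A ∨ v ∈ B ∨ v ∈ C
  sA : ∀ (t : K) (v : V), t ≠ 0 → v ∈ A → t • v ∈ A
  sB : ∀ (t : K) (v : V), t ≠ 0 → v ∈ B → t • v ∈ B
  sC : ∀ (t : K) (v : V), t ≠ 0 → v ∈ C → t • v ∈ C
  rain : ∀ x ∈ A, ∀ y ∈ B, x + y ∉ C

section tri
variable {K V : Type} [Field K] [AddCommGroup V] [Module K V] {A B C : Set V}

theorem Tri.nA (T : Tri K A B C) {v : V} (h : v ∈ A) : -v ∈ A := by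
  have := T.sA (-1) v (by simp) h
  simpa using this

theorem Tri.swap (T : Tri K A B C) : Tri K B A C where
  zA := T.zB
  zB := T.zA
  zC := T.zC
  dAB := fun v h h' => T.dAB v h' h
  dAC := T.dBC
  dBC := T.dAC
  cover := fun v h => by have := T.cover v h; tauto
  sA := T.sB
  sB := T.sA
  sC := T.sC
  rain := fun x hx y hy => by rw [add_comm]; exact T.rain y hy x hx

theorem Tri.swap2 (T : Tri K A B C) : Tri K A C B where
  zA := T.zA
  zB := T.zC
  zC := T.zB
  dAB := T.dAC
  dAC := T.dAB
  dBC := fun v h h' => T.dBC v h' h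
  cover := fun v h => by have := T.cover v h; tauto
  sA := T.sA
  sB := T.sC
  sC := T.sB
  rain := fun x hx y hy h => by
    have := T.rain (-x) (T.nA hx) (x + y) h
    simp at this
    exact this hy

theorem coatom_decomp {H : Submodule K V} (hH : IsCoatom H) {b : V} (hb : b ∉ H) (v : V) :
    ∃ h ∈ H, ∃ t : K, v = h + t • b := by
  have h1 : H ⊔ Submodule.span K {b} = ⊤ := by
    apply hH.2
    refine lt_of_le_of_ne le_sup_left ?_
    intro h
    apply hb
    rw [h]
    exact Submodule.mem_sup_right (Submodule.mem_span_singleton_self b)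
  have h2 : v ∈ H ⊔ Submodule.span K {b} := by rw [h1]; trivial
  obtain ⟨h, hh, z, hz, e⟩ := Submodule.mem_sup.1 h2
  obtain ⟨t, rfl⟩ := Submodule.mem_span_singleton.1 hz
  exact ⟨h, hh, t, e.symm⟩

theorem sup_ne_top {H U : Submodule K V} (hU : U < H) {b : V} (hb : b ∉ H) :
    U ⊔ Submodule.span K {b} ≠ ⊤ := by
  intro h
  obtain ⟨x, hx, hxU⟩ := SetLike.exists_of_lt hU
  have h2 : x ∈ U ⊔ Submodule.span K {b} := by rw [h]; trivial
  obtain ⟨u, hu, z, hz, e⟩ := Submodule.mem_sup.1 h2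
  obtain ⟨t, rfl⟩ := Submodule.mem_span_singleton.1 hz
  have h3 : t • b ∈ H := by
    have : t • b = x - u := by rw [← e]; abel
    rw [this]
    exact H.sub_mem hx (hU.le hu)
  by_cases ht : t = 0
  · subst ht
    simp at e
    exact hxU (e ▸ hu)
  · exact hb ((H.smul_mem_iff ht).1 h3)

theorem exists_not_mem {X : Set V} (hX : Submodule.span K X = ⊤) {U : Submodule K V}
    (hU : U ≠ ⊤) : ∃ x ∈ X, x ∉ U := by
  by_contra! h
  exact hU (top_le_iff.1 (hX ▸ Submodule.span_le.2 h))

theorem Tri.one (T : Tri K A B C) (hB : Submodule.span K B = ⊤) (hC : Submodule.span K C = ⊤)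
    {H U : Submodule K V} (hH : IsCoatom H) (hU : U < H) (hm : ∀ h ∈ H, h ∉ U → h ∈ A) :
    False := by
  obtain ⟨b, hb, hbH⟩ := exists_not_mem hB hH.1
  obtain ⟨c, hc, hcU⟩ := exists_not_mem hC (sup_ne_top hU hbH)
  obtain ⟨h, hh, t, e⟩ := coatom_decomp hH hbH c
  have hhU : h ∉ U := by
    intro h'
    apply hcU
    rw [e]
    exact Submodule.add_mem_sup h' (Submodule.smul_mem _ _ (Submodule.mem_span_singleton_self b))
  have hA := hm h hh hhU
  by_cases ht : t = 0
  · subst ht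
    simp at e
    exact T.dAC h hA (e ▸ hc)
  · exact T.rain h hA _ (T.sB t b ht hb) (e ▸ hc)

theorem Tri.coset (T : Tri K A B C) {S : Set V} (hS : S ⊆ A) {f : V}
    (hf : f ∈ Submodule.span K S) :
    ∀ x ∈ C, (∀ g ∈ Submodule.span K S, x + g ∉ A) → x + f ∈ C := by
  induction hf using Submodule.span_induction with
  | mem s hs =>
    intro x hx hg
    have h1 := hg s (Submodule.subset_span hs)
    have h0 : x + s ≠ 0 := by
      intro h
      have : x = - s := eq_neg_of_add_eq_zero_left h
      exact T.dAC _ (T.nA (hS hs)) (this ▸ hx)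
    rcases T.cover _ h0 with h | h | h
    · exact absurd h h1
    · exact absurd h (by rw [add_comm]; exact T.swap2.rain s (hS hs) x hx)
    · exact h
  | zero => intro x hx _; simpa using hx
  | add f g hf hg ihf ihg =>
    intro x hx h
    rw [← add_assoc]
    apply ihg _ (ihf x hx h)
    intro g' hg'
    rw [add_assoc]
    exact h _ (Submodule.add_mem _ hf hg')
  | smul t f hf ih =>
    intro x hx h
    by_cases ht : t = 0
    · subst ht; simpa using hx
    have e : x + t • f = t • (t⁻¹ • x + f) := by
      rw [smul_add, smul_smul, mul_inv_cancel₀ ht, one_smul]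
    rw [e]
    apply T.sC _ _ ht
    apply ih _ (T.sC _ _ (inv_ne_zero ht) hx)
    intro g hg h'
    apply h _ (Submodule.smul_mem _ t hg)
    have e : x + t • g = t • (t⁻¹ • x + g) := by
      rw [smul_add, smul_smul, mul_inv_cancel₀ ht, one_smul]
    rw [e]
    exact T.sA _ _ ht h'

theorem Tri.pure (T : Tri K A B C) {S : Set V} (hS : S ⊆ A) {v : V}
    (hv : v ∉ Submodule.span K S) (hg : ∀ g ∈ Submodule.span K S, v + g ∉ A) :
    (∀ g ∈ Submodule.span K S, v + g ∈ B) ∨ (∀ g ∈ Submodule.span K S, v + g ∈ C) := by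
  have h0 : v ≠ 0 := fun h => hv (h ▸ Submodule.zero_mem _)
  rcases T.cover v h0 with h | h | h
  · exact absurd (by simpa using h) (hg 0 (Submodule.zero_mem _))
  · left
    intro g hg'
    exact T.swap2.coset hS hg' v h hg
  · right
    intro g hg'
    exact T.coset hS hg' v h hg

theorem Tri.contr (T : Tri K A B C) (hA : Submodule.span K A = ⊤)
    (hB : Submodule.span K B = ⊤) (hC : Submodule.span K C = ⊤)
    {H F L : Submodule K V} (hH : IsCoatom H)
    (hF : F = Submodule.span K (A ∩ H)) (hFH : F < H) (hL : L ≠ ⊤) (hFL : F ≤ L)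
    (hBL : ∀ v, (∀ g ∈ F, v + g ∈ B) → v ∈ L) : False := by
  have hS : A ∩ (H : Set V) ⊆ A := Set.inter_subset_left
  have hpure : ∀ v, v ∉ F → (∀ g ∈ F, v + g ∉ A) →
      (∀ g ∈ F, v + g ∈ B) ∨ (∀ g ∈ F, v + g ∈ C) := by
    intro v hv hg
    subst hF
    exact T.pure hS hv hg
  have pureH : ∀ v ∈ H, v ∉ F → (∀ g ∈ F, v + g ∈ B) ∨ (∀ g ∈ F, v + g ∈ C) := by
    intro v hv hvF
    apply hpure v hvF
    intro g hg h
    apply hvF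
    have : v + g ∈ F := by
      rw [hF]
      exact Submodule.subset_span ⟨h, H.add_mem hv (hFH.le hg)⟩
    simpa using F.sub_mem this hg
  have bc : ∀ v, (∀ g ∈ F, v + g ∈ B) → (∀ g ∈ F, v + g ∈ C) → False := by
    intro v h1 h2
    exact T.dBC _ (h1 0 F.zero_mem) (h2 0 F.zero_mem)
  obtain ⟨b, hb, hbL⟩ := exists_not_mem hB hL
  have hbF : b ∉ F := fun h => hbL (hFL h)
  have hbC : ¬ (∀ g ∈ F, b + g ∈ C) := by
    intro h
    have := h 0 F.zero_mem
    rw [add_zero] at this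
    exact T.dBC b hb this
  have hbH : b ∉ H := by
    intro h
    rcases pureH b h hbF with h | h
    · exact hbL (hBL b h)
    · exact hbC h
  obtain ⟨g0, hg0, hg0A⟩ : ∃ g ∈ F, b + g ∈ A := by
    by_contra! h
    rcases hpure b hbF h with h | h
    · exact hbL (hBL b h)
    · exact hbC h
  have fact : ∀ x, (∀ g ∈ F, x + g ∈ C) → ∀ t : K, ∀ g ∈ F, (x + t • b) + g ∈ C := by
    intro x hx t
    by_cases ht : t = 0
    · subst ht; simpa using hx
    have hntB : -(t • b) ∈ B := by
      rw [← neg_smul]; exact T.sB _ _ (neg_ne_zero.2 ht) hb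
    have hyF : x + t • b ∉ F := by
      intro h
      have h1 := hx _ (F.neg_mem h)
      have e : x + -(x + t • b) = -(t • b) := by abel
      rw [e] at h1
      exact T.dBC _ hntB h1
    have hno : ∀ g ∈ F, x + t • b + g ∉ A := by
      intro g hg h
      have h1 := T.rain _ h _ hntB
      have e : x + t • b + g + -(t • b) = x + g := by abel
      rw [e] at h1
      exact h1 (hx g hg)
    rcases hpure _ hyF hno with h | h
    · exfalso
      have h1 := h (t • g0) (F.smul_mem _ hg0)
      have e : x + t • b + t • g0 = t • (b + g0) + x := by rw [smul_add]; abel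
      rw [e] at h1
      have hxC := hx 0 F.zero_mem
      rw [add_zero] at hxC
      exact T.swap2.rain _ (T.sA _ _ ht hg0A) x hxC h1
    · exact h
  obtain ⟨U, hU, hUC⟩ : ∃ U < H, ∀ h ∈ H, h ∉ U → ∀ g ∈ F, h + g ∈ C := by
    by_cases hHL : H ≤ L
    · have hHL' : L = H := by
        by_contra hne
        exact hL (hH.2 L (lt_of_le_of_ne hHL (Ne.symm hne)))
      let β : Submodule K V :=
        { carrier := {h | h ∈ H ∧ (h ∈ F ∨ ∀ g ∈ F, h + g ∈ B)}
          zero_mem' := ⟨H.zero_mem, Or.inl F.zero_mem⟩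
          add_mem' := by
            rintro x w ⟨hx, hx'⟩ ⟨hw, hw'⟩
            refine ⟨H.add_mem hx hw, ?_⟩
            rcases hx' with hx' | hx'
            · rcases hw' with hw' | hw'
              · exact Or.inl (F.add_mem hx' hw')
              · right
                intro g hg
                have := hw' (x + g) (F.add_mem hx' hg)
                have e : x + w + g = w + (x + g) := by abel
                rwa [e]
            · rcases hw' with hw' | hw'
              · right
                intro g hg
                have := hx' (w + g) (F.add_mem hw' hg)
                rwa [add_assoc]
              · by_cases hyF : x + w ∈ F
                · exact Or.inl hyF
                right
                rcases pureH _ (H.add_mem hx hw) hyF with h | h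
                · exact h
                exfalso
                have hwbH : w + b ∉ H := fun h' => hbH (by simpa using H.sub_mem h' hw)
                obtain ⟨g, hg, hgA⟩ : ∃ g ∈ F, w + b + g ∈ A := by
                  by_contra! h'
                  rcases hpure (w + b) (fun h => hwbH (hFH.le h)) h' with h2 | h2
                  · exact hwbH (hHL' ▸ hBL _ h2)
                  · have := fact _ h2 (-1)
                    apply bc w hw'
                    simpa using this
                have h3 := fact _ h 1 g hg
                have hxB := hx' 0 F.zero_mem
                rw [add_zero] at hxB
                apply T.rain _ hgA x hxB
                have e : w + b + g + x = x + w + (1 : K) • b + g := by rw [one_smul]; abel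
                rwa [e]
          smul_mem' := by
            rintro t x ⟨hx, hx'⟩
            refine ⟨H.smul_mem t hx, ?_⟩
            by_cases ht : t = 0
            · left; subst ht; simp
            rcases hx' with hx' | hx'
            · exact Or.inl (F.smul_mem t hx')
            · right
              intro g hg
              have e : t • x + g = t • (x + t⁻¹ • g) := by
                rw [smul_add, smul_smul, mul_inv_cancel₀ ht, one_smul]
              rw [e]
              exact T.sB _ _ ht (hx' _ (F.smul_mem _ hg)) }
      have hβ : ∀ h, h ∈ β ↔ h ∈ H ∧ (h ∈ F ∨ ∀ g ∈ F, h + g ∈ B) := fun h => Iff.rfl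
      refine ⟨β, ?_, ?_⟩
      · refine lt_of_le_of_ne (fun h hh => ((hβ h).1 hh).1) ?_
        intro heq
        refine T.swap.one hA hC hH hFH ?_
        intro h hh hhF
        rw [← heq] at hh
        rcases ((hβ h).1 hh).2 with h1 | h1
        · exact absurd h1 hhF
        · simpa using h1 0 F.zero_mem
      · intro h hh hhβ
        have : ¬ (h ∈ F ∨ ∀ g ∈ F, h + g ∈ B) := fun h' => hhβ ((hβ h).2 ⟨hh, h'⟩)
        push Not at this
        rcases pureH h hh this.1 with h1 | h1
        · obtain ⟨g, hg, hg'⟩ := this.2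
          exact absurd (h1 g hg) hg'
        · exact h1
    · refine ⟨H ⊓ L, inf_lt_left.2 hHL, ?_⟩
      intro h hh hhL
      have hhL' : h ∉ L := fun h' => hhL ⟨hh, h'⟩
      rcases pureH h hh (fun h' => hhL' (hFL h')) with h1 | h1
      · exact absurd (hBL h h1) hhL'
      · exact h1
  obtain ⟨a, ha, haU⟩ := exists_not_mem hA (sup_ne_top hU hbH)
  obtain ⟨h, hh, t, e⟩ := coatom_decomp hH hbH a
  have hhU : h ∉ U := by
    intro h'
    apply haU
    rw [e]
    exact Submodule.add_mem_sup h' (Submodule.smul_mem _ _ (Submodule.mem_span_singleton_self b))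
  have := fact h (hUC h hh hhU) t 0 F.zero_mem
  rw [add_zero, ← e] at this
  exact T.dAC a ha this

/-- The quotient colouring. -/
theorem Tri.quot (T : Tri K A B C) {S : Set V} (hS : S ⊆ A) {F : Submodule K V}
    (hF : F = Submodule.span K S) :
    Tri K {x : V ⧸ F | x ≠ 0 ∧ ∃ v ∈ A, F.mkQ v = x}
      {x : V ⧸ F | x ≠ 0 ∧ ∀ v, F.mkQ v = x → v ∈ B}
      {x : V ⧸ F | x ≠ 0 ∧ ∀ v, F.mkQ v = x → v ∈ C} where
  zA := fun h => h.1 rfl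
  zB := fun h => h.1 rfl
  zC := fun h => h.1 rfl
  dAB := by
    rintro x ⟨_, v, hv, e⟩ ⟨_, h⟩
    exact T.dAB v hv (h v e)
  dAC := by
    rintro x ⟨_, v, hv, e⟩ ⟨_, h⟩
    exact T.dAC v hv (h v e)
  dBC := by
    rintro x ⟨_, h'⟩ ⟨_, h⟩
    obtain ⟨v, e⟩ := F.mkQ_surjective x
    exact T.dBC v (h' v e) (h v e)
  cover := by
    intro x hx
    by_cases hA : ∃ v ∈ A, F.mkQ v = x
    · exact Or.inl ⟨hx, hA⟩
    right
    obtain ⟨v, e⟩ := F.mkQ_surjective x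
    have hvF : v ∉ F := by
      intro h
      apply hx
      rw [← e]
      simpa using h
    have key : ∀ w, F.mkQ w = x → ∃ g ∈ F, w = v + g := by
      intro w hw
      refine ⟨w - v, ?_, by abel⟩
      rw [← e] at hw
      simpa using (Submodule.Quotient.eq F).1 hw
    have hno : ∀ g ∈ F, v + g ∉ A := by
      intro g hg h
      apply hA
      refine ⟨v + g, h, ?_⟩
      rw [map_add, e]
      have : F.mkQ g = 0 := by simpa using hg
      rw [this, add_zero]
    have hp : (∀ g ∈ F, v + g ∈ B) ∨ (∀ g ∈ F, v + g ∈ C) := by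
      subst hF
      exact T.pure hS hvF hno
    rcases hp with h | h
    · left
      refine ⟨hx, fun w hw => ?_⟩
      obtain ⟨g, hg, rfl⟩ := key w hw
      exact h g hg
    · right
      refine ⟨hx, fun w hw => ?_⟩
      obtain ⟨g, hg, rfl⟩ := key w hw
      exact h g hg
  sA := by
    rintro t x ht ⟨hx, v, hv, e⟩
    exact ⟨smul_ne_zero ht hx, t • v, T.sA _ _ ht hv, by rw [map_smul, e]⟩
  sB := by
    rintro t x ht ⟨hx, h⟩
    refine ⟨smul_ne_zero ht hx, fun v hv => ?_⟩
    have h1 := h (t⁻¹ • v) (by rw [map_smul, hv, smul_smul, inv_mul_cancel₀ ht, one_smul])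
    have := T.sB t _ ht h1
    rwa [smul_smul, mul_inv_cancel₀ ht, one_smul] at this
  sC := by
    rintro t x ht ⟨hx, h⟩
    refine ⟨smul_ne_zero ht hx, fun v hv => ?_⟩
    have h1 := h (t⁻¹ • v) (by rw [map_smul, hv, smul_smul, inv_mul_cancel₀ ht, one_smul])
    have := T.sC t _ ht h1
    rwa [smul_smul, mul_inv_cancel₀ ht, one_smul] at this
  rain := by
    rintro x ⟨_, v, hv, e⟩ y ⟨_, h⟩ ⟨_, h'⟩
    obtain ⟨w, ew⟩ := F.mkQ_surjective y
    exact T.rain v hv w (h w ew) (h' _ (by rw [map_add, e, ew]))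

theorem Tri.restrict (T : Tri K A B C) (H : Submodule K V) :
    Tri K {x : H | (x : V) ∈ A} {x : H | (x : V) ∈ B} {x : H | (x : V) ∈ C} where
  zA := T.zA
  zB := T.zB
  zC := T.zC
  dAB := fun v => T.dAB v
  dAC := fun v => T.dAC v
  dBC := fun v => T.dBC v
  cover := fun v hv => T.cover v (by simpa using hv)
  sA := fun t v => T.sA t v
  sB := fun t v => T.sB t v
  sC := fun t v => T.sC t v
  rain := fun x hx y hy => T.rain x hx y hy

/-- The statement for the inductive hypothesis. -/
def Holds (K : Type) [Field K] (m : ℕ) : Prop :=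
  ∀ (V : Type) [AddCommGroup V] [Module K V] [FiniteDimensional K V] [Nontrivial V]
    (A B C : Set V), Module.finrank K V < m → Tri K A B C →
    Submodule.span K A = ⊤ → Submodule.span K B = ⊤ → Submodule.span K C = ⊤ → False

theorem Tri.noF [FiniteDimensional K V] (IH : Holds K (Module.finrank K V))
    (T : Tri K A B C) (hA : Submodule.span K A = ⊤)
    (hB : Submodule.span K B = ⊤) (hC : Submodule.span K C = ⊤)
    {H : Submodule K V} (hH : IsCoatom H) (hne : ∃ a ∈ A, a ∈ H)
    (hn : Submodule.span K {x : H | (x : V) ∈ A} ≠ ⊤) : False := by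
  obtain ⟨F, hF⟩ : ∃ F, F = Submodule.span K (A ∩ (H : Set V)) := ⟨_, rfl⟩
  have hFH : F < H := by
    refine lt_of_le_of_ne ?_ ?_
    · rw [hF]; exact Submodule.span_le.2 Set.inter_subset_right
    · intro h
      apply hn
      have h1 : (Submodule.span K {x : H | (x : V) ∈ A}).map H.subtype = F := by
        rw [Submodule.map_span, hF]
        congr 1
        ext x
        simp
      apply Submodule.map_injective_of_injective H.subtype_injective
      rw [h1, h]
      simp
  have hF0 : F ≠ ⊥ := by
    obtain ⟨a, ha, haH⟩ := hne
    intro h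
    have : a ∈ F := by rw [hF]; exact Submodule.subset_span ⟨ha, haH⟩
    rw [h] at this
    exact T.zA ((Submodule.mem_bot K).1 this ▸ ha)
  have hFt : F ≠ ⊤ := ne_top_of_lt hFH
  have TQ := T.quot (S := A ∩ H) Set.inter_subset_left hF
  have : Nontrivial (V ⧸ F) := Submodule.Quotient.nontrivial_iff.2 hFt
  have hlt : Module.finrank K (V ⧸ F) < Module.finrank K V := by
    have h1 := F.finrank_quotient_add_finrank
    have h2 : Module.finrank K F ≠ 0 := by
      rwa [Ne, Submodule.finrank_eq_zero]
    omega
  have comapne : ∀ W : Submodule K (V ⧸ F), W ≠ ⊤ → W.comap F.mkQ ≠ ⊤ := by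
    intro W hW h
    apply hW
    rw [← Submodule.map_comap_eq_of_surjective F.mkQ_surjective W, h]
    simp
  have hle : ∀ W : Submodule K (V ⧸ F), F ≤ W.comap F.mkQ := by
    intro W x hx
    have : F.mkQ x = 0 := by simpa using hx
    rw [Submodule.mem_comap, this]
    exact W.zero_mem
  have aux : ∀ {B C : Set V}, Tri K A B C → Submodule.span K B = ⊤ → Submodule.span K C = ⊤ →
      Submodule.span K {x : V ⧸ F | x ≠ 0 ∧ ∀ v, F.mkQ v = x → v ∈ B} = ⊤ := by
    intro B C T hB hC
    by_contra hno
    refine T.contr hA hB hC hH hF hFH (comapne _ hno) (hle _) ?_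
    intro v hv
    rw [Submodule.mem_comap]
    apply Submodule.subset_span
    refine ⟨?_, ?_⟩
    · intro h
      have : v ∈ F := by simpa using h
      have h1 := hv _ (F.neg_mem this)
      rw [add_neg_cancel] at h1
      exact T.zB h1
    · intro w hw
      have h1 := hv (w - v) ((Submodule.Quotient.eq F).1 hw)
      simpa using h1
  refine IH (V ⧸ F) _ _ _ hlt TQ ?_ (aux T hB hC) (aux T.swap2 hC hB)
  by_contra hno
  obtain ⟨a, ha, haU⟩ := exists_not_mem hA (comapne _ hno)
  apply haU
  rw [Submodule.mem_comap]
  by_cases h0 : F.mkQ a = 0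
  · rw [h0]; exact Submodule.zero_mem _
  · exact Submodule.subset_span ⟨h0, a, ha, rfl⟩

theorem Tri.indep (T : Tri K A B C) {a b c : V} (ha : a ∈ A) (hb : b ∈ B) (hc : c ∈ C)
    {r s t : K} (h : r • a + s • b + t • c = 0) : r = 0 ∧ s = 0 ∧ t = 0 := by
  have key : ∀ {A B C : Set V} (_ : Tri K A B C) {a b c : V} (_ : a ∈ A) (_ : b ∈ B) (_ : c ∈ C)
      {r s t : K} (_ : r • a + s • b + t • c = 0), t = 0 := by
    intro A B C T a b c ha hb hc r s t h
    by_contra ht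
    have e : (r • a + s • b) = (-t) • c := by
      rw [neg_smul]; exact eq_neg_of_add_eq_zero_left h
    have hC : r • a + s • b ∈ C := e ▸ T.sC _ _ (neg_ne_zero.2 ht) hc
    by_cases hr : r = 0
    · by_cases hs : s = 0
      · subst hr hs
        simp at hC
        exact T.zC hC
      · subst hr
        simp at hC
        exact T.dBC _ (T.sB _ _ hs hb) hC
    · by_cases hs : s = 0
      · subst hs
        simp at hC
        exact T.dAC _ (T.sA _ _ hr ha) hC
      · exact T.rain _ (T.sA _ _ hr ha) _ (T.sB _ _ hs hb) hC
  refine ⟨?_, ?_, key T ha hb hc h⟩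
  · refine key (T.swap.swap2.swap) hc hb ha (r := t) (s := s) ?_
    rw [← h]; abel
  · refine key T.swap2 ha hc hb (r := r) (s := t) ?_
    rw [← h]; abel

open Classical in
/-- Number of vectors of `X` in the span of two vectors. -/
noncomputable def NN (K : Type) {V : Type} [Field K] [AddCommGroup V] [Module K V] [Fintype V]
    (X : Set V) (a b : V) : ℕ :=
  (Finset.univ.filter fun v => v ∈ X ∧ v ∈ Submodule.span K {a, b}).card

theorem NN_comm [Fintype V] (X : Set V) (a b : V) : NN K X a b = NN K X b a := by
  unfold NN
  rw [Set.pair_comm]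

open Classical in
theorem card_mult [Fintype K] [Fintype V] {p : V} (hp : p ≠ 0) :
    ((Finset.univ.filter fun t : K => t ≠ 0).image (fun t => t • p)).card
      = Fintype.card K - 1 := by
  rw [Finset.card_image_of_injective _ (smul_left_injective K hp)]
  rw [Finset.filter_ne', Finset.card_erase_of_mem (Finset.mem_univ _), Finset.card_univ]

open Classical in
theorem count_lemma [Fintype K] [Fintype V] (Y : Set V) (l : Submodule K V) (e : V)
    (hd : ∀ v, ∃ p ∈ l, ∃ s : K, v = p + s • e) (he : ∀ s : K, s • e ∈ l → s • e = 0)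
    (hY : ∀ y ∈ Y, y ∉ Submodule.span K {e}) :
    ∑ x ∈ Finset.univ.filter (fun x => x ∈ l ∧ x ≠ 0),
      (Finset.univ.filter fun v => v ∈ Y ∧ v ∈ Submodule.span K {x, e}).card
      = (Finset.univ.filter fun v => v ∈ Y).card * (Fintype.card K - 1) := by
  have h := Finset.sum_card_bipartiteAbove_eq_sum_card_bipartiteBelow
    (s := Finset.univ.filter (fun x => x ∈ l ∧ x ≠ 0))
    (t := Finset.univ.filter fun v => v ∈ Y)
    (fun x v => v ∈ Submodule.span K {x, e})
  unfold Finset.bipartiteAbove Finset.bipartiteBelow at h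
  simp only [Finset.filter_filter] at h
  rw [h]
  rw [Finset.sum_const_nat]
  intro y hy
  simp only [Finset.mem_filter, Finset.mem_univ, true_and] at hy
  obtain ⟨p, hp, s, rfl⟩ := hd y
  have hp0 : p ≠ 0 := by
    rintro rfl
    apply hY _ hy
    rw [zero_add]
    exact Submodule.smul_mem _ _ (Submodule.mem_span_singleton_self e)
  rw [← card_mult (K := K) hp0]
  congr 1
  ext x
  simp only [Finset.mem_filter, Finset.mem_univ, true_and, Finset.mem_image]
  constructor
  · rintro ⟨⟨hx, hx0⟩, hm⟩
    obtain ⟨u, v, huv⟩ := Submodule.mem_span_pair.1 hm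
    have h1 : (v - s) • e = p - u • x := by
      rw [sub_smul, sub_eq_sub_iff_add_eq_add, add_comm, huv]
    have h2 := he (v - s) (by rw [h1]; exact l.sub_mem hp (l.smul_mem _ hx))
    rw [h1, sub_eq_zero] at h2
    have hu : u ≠ 0 := by
      rintro rfl
      simp at h2
      exact hp0 h2
    exact ⟨u⁻¹, inv_ne_zero hu, by rw [h2, smul_smul, inv_mul_cancel₀ hu, one_smul]⟩
  · rintro ⟨t, ht, rfl⟩
    refine ⟨⟨l.smul_mem _ hp, smul_ne_zero ht hp0⟩, ?_⟩
    refine Submodule.mem_span_pair.2 ⟨t⁻¹, s, ?_⟩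
    rw [smul_smul, inv_mul_cancel₀ ht, one_smul]

theorem Tri.li (T : Tri K A B C) {a b c : V} (ha : a ∈ A) (hb : b ∈ B) (hc : c ∈ C) :
    LinearIndependent K ![a, b, c] := by
  rw [Fintype.linearIndependent_iff]
  intro g hg
  simp [Fin.sum_univ_three] at hg
  obtain ⟨h0, h1, h2⟩ := T.indep ha hb hc hg
  intro i
  fin_cases i <;> assumption

theorem Tri.decomp (T : Tri K A B C) [FiniteDimensional K V] (h3 : Module.finrank K V = 3)
    {a b c : V} (ha : a ∈ A) (hb : b ∈ B) (hc : c ∈ C)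
    (v : V) : ∃ p ∈ Submodule.span K {a, b}, ∃ t : K, v = p + t • c := by
  have h := (T.li ha hb hc).span_eq_top_of_card_eq_finrank (by simp [h3])
  have hv : v ∈ Submodule.span K (Set.range ![a, b, c]) := by rw [h]; trivial
  obtain ⟨g, hg⟩ := (Submodule.mem_span_range_iff_exists_fun K).1 hv
  simp [Fin.sum_univ_three] at hg
  exact ⟨g 0 • a + g 1 • b, Submodule.mem_span_pair.2 ⟨_, _, rfl⟩, g 2, hg.symm⟩

theorem Tri.notC (T : Tri K A B C) {a b c : V} (ha : a ∈ A) (hb : b ∈ B) (hc : c ∈ C) :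
    c ∉ Submodule.span K {a, b} := by
  intro h
  obtain ⟨r, s, e⟩ := Submodule.mem_span_pair.1 h
  have := T.indep ha hb hc (r := r) (s := s) (t := -1) (by rw [e]; simp)
  simp at this

theorem Tri.smulC (T : Tri K A B C) {a b c : V} (ha : a ∈ A) (hb : b ∈ B) (hc : c ∈ C)
    {t : K} (h : t • c ∈ Submodule.span K {a, b}) : t = 0 := by
  by_contra ht
  exact T.notC ha hb hc ((Submodule.smul_mem_iff _ ht).1 h)

theorem Tri.const_le (T : Tri K A B C) [FiniteDimensional K V] [Fintype V]
    (h3 : Module.finrank K V = 3)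
    {a b a' b' c : V} (ha : a ∈ A) (hb : b ∈ B) (ha' : a' ∈ A) (hb' : b' ∈ B) (hc : c ∈ C) :
    NN K A a' b' ≤ NN K A a b := by
  classical
  choose p hp t ht using T.decomp h3 ha hb hc
  unfold NN
  apply Finset.card_le_card_of_injOn p
  · intro x hx
    simp only [Finset.coe_filter, Finset.mem_univ, true_and, Set.mem_setOf_eq] at hx ⊢
    refine ⟨?_, hp x⟩
    have e := ht x
    have e2 : p x = x + (-(t x)) • c := by
      rw [neg_smul, ← sub_eq_add_neg, eq_sub_iff_add_eq]; exact e.symm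
    by_cases h0 : t x = 0
    · rw [h0] at e2
      simp at e2
      rw [e2]; exact hx.1
    have hne : p x ≠ 0 := by
      intro h
      rw [h, zero_add] at e
      exact T.dAC _ hx.1 (e ▸ T.sC _ _ h0 hc)
    rcases T.cover _ hne with h | h | h
    · exact h
    · exfalso
      rw [e2] at h
      exact T.swap2.rain x hx.1 _ (T.sC _ _ (neg_ne_zero.2 h0) hc) h
    · exact absurd (hp x) (T.notC ha hb h)
  · intro x hx y hy hxy
    simp only [Finset.coe_filter, Finset.mem_univ, true_and, Set.mem_setOf_eq] at hx hy
    have e : (t x - t y) • c = x - y := by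
      have e1 : ∀ z, t z • c = z - p z := fun z => by
        rw [eq_sub_iff_add_eq, add_comm]; exact (ht z).symm
      rw [sub_smul, e1, e1, hxy]; abel
    have := T.smulC ha' hb' hc (t := t x - t y) (by rw [e]; exact Submodule.sub_mem _ hx.2 hy.2)
    rw [this, zero_smul] at e
    exact (sub_eq_zero.1 e.symm)

theorem Tri.const (T : Tri K A B C) [FiniteDimensional K V] [Fintype V]
    (h3 : Module.finrank K V = 3)
    {a b a' b' c : V} (ha : a ∈ A) (hb : b ∈ B) (ha' : a' ∈ A) (hb' : b' ∈ B) (hc : c ∈ C) :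
    NN K A a' b' = NN K A a b :=
  le_antisymm (T.const_le h3 ha hb ha' hb' hc) (T.const_le h3 ha' hb' ha hb hc)

theorem Tri.strict (T : Tri K A B C) [FiniteDimensional K V] [Fintype K] [Fintype V]
    (h3 : Module.finrank K V = 3)
    (hA : Submodule.span K A = ⊤) (hC : Submodule.span K C = ⊤)
    {a b c : V} (ha : a ∈ A) (hb : b ∈ B) (hc : c ∈ C) :
    Fintype.card K - 1 < NN K A a b := by
  classical
  have ha0 : a ≠ 0 := fun h => T.zA (h ▸ ha)
  by_contra! hle
  unfold NN at hle
  rw [← card_mult (K := K) ha0] at hle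
  have heq := Finset.eq_of_subset_of_card_le (by
    intro x hx
    simp only [Finset.mem_image, Finset.mem_filter, Finset.mem_univ, true_and] at hx ⊢
    obtain ⟨t, ht, rfl⟩ := hx
    exact ⟨T.sA _ _ ht ha, Submodule.smul_mem _ _ (Submodule.subset_span (by simp))⟩) hle
  have hco : IsCoatom (Submodule.span K {a, b}) := by
    constructor
    · intro h
      exact T.notC ha hb hc (by rw [h]; trivial)
    · intro W hW
      obtain ⟨w, hw, hwn⟩ := SetLike.exists_of_lt hW
      obtain ⟨p, hp, t, rfl⟩ := T.decomp h3 ha hb hc w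
      have ht : t ≠ 0 := by
        rintro rfl
        simp at hwn
        exact hwn hp
      have htc : t • c ∈ W := by simpa using W.sub_mem hw (hW.le hp)
      have hcW := (W.smul_mem_iff ht).1 htc
      rw [eq_top_iff]
      intro v _
      obtain ⟨p, hp, t, rfl⟩ := T.decomp h3 ha hb hc v
      exact W.add_mem (hW.le hp) (W.smul_mem _ hcW)
  have hU : Submodule.span K {a} < Submodule.span K {a, b} := by
    refine lt_of_le_of_ne (Submodule.span_mono (by simp)) ?_
    intro h
    have hbm : b ∈ Submodule.span K {a} := by rw [h]; exact Submodule.subset_span (by simp)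
    obtain ⟨t, e⟩ := Submodule.mem_span_singleton.1 hbm
    have := T.indep ha hb hc (r := t) (s := -1) (t := 0) (by rw [e]; simp)
    simp at this
  refine T.swap.one hA hC hco hU ?_
  intro h hh hhU
  have h0 : h ≠ 0 := fun h' => hhU (h' ▸ Submodule.zero_mem _)
  rcases T.cover h h0 with h1 | h1 | h1
  · exfalso
    have : h ∈ Finset.univ.filter (fun v => v ∈ A ∧ v ∈ Submodule.span K {a, b}) := by
      simp [h1, hh]
    rw [← heq] at this
    simp only [Finset.mem_image] at this
    obtain ⟨t, _, rfl⟩ := this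
    exact hhU (Submodule.smul_mem _ _ (Submodule.mem_span_singleton_self a))
  · exact h1
  · exact absurd hh (T.notC ha hb h1)

theorem Tri.total (T : Tri K A B C) [Fintype K] [Fintype V]
    {a b c : V} (ha : a ∈ A) (hb : b ∈ B) (hc : c ∈ C) :
    NN K A a b + NN K B a b = Fintype.card K * Fintype.card K - 1 := by
  classical
  unfold NN
  rw [← Finset.card_union_of_disjoint]
  · have h1 : ((Finset.univ.filter fun p : K × K => p ≠ 0).image
        (fun p => p.1 • a + p.2 • b)).card = Fintype.card K * Fintype.card K - 1 := by
      rw [Finset.card_image_of_injective]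
      · rw [Finset.filter_ne', Finset.card_erase_of_mem (Finset.mem_univ _), Finset.card_univ,
          Fintype.card_prod]
      · rintro ⟨r, s⟩ ⟨r', s'⟩ h
        simp only at h
        have := T.indep ha hb hc (r := r - r') (s := s - s') (t := 0) (by
          rw [sub_smul, sub_smul, zero_smul, add_zero]
          rw [sub_add_sub_comm, h, sub_self])
        simp only [sub_eq_zero] at this
        rw [this.1, this.2.1]
    rw [← h1]
    congr 1
    ext x
    simp only [Finset.mem_union, Finset.mem_filter, Finset.mem_univ, true_and, Finset.mem_image,
      Submodule.mem_span_pair]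
    constructor
    · intro h
      have h0 : x ≠ 0 := by
        rintro rfl
        rcases h with h | h
        · exact T.zA h.1
        · exact T.zB h.1
      have h2 : ∃ r s : K, r • a + s • b = x := by tauto
      obtain ⟨r, s, rfl⟩ := h2
      refine ⟨(r, s), ?_, rfl⟩
      intro h
      simp at h
      rw [h.1, h.2] at h0
      simp at h0
    · rintro ⟨⟨r, s⟩, h, rfl⟩
      have h0 : r • a + s • b ≠ 0 := by
        intro h'
        have := T.indep ha hb hc (r := r) (s := s) (t := 0) (by rw [h']; simp)
        apply h
        rw [this.1, this.2.1]; rfl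
      rcases T.cover _ h0 with h1 | h1 | h1
      · exact Or.inl ⟨h1, r, s, rfl⟩
      · exact Or.inr ⟨h1, r, s, rfl⟩
      · exact absurd (Submodule.mem_span_pair.2 ⟨r, s, rfl⟩) (T.notC ha hb h1)
  · rw [Finset.disjoint_left]
    intro x hx hy
    simp only [Finset.mem_filter] at hx hy
    exact T.dAB x hx.2.1 hy.2.1

open Classical in
theorem Tri.remove (T : Tri K A B C) [Fintype K] [Fintype V] {a : V} (ha : a ∈ A)
    (Y : Set V) (hY : ∀ v, v ∈ Y ↔ v ∈ A ∧ v ∉ Submodule.span K {a})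
    (W : Submodule K V) (haW : a ∈ W) :
    (Finset.univ.filter fun v => v ∈ Y ∧ v ∈ W).card
      + (Fintype.card K - 1) = (Finset.univ.filter fun v => v ∈ A ∧ v ∈ W).card := by
  have ha0 : a ≠ 0 := fun h => T.zA (h ▸ ha)
  rw [← card_mult (K := K) ha0, ← Finset.card_union_of_disjoint]
  · congr 1
    ext x
    simp only [Finset.mem_union, Finset.mem_filter, Finset.mem_univ, true_and, Finset.mem_image,
      hY, Submodule.mem_span_singleton]
    constructor
    · rintro (h | ⟨t, ht, rfl⟩)
      · exact ⟨h.1.1, h.2⟩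
      · exact ⟨T.sA _ _ ht ha, W.smul_mem _ haW⟩
    · intro h
      by_cases h1 : ∃ t : K, t • a = x
      · right
        obtain ⟨t, rfl⟩ := h1
        refine ⟨t, ?_, rfl⟩
        rintro rfl
        rw [zero_smul] at h
        exact T.zA h.1
      · left
        exact ⟨⟨h.1, h1⟩, h.2⟩
  · rw [Finset.disjoint_left]
    intro x hx hy
    simp only [Finset.mem_filter, Finset.mem_image, hY,
      Submodule.mem_span_singleton] at hx hy
    obtain ⟨t, _, rfl⟩ := hy
    exact hx.2.1.2 ⟨t, rfl⟩

theorem arith (d J M k g α : ℤ) (hd : 0 < d) (e1 : M * J = α * d)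
    (e2 : k * (J - d) + g * (M - d) = (α - d) * d) (e3 : k + g = d * d + 2 * d)
    (hJ : d < J) (hM : d < M) (hk : d < k) (hg : d < g) (hJ2 : J < d * d + d)
    (hM2 : M < d * d + d) : False := by
  obtain ⟨j, rfl⟩ : ∃ j, J = d + j := ⟨J - d, by ring⟩
  obtain ⟨m, rfl⟩ : ∃ m, M = d + m := ⟨M - d, by ring⟩
  obtain ⟨k', rfl⟩ : ∃ k', k = d + k' := ⟨k - d, by ring⟩
  obtain rfl : g = d * d + d - k' := by linarith
  have e : k' * j + (d * d - k') * m = j * m := by linarith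
  have h1 : 0 < k' * j * (d * d - m) :=
    mul_pos (mul_pos (by linarith) (by linarith)) (by linarith)
  have h2 : 0 < (d * d - k') * m * (d * d - j) :=
    mul_pos (mul_pos (by linarith) (by linarith)) (by linarith)
  have h3 : k' * j * (d * d - m) + (d * d - k') * m * (d * d - j)
    = d * d * (k' * j + (d * d - k') * m - j * m) := by ring
  rw [e] at h3
  simp at h3
  linarith

theorem Tri.plane (T : Tri K A B C) [FiniteDimensional K V] [Fintype K] [Fintype V]
    (h3 : Module.finrank K V = 3)
    (hA : Submodule.span K A = ⊤) (hB : Submodule.span K B = ⊤) (hC : Submodule.span K C = ⊤)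
    {a b c : V} (ha : a ∈ A) (hb : b ∈ B) (hc : c ∈ C) : False := by
  classical
  have TCA := T.swap2.swap
  have TBC := T.swap.swap2
  have hq : 1 < Fintype.card K := Fintype.one_lt_card
  obtain ⟨d, hd⟩ : ∃ d, Fintype.card K = d + 1 := ⟨Fintype.card K - 1, by omega⟩
  have hd0 : 0 < d := by omega
  have hd1 : Fintype.card K - 1 = d := by omega
  -- first count
  have c1 := count_lemma (K := K) A (Submodule.span K {a, c}) b (T.swap2.decomp h3 ha hc hb)
    (fun s hs => by rw [T.swap2.smulC ha hc hb hs, zero_smul])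
    (fun y hy hyb => by
      obtain ⟨t, rfl⟩ := Submodule.mem_span_singleton.1 hyb
      by_cases ht : t = 0
      · subst ht; rw [zero_smul] at hy; exact T.zA hy
      · exact T.dAB _ hy (T.sB _ _ ht hb))
  have c1' : ∑ x ∈ Finset.univ.filter (fun x => x ∈ Submodule.span K {a, c} ∧ x ≠ 0),
      (Finset.univ.filter fun v => v ∈ A ∧ v ∈ Submodule.span K {x, b}).card
      = NN K A a c * NN K A a b := by
    have : ∀ x ∈ Finset.univ.filter (fun x => x ∈ Submodule.span K {a, c} ∧ x ≠ 0),
      (Finset.univ.filter fun v => v ∈ A ∧ v ∈ Submodule.span K {x, b}).card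
        = if x ∈ A then NN K A a b else 0 := by
      intro x hx
      simp only [Finset.mem_filter, Finset.mem_univ, true_and] at hx
      split_ifs with hxA
      · exact T.const h3 ha hb hxA hb hc
      · have hxC : x ∈ C := by
          rcases T.cover x hx.2 with h | h | h
          · exact absurd h hxA
          · exact absurd hx.1 (T.swap2.notC ha hc h)
          · exact h
        rw [Finset.card_eq_zero, Finset.filter_eq_empty_iff]
        rintro v _ ⟨hv, hv2⟩
        exact TBC.swap.notC hxC hb hv hv2
    rw [Finset.sum_congr rfl this, ← Finset.sum_filter, Finset.sum_const, Finset.filter_filter,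
      smul_eq_mul]
    congr 1
    unfold NN
    congr 1
    ext x
    simp only [Finset.mem_filter, Finset.mem_univ, true_and]
    constructor
    · rintro ⟨h1, h2⟩; exact ⟨h2, h1.1⟩
    · rintro ⟨h1, h2⟩; exact ⟨⟨h2, fun h => T.zA (h ▸ h1)⟩, h1⟩
  -- second count
  obtain ⟨Y, hY⟩ : ∃ Y : Set V, ∀ v, v ∈ Y ↔ v ∈ A ∧ v ∉ Submodule.span K {a} :=
    ⟨{v | v ∈ A ∧ v ∉ Submodule.span K {a}}, fun _ => Iff.rfl⟩
  have c2 := count_lemma (K := K) Y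
    (Submodule.span K {b, c}) a (TBC.decomp h3 hb hc ha)
    (fun s hs => by rw [TBC.smulC hb hc ha hs, zero_smul])
    (fun y hy => ((hY y).1 hy).2)
  have r0 := T.remove ha Y hY ⊤ trivial
  have c2' : ∑ x ∈ Finset.univ.filter (fun x => x ∈ Submodule.span K {b, c} ∧ x ≠ 0),
      (Finset.univ.filter fun v => v ∈ Y ∧
        v ∈ Submodule.span K {x, a}).card
      = NN K B b c * (NN K A a b - d) + NN K C b c * (NN K A a c - d) := by
    have : ∀ x ∈ Finset.univ.filter (fun x => x ∈ Submodule.span K {b, c} ∧ x ≠ 0),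
      (Finset.univ.filter fun v => v ∈ Y ∧
        v ∈ Submodule.span K {x, a}).card
        = (if x ∈ B then NN K A a b - d else 0) + (if x ∈ C then NN K A a c - d else 0) := by
      intro x hx
      simp only [Finset.mem_filter, Finset.mem_univ, true_and] at hx
      have r := T.remove ha Y hY (Submodule.span K {x, a}) (Submodule.subset_span (by simp))
      rw [hd1] at r
      change _ = NN K A x a at r
      rw [NN_comm] at r
      rcases T.cover x hx.2 with h | h | h
      · exact absurd hx.1 (TBC.notC hb hc h)
      · rw [if_pos h, if_neg (T.dBC x h)]
        rw [T.const h3 ha hb ha h hc] at r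
        omega
      · rw [if_pos h, if_neg (fun h' => T.dBC x h' h)]
        rw [T.swap2.const h3 ha hc ha h hb] at r
        omega
    rw [Finset.sum_congr rfl this, Finset.sum_add_distrib, ← Finset.sum_filter,
      ← Finset.sum_filter, Finset.sum_const, Finset.sum_const, Finset.filter_filter,
      Finset.filter_filter, smul_eq_mul, smul_eq_mul]
    congr 2
    · unfold NN
      congr 1
      ext x
      simp only [Finset.mem_filter, Finset.mem_univ, true_and]
      constructor
      · rintro ⟨h1, h2⟩; exact ⟨h2, h1.1⟩
      · rintro ⟨h1, h2⟩; exact ⟨⟨h2, fun h => T.zB (h ▸ h1)⟩, h1⟩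
    · unfold NN
      congr 1
      ext x
      simp only [Finset.mem_filter, Finset.mem_univ, true_and]
      constructor
      · rintro ⟨h1, h2⟩; exact ⟨h2, h1.1⟩
      · rintro ⟨h1, h2⟩; exact ⟨⟨h2, fun h => T.zC (h ▸ h1)⟩, h1⟩
  rw [c1'] at c1
  rw [c2'] at c2
  simp only [Submodule.mem_top, and_true] at r0
  rw [hd1] at c1 c2 r0
  have t1 := T.total ha hb hc
  have t2 := T.swap2.total ha hc hb
  have t3 := TBC.total hb hc ha
  have s1 := T.strict h3 hA hC ha hb hc
  have s2 := T.swap2.strict h3 hA hB ha hc hb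
  have s3 := T.swap.strict h3 hB hC hb ha hc
  have s4 := TCA.strict h3 hC hB hc ha hb
  have s5 := TBC.strict h3 hB hA hb hc ha
  have s6 := TBC.swap.strict h3 hC hA hc hb ha
  rw [NN_comm] at s3 s4 s6
  rw [hd1] at s1 s2 s3 s4 s5 s6
  have hdd : Fintype.card K * Fintype.card K - 1 = d * d + 2 * d := by
    rw [hd]
    have : (d + 1) * (d + 1) = d * d + 2 * d + 1 := by ring
    omega
  rw [hdd] at t1 t2 t3
  generalize NN K A a b = J at *
  generalize NN K A a c = M at *
  generalize NN K B b c = k at *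
  generalize NN K C b c = g at *
  generalize NN K B a b = J' at *
  generalize NN K C a c = M' at *
  generalize (Finset.univ.filter fun v => v ∈ A).card = α at *
  generalize (Finset.univ.filter fun v => v ∈ Y).card = α' at *
  subst r0
  obtain ⟨j, rfl⟩ : ∃ j, J = d + j := ⟨J - d, by omega⟩
  obtain ⟨m, rfl⟩ : ∃ m, M = d + m := ⟨M - d, by omega⟩
  simp only [Nat.add_sub_cancel_left] at c2
  refine arith d (d + j) (d + m) k g (α' + d) (by exact_mod_cast hd0) (by exact_mod_cast c1)
    ?_ (by exact_mod_cast t3) (by exact_mod_cast s1) (by exact_mod_cast s2)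
    (by exact_mod_cast s5) (by exact_mod_cast s6) ?_ ?_
  · simp only [add_sub_cancel_left, add_sub_cancel_right]
    exact_mod_cast c2
  · have : d + j < d * d + d := by omega
    exact_mod_cast this
  · have : d + m < d * d + d := by omega
    exact_mod_cast this

theorem holds_all [Fintype K] (m : ℕ) : Holds K m := by
  induction m with
  | zero => intro V _ _ _ _ A B C h; omega
  | succ m ih =>
    intro V _ _ _ _ A B C hlt T hA hB hC
    have IH : Holds K (Module.finrank K V) := by
      intro V' _ _ _ _ A' B' C' h'
      exact ih V' A' B' C' (by omega)
    obtain ⟨a, ha, _⟩ := exists_not_mem hA bot_ne_top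
    obtain ⟨b, hb, _⟩ := exists_not_mem hB bot_ne_top
    obtain ⟨c, hc, _⟩ := exists_not_mem hC bot_ne_top
    have : Finite V := Module.finite_of_finite K
    have : Fintype V := Fintype.ofFinite V
    have hli := T.li ha hb hc
    rcases eq_top_or_exists_le_coatom (Submodule.span K (Set.range ![a, b, c])) with h | h
    · have h3 : Module.finrank K V = 3 := by
        have := finrank_span_eq_card hli
        rw [h, finrank_top] at this
        simpa using this
      exact T.plane h3 hA hB hC ha hb hc
    · obtain ⟨H, hH, hle⟩ := h
      have hmem : ∀ i, ![a, b, c] i ∈ H := fun i => hle (Submodule.subset_span ⟨i, rfl⟩)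
      have haH : a ∈ H := hmem 0
      have hbH : b ∈ H := hmem 1
      have hcH : c ∈ H := hmem 2
      have : Nontrivial H := by
        refine ⟨⟨a, haH⟩, 0, ?_⟩
        intro h
        have : a = 0 := congrArg Subtype.val h
        exact T.zA (this ▸ ha)
      refine IH H _ _ _ (Submodule.finrank_lt hH.1) (T.restrict H) ?_ ?_ ?_
      · by_contra hn
        exact T.noF IH hA hB hC hH ⟨a, ha, haH⟩ hn
      · by_contra hn
        exact T.swap.noF IH hB hA hC hH ⟨b, hb, hbH⟩ hn
      · by_contra hn
        exact T.swap2.swap.noF IH hC hA hB hH ⟨c, hc, hcH⟩ hn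

end tri

section many
variable {K V S : Type} [Field K] [AddCommGroup V] [Module K V]

/-- A colouring of vectors without rainbow lines. -/
structure RF (K : Type) {V S : Type} [Field K] [AddCommGroup V] [Module K V] (f : V → S) :
    Prop where
  sm : ∀ (t : K) (v : V), t ≠ 0 → f (t • v) = f v
  rf : ∀ x y : V, x ≠ 0 → y ≠ 0 → f x ≠ f y → f (x + y) = f x ∨ f (x + y) = f y

/-- The span of the vectors whose colour is in `T`. -/
def Sp (K : Type) {V S : Type} [Field K] [AddCommGroup V] [Module K V] (f : V → S) (T : Set S) :
    Submodule K V := Submodule.span K {v | v ≠ 0 ∧ f v ∈ T}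

theorem RF.union {f : V → S} (R : RF K f) {T1 T2 : Set S} (hd : ∀ s ∈ T1, s ∉ T2)
    (h1 : Sp K f T1 ≠ ⊤) (h2 : Sp K f T2 ≠ ⊤) : Sp K f (T1 ∪ T2) ≠ ⊤ := by
  have m1 : ∀ v, v ≠ 0 → f v ∈ T1 → v ∈ Sp K f T1 := fun v h h' => Submodule.subset_span ⟨h, h'⟩
  have m2 : ∀ v, v ≠ 0 → f v ∈ T2 → v ∈ Sp K f T2 := fun v h h' => Submodule.subset_span ⟨h, h'⟩
  by_cases ha : ∀ v, v ≠ 0 → f v ∈ T1 → v ∈ Sp K f T2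
  · intro h
    apply h2
    rw [eq_top_iff, ← h]
    apply Submodule.span_le.2
    rintro v ⟨hv, hv1 | hv2⟩
    · exact ha v hv hv1
    · exact m2 v hv hv2
  by_cases hb : ∀ v, v ≠ 0 → f v ∈ T2 → v ∈ Sp K f T1
  · intro h
    apply h1
    rw [eq_top_iff, ← h]
    apply Submodule.span_le.2
    rintro v ⟨hv, hv1 | hv2⟩
    · exact m1 v hv hv1
    · exact hb v hv hv2
  push Not at ha hb
  obtain ⟨a, a0, a1, a2⟩ := ha
  obtain ⟨b, b0, b2, b1⟩ := hb
  exfalso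
  have hn1 : a + b ∉ Sp K f T1 := fun h => b1 (by simpa using Submodule.sub_mem _ h (m1 a a0 a1))
  have hn2 : a + b ∉ Sp K f T2 := fun h => a2 (by simpa using Submodule.sub_mem _ h (m2 b b0 b2))
  have h0 : a + b ≠ 0 := fun h => hn1 (h ▸ Submodule.zero_mem _)
  rcases R.rf a b a0 b0 (fun h => hd _ a1 (h ▸ b2)) with h | h
  · exact hn1 (m1 _ h0 (h ▸ a1))
  · exact hn2 (m2 _ h0 (h ▸ b2))

theorem RF.finset [Nontrivial V] {f : V → S} (R : RF K f) (T : Finset S)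
    (hT : ∀ s ∈ T, Sp K f {s} ≠ ⊤) : Sp K f (T : Set S) ≠ ⊤ := by
  classical
  induction T using Finset.induction_on with
  | empty =>
    have : Sp K f ((∅ : Finset S) : Set S) = ⊥ := by
      unfold Sp
      simp
    rw [this]
    exact bot_ne_top
  | insert s T hs ih =>
    rw [Finset.coe_insert, Set.insert_eq]
    apply R.union
    · rintro x rfl
      exact_mod_cast hs
    · exact hT s (Finset.mem_insert_self _ _)
    · exact ih (fun x hx => hT x (Finset.mem_insert_of_mem hx))

theorem RF.three [Fintype K] [FiniteDimensional K V] [Nontrivial V] {f : V → S} (R : RF K f)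
    {i j k : S} (hij : i ≠ j) (hik : i ≠ k) (hjk : j ≠ k) (hi : Sp K f {i} = ⊤)
    (hj : Sp K f {j} = ⊤) (hk : Sp K f {k} = ⊤) : False := by
  have T : Tri K {v : V | v ≠ 0 ∧ f v ∈ ({i} : Set S)} {v : V | v ≠ 0 ∧ f v ∈ ({j} : Set S)}
      {v : V | v ≠ 0 ∧ f v ∉ ({i, j} : Set S)} :=
    { zA := fun h => h.1 rfl
      zB := fun h => h.1 rfl
      zC := fun h => h.1 rfl
      dAB := by
        rintro v ⟨_, h1⟩ ⟨_, h2⟩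
        simp only [Set.mem_singleton_iff] at h1 h2
        exact hij (h1.symm.trans h2)
      dAC := by
        rintro v ⟨_, h1⟩ ⟨_, h2⟩
        exact h2 (Or.inl h1)
      dBC := by
        rintro v ⟨_, h1⟩ ⟨_, h2⟩
        exact h2 (Or.inr h1)
      cover := by
        intro v hv
        by_cases h1 : f v = i
        · exact Or.inl ⟨hv, h1⟩
        by_cases h2 : f v = j
        · exact Or.inr (Or.inl ⟨hv, h2⟩)
        · refine Or.inr (Or.inr ⟨hv, ?_⟩)
          simp [h1, h2]
      sA := fun t v ht hv => ⟨smul_ne_zero ht hv.1, by rw [R.sm t v ht]; exact hv.2⟩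
      sB := fun t v ht hv => ⟨smul_ne_zero ht hv.1, by rw [R.sm t v ht]; exact hv.2⟩
      sC := fun t v ht hv => ⟨smul_ne_zero ht hv.1, by rw [R.sm t v ht]; exact hv.2⟩
      rain := by
        rintro x ⟨hx, hxi⟩ y ⟨hy, hyj⟩ ⟨_, h⟩
        simp only [Set.mem_singleton_iff] at hxi hyj
        apply h
        rcases R.rf x y hx hy (by rw [hxi, hyj]; exact hij) with h | h
        · left; rw [h, hxi]
        · right; rw [h, hyj]; rfl }
  refine holds_all (K := K) (Module.finrank K V + 1) V _ _ _ (Nat.lt_succ_self _) T hi hj ?_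
  rw [eq_top_iff, ← hk]
  apply Submodule.span_mono
  rintro v ⟨hv, hv2⟩
  refine ⟨hv, ?_⟩
  simp only [Set.mem_singleton_iff] at hv2
  rw [hv2]
  simp [hik.symm, hjk.symm]

theorem RF.key [Fintype K] [FiniteDimensional K V] [Nontrivial V] {f : V → S} (R : RF K f) :
    ∃ U : Submodule K V, U ≠ ⊤ ∧ ∃ s1 s2 : S, ∀ v, v ∉ U → f v = s1 ∨ f v = s2 := by
  classical
  have : Finite V := Module.finite_of_finite K
  have : Fintype V := Fintype.ofFinite V
  let N : Finset S := (Finset.univ.image f).filter fun s => Sp K f {s} ≠ ⊤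
  have hN : Sp K f (N : Set S) ≠ ⊤ := R.finset N (fun s hs => (Finset.mem_filter.1 hs).2)
  have hout : ∀ v, v ∉ Sp K f (N : Set S) → Sp K f {f v} = ⊤ := by
    intro v hv
    by_contra h
    apply hv
    apply Submodule.subset_span
    refine ⟨fun h0 => hv (h0 ▸ Submodule.zero_mem _), ?_⟩
    simp only [N, Finset.coe_filter, Set.mem_setOf_eq]
    exact ⟨Finset.mem_image_of_mem _ (Finset.mem_univ _), h⟩
  refine ⟨_, hN, ?_⟩
  obtain ⟨v1, h1⟩ : ∃ v, v ∉ Sp K f (N : Set S) := by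
    by_contra! h
    exact hN (eq_top_iff.2 fun v _ => h v)
  by_cases h2 : ∃ v, v ∉ Sp K f (N : Set S) ∧ f v ≠ f v1
  · obtain ⟨v2, h2, hne⟩ := h2
    refine ⟨f v1, f v2, fun v hv => ?_⟩
    by_contra! h
    exact R.three hne.symm h.1.symm h.2.symm (hout _ h1) (hout _ h2) (hout _ hv)
  · push Not at h2
    exact ⟨f v1, f v1, fun v hv => Or.inl (h2 v hv)⟩

end many

open Classical in
/-- The colouring of vectors induced by a colouring of points. -/
noncomputable def vcol {K : Type} [Field K] {n : ℕ} {S : Type} (c : ProjPoint K n → S)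
    (v : Fin n → K) : Option S :=
  if h : v ≠ 0 then some (c ⟨Submodule.span K {v}, finrank_span_singleton h⟩) else none

theorem vcol_eq {K : Type} [Field K] {n : ℕ} {S : Type} (c : ProjPoint K n → S)
    {v : Fin n → K} (h : v ≠ 0) :
    vcol c v = some (c ⟨Submodule.span K {v}, finrank_span_singleton h⟩) := by
  unfold vcol
  rw [dif_pos h]

theorem vcol_RF {K : Type} [Field K] [Fintype K] {n : ℕ} {S : Type} (c : ProjPoint K n → S)
    (hline : ∀ L : Submodule K (Fin n → K), Module.finrank K L = 2 →
      {s : S | ∃ P : ProjPoint K n, P.1 ≤ L ∧ c P = s}.ncard ≤ 2) : RF K (vcol c) := by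
  have sm : ∀ (t : K) (v : Fin n → K), t ≠ 0 → vcol c (t • v) = vcol c v := by
    intro t v ht
    by_cases hv : v = 0
    · rw [hv, smul_zero]
    · rw [vcol_eq c hv, vcol_eq c (smul_ne_zero ht hv)]
      congr 2
      apply Subtype.ext
      exact Submodule.span_singleton_smul_eq (IsUnit.mk0 t ht) v
  refine ⟨sm, ?_⟩
  intro x y hx hy hne
  have hli : LinearIndependent K ![x, y] := by
    rw [LinearIndependent.pair_iff' hx]
    intro t e
    apply hne
    have ht : t ≠ 0 := by
      rintro rfl
      rw [zero_smul] at e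
      exact hy e.symm
    rw [← e, sm t x ht]
  have hxy : x + y ≠ 0 := by
    intro h
    have := (LinearIndependent.pair_iff.1 hli) 1 1 (by simpa using h)
    simp at this
  have h2 : Module.finrank K (Submodule.span K {x, y}) = 2 := by
    have := finrank_span_eq_card hli
    rw [Matrix.range_cons_cons_empty] at this
    simpa using this
  have hL := hline _ h2
  rw [vcol_eq c hx, vcol_eq c hy] at hne ⊢
  rw [vcol_eq c hxy]
  by_contra! hcon
  simp only [ne_eq, Option.some.injEq] at hne hcon
  have : Finite (ProjPoint K n) := by unfold ProjPoint; infer_instance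
  have hfin : {s : S | ∃ P : ProjPoint K n, P.1 ≤ Submodule.span K {x, y} ∧ c P = s}.Finite := by
    refine (Set.finite_range c).subset ?_
    rintro s ⟨P, _, rfl⟩
    exact ⟨P, rfl⟩
  have hxm : x ∈ Submodule.span K {x, y} := Submodule.subset_span (by simp)
  have hym : y ∈ Submodule.span K {x, y} := Submodule.subset_span (by simp)
  have hlt := (Set.two_lt_ncard_iff hfin).2 ⟨_, _, _,
    ⟨⟨Submodule.span K {x}, finrank_span_singleton hx⟩,
      (Submodule.span_singleton_le_iff_mem _ _).2 hxm, rfl⟩,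
    ⟨⟨Submodule.span K {y}, finrank_span_singleton hy⟩,
      (Submodule.span_singleton_le_iff_mem _ _).2 hym, rfl⟩,
    ⟨⟨Submodule.span K {x + y}, finrank_span_singleton hxy⟩,
      (Submodule.span_singleton_le_iff_mem _ _).2 (Submodule.add_mem _ hxm hym), rfl⟩,
    hne, fun h => hcon.1 h.symm, fun h => hcon.2 h.symm⟩
  omega

theorem step {K : Type} [Field K] [Fintype K] {n : ℕ} {S : Type} (c : ProjPoint K n → S)
    (R : RF K (vcol c)) (W : Submodule K (Fin n → K)) (hW : W ≠ ⊥) :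
    ∃ U < W, {s : S | ∃ P : ProjPoint K n, P.1 ≤ W ∧ ¬ P.1 ≤ U ∧ c P = s}.ncard ≤ 2 := by
  have : Nontrivial W := Submodule.nontrivial_iff_ne_bot.2 hW
  have R' : RF K (fun w : W => vcol c (w : Fin n → K)) :=
    ⟨fun t v ht => R.sm t v ht,
     fun x y hx hy h => R.rf x y (by simpa using hx) (by simpa using hy) h⟩
  obtain ⟨U, hU, s1, s2, h⟩ := R'.key
  refine ⟨U.map W.subtype, ?_, ?_⟩
  · refine lt_of_le_of_ne (Submodule.map_subtype_le W U) ?_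
    intro e
    apply hU
    apply Submodule.map_injective_of_injective W.subtype_injective
    rw [e]; simp
  · have hsub : some '' {s : S | ∃ P : ProjPoint K n, P.1 ≤ W ∧ ¬ P.1 ≤ U.map W.subtype ∧ c P = s}
        ⊆ {s1, s2} := by
      rintro _ ⟨s, ⟨P, hPW, hPU, rfl⟩, rfl⟩
      obtain ⟨v, hvP, hvU⟩ := SetLike.not_le_iff_exists.1 hPU
      have hv0 : v ≠ 0 := fun h => hvU (h ▸ Submodule.zero_mem _)
      have hP : P = ⟨Submodule.span K {v}, finrank_span_singleton hv0⟩ := by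
        apply Subtype.ext
        symm
        apply Submodule.eq_of_le_of_finrank_eq
        · exact (Submodule.span_singleton_le_iff_mem _ _).2 hvP
        · rw [P.2]; exact finrank_span_singleton hv0
      have h1 := h ⟨v, hPW hvP⟩ (fun h' => hvU ⟨_, h', rfl⟩)
      simp only at h1
      rw [vcol_eq c hv0, ← hP] at h1
      exact h1
    have h1 := Set.ncard_le_ncard hsub (Set.toFinite _)
    rw [Set.ncard_image_of_injective _ (Option.some_injective S)] at h1
    exact h1.trans ((Set.ncard_insert_le _ _).trans (by rw [Set.ncard_singleton]))

theorem chain {K : Type} [Field K] [Fintype K] {n : ℕ} {S : Type} (c : ProjPoint K n → S)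
    (R : RF K (vcol c)) (m : ℕ) : ∀ X : Submodule K (Fin n → K), Module.finrank K X ≤ m →
    ∃ (k : ℕ) (W : ℕ → Submodule K (Fin n → K)),
      W 0 = ⊥ ∧ W k = X ∧ (∀ i < k, W i ≤ W (i + 1)) ∧
      ∀ i < k, {s : S | ∃ P : ProjPoint K n,
        P.1 ≤ W (i + 1) ∧ ¬ P.1 ≤ W i ∧ c P = s}.ncard ≤ 2 := by
  induction m with
  | zero =>
    intro X hX
    have : X = ⊥ := Submodule.finrank_eq_zero.1 (by omega)
    exact ⟨0, fun _ => ⊥, rfl, this.symm, by omega, by omega⟩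
  | succ m ih =>
    intro X hX
    by_cases h0 : X = ⊥
    · exact ⟨0, fun _ => ⊥, rfl, h0.symm, by omega, by omega⟩
    obtain ⟨U, hU, hc⟩ := step c R X h0
    obtain ⟨k, W, w0, wk, wm, wc⟩ := ih U (by
      have := Submodule.finrank_lt_finrank_of_lt hU
      omega)
    refine ⟨k + 1, fun i => if i ≤ k then W i else X, by simp [w0], by simp, ?_, ?_⟩
    · intro i hi
      by_cases hik : i < k
      · simp only [if_pos hik.le, if_pos (show i + 1 ≤ k from hik)]
        exact wm i hik
      · obtain rfl : i = k := by omega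
        simp [wk, hU.le]
    · intro i hi
      by_cases hik : i < k
      · simp only [if_pos hik.le, if_pos (show i + 1 ≤ k from hik)]
        exact wc i hik
      · obtain rfl : i = k := by omega
        simp only [le_refl, if_true, if_neg (show ¬ i + 1 ≤ i by omega), wk]
        exact hc


/-- If `c` is a colouring of the points of `𝔽_qⁿ` such that at most two colours appear
among the points of each two-dimensional subspace, then there is a chain of subspaces
`{0} = W₀ ⊆ W₁ ⊆ … ⊆ W_k = 𝔽_qⁿ` such that at most two colours appear among the points
contained in `W_{i+1}` but not in `W_i`, for each `i < k`. -/
theorem stmt5 {K : Type} [Field K] [Fintype K] {n : ℕ} {S : Type} (c : ProjPoint K n → S)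
    (hline : ∀ L : Submodule K (Fin n → K), Module.finrank K L = 2 →
      {s : S | ∃ P : ProjPoint K n, P.1 ≤ L ∧ c P = s}.ncard ≤ 2) :
    ∃ (k : ℕ) (W : ℕ → Submodule K (Fin n → K)),
      W 0 = ⊥ ∧ W k = ⊤ ∧ (∀ i < k, W i ≤ W (i + 1)) ∧
      ∀ i < k, {s : S | ∃ P : ProjPoint K n,
        P.1 ≤ W (i + 1) ∧ ¬ P.1 ≤ W i ∧ c P = s}.ncard ≤ 2 := by
  exact chain c (vcol_RF c hline) _ ⊤ le_rfl
end

section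
/- Let n ≥ 2 and let c be a colouring of the points of 𝔽₃ⁿ with two colours such that no two-dimensional linear subspace of 𝔽₃ⁿ contains exactly two points of each colour (every two-dimensional subspace of 𝔽₃ⁿ contains exactly four points). Then there is a linear subspace of 𝔽₃ⁿ of dimension at least ⌈n/2⌉ all of whose points receive the same colour. Moreover, this is best possible: there exists a two-colouring of the points of 𝔽₃ⁿ in which no two-dimensional subspace contains exactly two points of each colour and every subspace all of whose points have the same colour has dimension at most ⌈n/2⌉. -/
/-- A point of `𝔽₃ⁿ`: a one-dimensional linear subspace. -/
def ProjPoint3 (n : ℕ) : Type :=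
  {P : Submodule (ZMod 3) (Fin n → ZMod 3) // Module.finrank (ZMod 3) P = 1}

/-- A two-colouring of the points of `𝔽₃ⁿ` is *balanced-line-free* if no
two-dimensional subspace contains exactly two points of each colour. -/
def BalancedLineFree {n : ℕ} (c : ProjPoint3 n → Bool) : Prop :=
  ¬ ∃ L : Submodule (ZMod 3) (Fin n → ZMod 3), Module.finrank (ZMod 3) L = 2 ∧
    {P : ProjPoint3 n | P.1 ≤ L ∧ c P = true}.ncard = 2 ∧
    {P : ProjPoint3 n | P.1 ≤ L ∧ c P = false}.ncard = 2

lemma zmod3_one_ne : ¬ (1 : ZMod 3) = 0 := by decide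

lemma zmod3_cases : ∀ c : ZMod 3, c = 0 ∨ c = 1 ∨ c = -1 := by decide

/-- Four Boolean values that are not split two against two. -/
def NB4 (a b c d : Bool) : Prop :=
  (a = b → c = d → a = c) ∧ (a = c → b = d → a = b) ∧ (a = d → b = c → a = b)

/-- Even functions with no balanced line. -/
structure Good {V : Type*} [AddCommGroup V] (f : V → Bool) : Prop where
  even : ∀ x, f (-x) = f x
  nb : ∀ x y, NB4 (f x) (f y) (f (x + y)) (f (x - y))

/-- `s` dominates `p`. -/
def Dom {V : Type*} [AddCommGroup V] (f : V → Bool) (s p : V) : Prop :=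
  f s ≠ f p ∧ f (s + p) = f s ∧ f (s - p) = f s

section
set_option linter.unusedSectionVars false
variable {V : Type*} [AddCommGroup V] [Module (ZMod 3) V] {f : V → Bool}

lemma eq3 (w : V) {u v : V} (h : u - v = w + w + w) : u = v := by
  have h3 : w + w + w = (1 + 1 + 1 : ZMod 3) • w := by module
  have h0 : (1 + 1 + 1 : ZMod 3) = 0 := by decide
  rw [h0, zero_smul] at h3
  exact sub_eq_zero.1 (h.trans h3)

lemma Good.nb' (hf : Good f) (x y : V) {u v : V} (hu : u = x + y) (hv : v = x - y) :
    NB4 (f x) (f y) (f u) (f v) := by subst hu hv; exact hf.nb x y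

lemma Good.even' (hf : Good f) {x y : V} (h : x = -y) : f x = f y := by
  subst h; exact hf.even y

lemma dom_or (hf : Good f) {x y : V} (h : f x ≠ f y) : Dom f x y ∨ Dom f y x := by
  have h1 := hf.nb x y
  have h2 := hf.even' (x := y - x) (y := x - y) (by abel)
  unfold Dom
  rw [add_comm y x, h2]
  unfold NB4 at h1
  have hbool := fun z => Bool.eq_false_or_eq_true (f z)
  grind

lemma not_dom_both (hf : Good f) {x y : V} (h : Dom f x y) : ¬ Dom f y x := by
  have h2 := hf.even' (x := y - x) (y := x - y) (by abel)
  unfold Dom at *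
  rw [add_comm y x, h2]
  have hbool := fun z => Bool.eq_false_or_eq_true (f z)
  grind

lemma dom_neg (hf : Good f) {x y : V} (h : Dom f x y) : Dom f x (-y) := by
  have h2 := hf.even y
  unfold Dom at *
  rw [h2, sub_neg_eq_add, ← sub_eq_add_neg]
  tauto

/-- If `s > p > q` then `s + q` dominates `p`, and has the colour of `s`. -/
lemma chain3 (hf : Good f) {s p q : V} (h1 : Dom f s p) (h2 : Dom f p q) :
    f (s + q) = f s ∧ Dom f (s + q) p := by
  have a1 := hf.nb' s (p + q) (u := s + p + q) (v := s - p - q) (by abel) (by abel)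
  have a2 := hf.nb' s (p - q) (u := s + p - q) (v := s - p + q) (by abel) (by abel)
  have a3 := hf.nb' (s + p) q (u := s + p + q) (v := s + p - q) (by abel) (by abel)
  have a4 := hf.nb' s q (u := s + q) (v := s - q) (by abel) (by abel)
  have a5 := hf.nb' (s + q) p (u := s + p + q) (v := s - p + q) (by abel) (by abel)
  have a6 := hf.nb' (s - q) p (u := s + p - q) (v := s - p - q) (by abel) (by abel)
  unfold Dom at *
  rw [show s + q + p = s + p + q by abel, show s + q - p = s - p + q by abel]
  unfold NB4 at *
  have hbool := fun z => Bool.eq_false_or_eq_true (f z)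
  grind

/-- If `s > p`, `s > r` and `p`, `r`, `p + r` have the same colour then `s > p + r`. -/
lemma dom_add (hf : Good f) {s p r : V} (h1 : Dom f s p) (h2 : Dom f s r)
    (h3 : f (p + r) = f p) : Dom f s (p + r) := by
  have a1 := hf.nb' (s + p) r (u := s + p + r) (v := s + p - r) (by abel) (by abel)
  have a2 := hf.nb' (s + r) p (u := s + p + r) (v := s - p + r) (by abel) (by abel)
  have a3 := hf.nb' (s - p) r (u := s - p + r) (v := s - p - r) (by abel) (by abel)
  have a4 := hf.nb' s (p - r) (u := s + p - r) (v := s - p + r) (by abel) (by abel)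
  have a5 := hf.nb' (s + p) (s + r) (u := -(s - p - r)) (v := p - r)
    (eq3 (-s) (by abel)) (by abel)
  rw [hf.even] at a5
  unfold Dom at *
  rw [← add_assoc, ← sub_sub]
  unfold NB4 at *
  have hbool := fun z => Bool.eq_false_or_eq_true (f z)
  grind

/-- There is no four-cycle of domination. -/
lemma no_cycle4 (hf : Good f) {p q r s : V} (h1 : Dom f p q) (h2 : Dom f q r)
    (h3 : Dom f r s) (h4 : Dom f s p) : False := by
  obtain ⟨a1, b1⟩ := chain3 hf h1 h2
  obtain ⟨a2, b2⟩ := chain3 hf h2 h3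
  obtain ⟨a3, b3⟩ := chain3 hf h3 h4
  obtain ⟨a4, b4⟩ := chain3 hf h4 h1
  rw [add_comm r p] at a3 b3
  rw [add_comm s q] at a4 b4
  have c1 := dom_add hf b4 b2 a1
  have c2 := dom_add hf b1 b3 a2
  exact not_dom_both hf c1 c2

lemma exists_top [Finite V] [Nontrivial V] (hf : Good f) :
    ∃ p : V, p ≠ 0 ∧ ∀ s, ¬ Dom f s p := by
  classical
  obtain ⟨x0, hx0⟩ := exists_ne (0 : V)
  obtain ⟨p, hp, hmax⟩ := Set.exists_max_image {x : V | x ≠ 0}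
    (fun x => {q : V | Dom f x q}.ncard) (Set.toFinite _) ⟨x0, hx0⟩
  have nz : ∀ s t, Dom f s t → s ≠ 0 := by
    rintro s t h rfl
    have := hf.even t
    unfold Dom at h
    simp only [zero_add] at h
    exact h.1 h.2.1.symm
  by_cases h : ∃ s, Dom f s p
  · obtain ⟨s, hs⟩ := h
    refine ⟨s, nz _ _ hs, fun r hr => ?_⟩
    have := hmax r (nz _ _ hr)
    refine absurd this (not_le.mpr (Set.ncard_lt_ncard ?_ (Set.toFinite _)))
    refine ⟨fun q hq => ?_, fun hle => not_dom_both hf hs (hle hr)⟩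
    have hne : f r ≠ f q := by
      have e1 := hr.1
      have e2 := hs.1
      have e3 := hq.1
      have hbool := fun z => Bool.eq_false_or_eq_true (f z)
      grind
    rcases dom_or hf hne with h | h
    · exact h
    · exact (no_cycle4 hf hq h hr hs).elim
  · exact ⟨p, hp, fun s hs => h ⟨s, hs⟩⟩

lemma exists_hyper [Finite V] [Nontrivial V] (hf : Good f) :
    ∃ φ : V →ₗ[ZMod 3] ZMod 3, φ ≠ 0 ∧ ∃ b, ∀ x, φ x ≠ 0 → f x = b := by
  have : Fact (Nat.Prime 3) := ⟨Nat.prime_three⟩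
  obtain ⟨p, hp0, hp⟩ := exists_top hf
  have key : ∀ x ∈ Submodule.span (ZMod 3) {x | f x ≠ f p},
      x = 0 ∨ f x ≠ f p ∨ ∃ a b, f a ≠ f p ∧ f b ≠ f p ∧ x = a + b := by
    have red : ∀ a b, f a ≠ f p → f b ≠ f p → f (a + b) ≠ f p ∨ f (a - b) ≠ f p := by
      intro a b ha hb
      have := hf.nb a b
      unfold NB4 at this
      have hbool := fun z => Bool.eq_false_or_eq_true (f z)
      grind
    -- the sum of three elements
    have add3 : ∀ a b c, f a ≠ f p → f b ≠ f p → f c ≠ f p →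
        ∃ a' b', f a' ≠ f p ∧ f b' ≠ f p ∧ a + b + c = a' + b' := by
      intro a b c ha hb hc
      by_cases h1 : f (a + b) ≠ f p
      · exact ⟨_, _, h1, hc, rfl⟩
      by_cases h2 : f (c + b) ≠ f p
      · exact ⟨_, _, ha, h2, by abel⟩
      refine ⟨a - b, c - b, (red a b ha hb).resolve_left h1, (red c b hc hb).resolve_left h2, ?_⟩
      exact eq3 b (by abel)
    have step : ∀ x y, f x ≠ f p →
        (y = 0 ∨ f y ≠ f p ∨ ∃ a b, f a ≠ f p ∧ f b ≠ f p ∧ y = a + b) →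
        (x + y = 0 ∨ f (x + y) ≠ f p ∨ ∃ a b, f a ≠ f p ∧ f b ≠ f p ∧ x + y = a + b) := by
      rintro x y hx (rfl | hy | ⟨a, b, ha, hb, rfl⟩)
      · right; left; simpa using hx
      · exact Or.inr (Or.inr ⟨x, y, hx, hy, rfl⟩)
      · rw [← add_assoc]
        exact Or.inr (Or.inr (add3 x a b hx ha hb))
    intro x hx
    induction hx using Submodule.span_induction with
    | mem x h => exact Or.inr (Or.inl h)
    | zero => exact Or.inl rfl
    | add x y _ _ hx hy =>
      rcases hx with rfl | hx | ⟨a, b, ha, hb, rfl⟩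
      · simpa using hy
      · exact step x y hx hy
      · rw [add_assoc]
        exact step _ _ ha (step _ _ hb hy)
    | smul c x _ hx =>
      have hc : c = 0 ∨ c = 1 ∨ c = -1 := zmod3_cases c
      rcases hc with rfl | rfl | rfl
      · left; simp
      · simpa using hx
      · rcases hx with rfl | hx | ⟨a, b, ha, hb, rfl⟩
        · left; simp
        · right; left; simpa [hf.even] using hx
        · right; right
          refine ⟨-a, -b, by rwa [hf.even], by rwa [hf.even], ?_⟩
          simp
  have hnot : p ∉ Submodule.span (ZMod 3) {x | f x ≠ f p} := by
    intro h
    rcases key p h with h | h | ⟨a, b, ha, hb, hab⟩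
    · exact hp0 h
    · exact h rfl
    · have h1 : Dom f p a := (dom_or hf ha).resolve_left (hp a)
      have : p - a = b := by rw [hab]; abel
      have h2 := h1.2.2
      rw [this] at h2
      exact hb h2
  obtain ⟨φ, h1, h2⟩ := Submodule.exists_le_ker_of_notMem hnot
  refine ⟨φ, fun h => h1 (by simp [h]), f p, fun x hx => ?_⟩
  by_contra hne
  exact hx (h2 (Submodule.subset_span hne))

end

lemma exists_mono (n : ℕ) : ∀ (V : Type) [AddCommGroup V] [Module (ZMod 3) V] [Finite V]
    (f : V → Bool) (_ : Good f) (_ : Module.finrank (ZMod 3) V = n),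
    ∃ A : Bool → Submodule (ZMod 3) V, (∀ b, ∀ x ∈ A b, x ≠ 0 → f x = b) ∧
      n ≤ Module.finrank (ZMod 3) (A true) + Module.finrank (ZMod 3) (A false) := by
  have : Fact (Nat.Prime 3) := ⟨Nat.prime_three⟩
  induction n with
  | zero =>
    intro V _ _ _ f hf hn
    exact ⟨fun _ => ⊥, fun b x hx h0 => absurd (by simpa using hx) h0, Nat.zero_le _⟩
  | succ n ih =>
    intro V _ _ _ f hf hn
    have : Nontrivial V := Module.nontrivial_of_finrank_pos (R := ZMod 3) (by omega)
    obtain ⟨φ, hφ, b, hb⟩ := exists_hyper hf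
    obtain ⟨v, hv⟩ : ∃ v, φ v ≠ 0 := by
      by_contra! h
      exact hφ (LinearMap.ext h)
    have hk : Module.finrank (ZMod 3) (LinearMap.ker φ) = n := by
      have := Module.Dual.finrank_ker_add_one_of_ne_zero (f := φ) hφ
      omega
    obtain ⟨A, hA, hd⟩ := ih (LinearMap.ker φ) (fun x => f x)
      ⟨fun x => hf.even x, fun x y => hf.nb x y⟩ hk
    let B : Bool → Submodule (ZMod 3) V := fun i => (A i).map (LinearMap.ker φ).subtype
    have hB : ∀ i, ∀ x ∈ B i, φ x = 0 ∧ (x ≠ 0 → f x = i) := by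
      rintro i x ⟨y, hy, rfl⟩
      refine ⟨y.2, fun h => hA i y hy ?_⟩
      rintro rfl
      simp at h
    have hBd : ∀ i, Module.finrank (ZMod 3) (B i) = Module.finrank (ZMod 3) (A i) := fun i =>
      Submodule.finrank_map_subtype_eq _ _
    let C : Bool → Submodule (ZMod 3) V := fun i =>
      if i = b then B i ⊔ Submodule.span (ZMod 3) {v} else B i
    have hlt : Module.finrank (ZMod 3) (B b) <
        Module.finrank (ZMod 3) ↥(B b ⊔ Submodule.span (ZMod 3) {v}) := by
      apply Submodule.finrank_lt_finrank_of_lt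
      refine lt_of_le_of_ne le_sup_left fun h => hv (hB b v ?_).1
      rw [h]
      exact Submodule.mem_sup_right (Submodule.mem_span_singleton_self v)
    refine ⟨C, ?_, ?_⟩
    · intro i x hx hx0
      by_cases hi : i = b
      · subst hi
        simp only [C, if_true] at hx
        obtain ⟨y, hy, z, hz, rfl⟩ := Submodule.mem_sup.1 hx
        obtain ⟨t, rfl⟩ := Submodule.mem_span_singleton.1 hz
        by_cases ht : t = 0
        · subst ht
          simp only [zero_smul, add_zero] at hx0 ⊢
          exact (hB i y hy).2 hx0
        · apply hb
          simp [(hB i y hy).1, ht, hv]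
      · simp only [C, if_neg hi] at hx
        exact (hB i x hx).2 hx0
    · have e1 := hBd true
      have e2 := hBd false
      cases b
      · change _ ≤ Module.finrank (ZMod 3) (B true) +
          Module.finrank (ZMod 3) ↥(B false ⊔ Submodule.span (ZMod 3) {v})
        omega
      · change _ ≤ Module.finrank (ZMod 3) ↥(B true ⊔ Submodule.span (ZMod 3) {v}) +
          Module.finrank (ZMod 3) (B false)
        omega

section translation
variable {n : ℕ}

/-- The point spanned by a nonzero vector. -/
def mkPt (x : Fin n → ZMod 3) (hx : x ≠ 0) : ProjPoint3 n :=
  haveI : Fact (Nat.Prime 3) := ⟨Nat.prime_three⟩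
  ⟨Submodule.span (ZMod 3) {x}, finrank_span_singleton hx⟩

open Classical in
/-- The colouring of vectors. -/
noncomputable def vecCol (c : ProjPoint3 n → Bool) (x : Fin n → ZMod 3) : Bool :=
  if hx : x ≠ 0 then c (mkPt x hx) else true

lemma mkPt_eq_iff {x y : Fin n → ZMod 3} (hx : x ≠ 0) (hy : y ≠ 0) :
    mkPt x hx = mkPt y hy ↔ x = y ∨ x = -y := by
  constructor
  · intro h
    have h1 : x ∈ Submodule.span (ZMod 3) {y} := by
      have : Submodule.span (ZMod 3) {x} = Submodule.span (ZMod 3) {y} := congrArg Subtype.val h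
      rw [← this]
      exact Submodule.mem_span_singleton_self x
    obtain ⟨t, rfl⟩ := Submodule.mem_span_singleton.1 h1
    have hc : t = 0 ∨ t = 1 ∨ t = -1 := zmod3_cases t
    rcases hc with rfl | rfl | rfl
    · simp at hx
    · simp
    · simp
  · rintro (rfl | rfl)
    · rfl
    · apply Subtype.ext
      simp [mkPt, ← Set.neg_singleton, Submodule.span_neg]

lemma exists_mkPt (P : ProjPoint3 n) : ∃ x hx, P = mkPt x hx := by
  have : Fact (Nat.Prime 3) := ⟨Nat.prime_three⟩
  obtain ⟨⟨v, hv⟩, h0, h⟩ := finrank_eq_one_iff'.1 P.2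
  have h0' : v ≠ 0 := fun h => h0 (Subtype.ext h)
  refine ⟨v, h0', Subtype.ext (le_antisymm ?_ ?_)⟩
  · intro w hw
    obtain ⟨t, ht⟩ := h ⟨w, hw⟩
    exact Submodule.mem_span_singleton.2 ⟨t, congrArg Subtype.val ht⟩
  · exact (Submodule.span_singleton_le_iff_mem _ _).2 hv

lemma mkPt_le {x : Fin n → ZMod 3} (hx : x ≠ 0) (W : Submodule (ZMod 3) (Fin n → ZMod 3)) :
    (mkPt x hx).1 ≤ W ↔ x ∈ W := Submodule.span_singleton_le_iff_mem _ _

lemma vecCol_even (c : ProjPoint3 n → Bool) (x : Fin n → ZMod 3) :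
    vecCol c (-x) = vecCol c x := by
  by_cases hx : x = 0
  · simp [hx]
  · have hx' : -x ≠ 0 := neg_ne_zero.2 hx
    unfold vecCol
    rw [dif_pos hx, dif_pos hx', (mkPt_eq_iff hx' hx).2 (Or.inr rfl)]

/-- Independence spelled out over the three-element field. -/
def Ind (x y : Fin n → ZMod 3) : Prop := x ≠ 0 ∧ y ≠ 0 ∧ x + y ≠ 0 ∧ x - y ≠ 0

lemma line_points (x y : Fin n → ZMod 3) (h : Ind x y) :
    {P : ProjPoint3 n | P.1 ≤ Submodule.span (ZMod 3) {x, y}} =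
      {mkPt x h.1, mkPt y h.2.1, mkPt (x + y) h.2.2.1, mkPt (x - y) h.2.2.2} := by
  ext P
  obtain ⟨z, hz, rfl⟩ := exists_mkPt P
  simp only [Set.mem_ofPred_eq, mkPt_le, Set.mem_insert_iff, Set.mem_singleton_iff, mkPt_eq_iff,
    Submodule.mem_span_pair]
  constructor
  · rintro ⟨a, b, rfl⟩
    have ha : a = 0 ∨ a = 1 ∨ a = -1 := zmod3_cases a
    have hb : b = 0 ∨ b = 1 ∨ b = -1 := zmod3_cases b
    rcases ha with rfl | rfl | rfl <;> rcases hb with rfl | rfl | rfl <;>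
      simp only [zero_smul, one_smul, neg_smul, add_zero, zero_add, ne_eq, not_true] at hz ⊢
    all_goals first
      | exact absurd rfl hz
      | tauto
      | (right; right; left; left; abel; done)
      | (right; right; left; right; abel; done)
      | (right; right; right; left; abel; done)
      | (right; right; right; right; abel; done)
  · rintro ((rfl | rfl) | (rfl | rfl) | (rfl | rfl) | (rfl | rfl))
    · exact ⟨1, 0, by module⟩
    · exact ⟨-1, 0, by module⟩
    · exact ⟨0, 1, by module⟩
    · exact ⟨0, -1, by module⟩
    · exact ⟨1, 1, by module⟩
    · exact ⟨-1, -1, by module⟩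
    · exact ⟨1, -1, by module⟩
    · exact ⟨-1, 1, by module⟩

lemma four_count {α : Type*} (c : α → Bool) (S : Set α) (p q r s : α) (hS : S = {p, q, r, s})
    (h1 : p ≠ q) (h2 : p ≠ r) (h3 : p ≠ s) (h4 : q ≠ r) (h5 : q ≠ s) (h6 : r ≠ s) :
    ({P | P ∈ S ∧ c P = true}.ncard = 2 ∧ {P | P ∈ S ∧ c P = false}.ncard = 2) ↔
      ¬ NB4 (c p) (c q) (c r) (c s) := by
  classical
  have key : ∀ b, {P | P ∈ S ∧ c P = b} =
      ((({p, q, r, s} : Finset α).filter (fun P => c P = b) : Finset α) : Set α) := by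
    intro b
    ext P
    simp [hS]
  rw [key, key, Set.ncard_coe_finset, Set.ncard_coe_finset]
  unfold NB4
  cases hp : c p <;> cases hq : c q <;> cases hr : c r <;> cases hs : c s <;>
    simp [Finset.filter_insert, Finset.filter_singleton, hp, hq, hr, hs, h1, h2, h3, h4, h5, h6]

lemma line_iff (c : ProjPoint3 n → Bool) (x y : Fin n → ZMod 3) (h : Ind x y) :
    ({P : ProjPoint3 n | P.1 ≤ Submodule.span (ZMod 3) {x, y} ∧ c P = true}.ncard = 2 ∧
    {P : ProjPoint3 n | P.1 ≤ Submodule.span (ZMod 3) {x, y} ∧ c P = false}.ncard = 2) ↔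
      ¬ NB4 (vecCol c x) (vecCol c y) (vecCol c (x + y)) (vecCol c (x - y)) := by
  have e := four_count c _ _ _ _ _ (line_points x y h)
  obtain ⟨a1, a2, a3, a4⟩ := h
  have two : ∀ z : Fin n → ZMod 3, z + z = -z := fun z => eq3 z (by abel)
  have a5 : y - x ≠ 0 := fun h => a4 (by rw [← neg_sub, h, neg_zero])
  have lin : ∀ {u v w : Fin n → ZMod 3} (t : ZMod 3), t ≠ 0 → w ≠ 0 → u - v = t • w → u ≠ v := by
    have : Fact (Nat.Prime 3) := ⟨Nat.prime_three⟩
    rintro u v w t ht hw h rfl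
    rw [sub_self] at h
    exact (smul_ne_zero ht hw) h.symm
  have e1 : ∀ z : Fin n → ZMod 3, (hz : z ≠ 0) → vecCol c z = c (mkPt z hz) := fun z hz => by
    unfold vecCol; rw [dif_pos hz]
  rw [e1 _ a1, e1 _ a2, e1 _ a3, e1 _ a4]
  refine e ?_ ?_ ?_ ?_ ?_ ?_ <;> rw [Ne, mkPt_eq_iff] <;> rintro (h | h)
  · exact lin 1 (by decide) a4 (by module) h
  · exact lin 1 (by decide) a3 (by module) h
  · exact lin (-1) (by decide) a2 (by module) h
  · exact lin (-1) (by decide) a4 (by match_scalars <;> decide) h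
  · exact lin 1 (by decide) a2 (by module) h
  · exact lin (-1) (by decide) a3 (by match_scalars <;> decide) h
  · exact lin (-1) (by decide) a1 (by module) h
  · exact lin 1 (by decide) a4 (by match_scalars <;> decide) h
  · exact lin (-1) (by decide) a3 (by match_scalars <;> decide) h
  · exact lin 1 (by decide) a1 (by match_scalars <;> decide) h
  · exact lin (-1) (by decide) a2 (by match_scalars <;> decide) h
  · exact lin (-1) (by decide) a1 (by match_scalars <;> decide) h

lemma ind_finrank {x y : Fin n → ZMod 3} (h : Ind x y) :
    Module.finrank (ZMod 3) (Submodule.span (ZMod 3) {x, y}) = 2 := by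
  have : Fact (Nat.Prime 3) := ⟨Nat.prime_three⟩
  have hl : LinearIndependent (ZMod 3) ![x, y] := by
    rw [LinearIndependent.pair_iff' h.1]
    intro a ha
    have hc : a = 0 ∨ a = 1 ∨ a = -1 := zmod3_cases a
    obtain ⟨a1, a2, a3, a4⟩ := h
    rcases hc with rfl | rfl | rfl
    · exact a2 (by simpa using ha.symm)
    · exact a4 (by rw [← ha]; simp)
    · exact a3 (by rw [← ha]; simp)
  have := finrank_span_eq_card hl
  rw [show Set.range ![x, y] = {x, y} by
    ext z; simp [eq_comm, or_comm]] at this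
  simpa using this

lemma good_of_free (c : ProjPoint3 n → Bool) (hc : BalancedLineFree c) : Good (vecCol c) := by
  refine ⟨vecCol_even c, fun x y => ?_⟩
  by_cases h : Ind x y
  · by_contra hn
    exact hc ⟨_, ind_finrank h, (line_iff c x y h).2 hn⟩
  · have two : ∀ z : Fin n → ZMod 3, z + z = -z := fun z => eq3 z (by abel)
    have : x = 0 ∨ y = 0 ∨ x = -y ∨ x = y := by
      unfold Ind at h
      rw [eq_neg_iff_add_eq_zero, ← sub_eq_zero (a := x) (b := y)]
      tauto
    rcases this with rfl | rfl | rfl | rfl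
    · simp only [zero_add, zero_sub, vecCol_even, NB4]; grind
    · simp only [add_zero, sub_zero, NB4]; grind
    · rw [show -y - y = y from eq3 (-y) (by abel)]
      simp only [vecCol_even, NB4]; grind
    · rw [two]
      simp only [vecCol_even, NB4]; grind

lemma free_of_good (c : ProjPoint3 n → Bool)
    (hc : ∀ x y, Ind x y → NB4 (vecCol c x) (vecCol c y) (vecCol c (x + y)) (vecCol c (x - y))) :
    BalancedLineFree c := by
  have : Fact (Nat.Prime 3) := ⟨Nat.prime_three⟩
  rintro ⟨L, hL, h⟩
  let B := Module.finBasisOfFinrankEq (ZMod 3) L hL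
  have hs : L = Submodule.span (ZMod 3) {(B 0 : Fin n → ZMod 3), (B 1 : Fin n → ZMod 3)} := by
    have h1 := B.span_eq
    have h2 := congrArg (Submodule.map L.subtype) h1
    rw [Submodule.map_span, Submodule.map_top, Submodule.range_subtype] at h2
    refine h2.symm.trans ?_
    congr 1
    ext z
    simp [Fin.exists_fin_two, eq_comm]
  have hi := LinearIndependent.pair_iff.1 (show LinearIndependent (ZMod 3) ![B 0, B 1] by
    convert B.linearIndependent
    ext i; fin_cases i <;> rfl)
  have key : ∀ s t : ZMod 3, s • (B 0 : Fin n → ZMod 3) + t • (B 1 : Fin n → ZMod 3) = 0 →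
      s = 0 ∧ t = 0 := fun s t h => hi s t (Subtype.ext h)
  have hI : Ind (B 0 : Fin n → ZMod 3) (B 1 : Fin n → ZMod 3) := by
    refine ⟨fun h => ?_, fun h => ?_, fun h => ?_, fun h => ?_⟩
    · exact absurd (key 1 0 (by simp [h])).1 zmod3_one_ne
    · exact absurd (key 0 1 (by simp [h])).2 zmod3_one_ne
    · exact absurd (key 1 1 (by simpa using h)).1 zmod3_one_ne
    · exact absurd (key 1 (-1) (by rw [← h]; module)).1 zmod3_one_ne
  rw [hs] at h
  exact (line_iff c _ _ hI).1 h (hc _ _ hI)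

end translation

/-- `i` is the top index in the support of `x`. -/
def IsTopIdx {n : ℕ} (x : Fin n → ZMod 3) (i : Fin n) : Prop := x i ≠ 0 ∧ ∀ j, i < j → x j = 0

lemma exists_isTopIdx {n : ℕ} (x : Fin n → ZMod 3) (hx : x ≠ 0) : ∃ i, IsTopIdx x i := by
  obtain ⟨i0, h0⟩ := Function.ne_iff.1 hx
  obtain ⟨i, hi, hm⟩ := Set.exists_max_image {i | x i ≠ 0} id (Set.toFinite _) ⟨i0, h0⟩
  refine ⟨i, hi, fun j hj => ?_⟩
  by_contra h
  exact absurd (hm j h) (not_le.2 hj)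

lemma IsTopIdx.unique {n : ℕ} {x : Fin n → ZMod 3} {i j : Fin n} (hi : IsTopIdx x i) (hj : IsTopIdx x j) :
    i = j := by
  rcases lt_trichotomy i j with h | h | h
  · exact absurd (hi.2 j h) hj.1
  · exact h
  · exact absurd (hj.2 i h) hi.1

open Classical in
/-- The flag colouring: colour of a point is the parity of the top index. -/
noncomputable def flagCol (n : ℕ) (P : ProjPoint3 n) : Bool :=
  decide (∃ x ∈ P.1, ∃ i, IsTopIdx x i ∧ (i : ℕ) % 2 = 0)

lemma flagCol_eq {n : ℕ} {x : Fin n → ZMod 3} (hx : x ≠ 0) {i : Fin n} (hi : IsTopIdx x i) :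
    flagCol n (mkPt x hx) = decide ((i : ℕ) % 2 = 0) := by
  unfold flagCol
  congr 1
  apply propext
  constructor
  · rintro ⟨y, hy, j, hj, h⟩
    obtain ⟨t, rfl⟩ := Submodule.mem_span_singleton.1 hy
    have ht : t ≠ 0 := by rintro rfl; exact hj.1 (by simp)
    have : Fact (Nat.Prime 3) := ⟨Nat.prime_three⟩
    have : IsTopIdx x j := ⟨fun h => hj.1 (by simp [h]), fun k hk => by
      have := hj.2 k hk
      simpa [ht] using this⟩
    rwa [hi.unique this]
  · intro h
    exact ⟨x, Submodule.mem_span_singleton_self x, i, hi, h⟩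

lemma vecCol_flag {n : ℕ} {x : Fin n → ZMod 3} {i : Fin n} (hi : IsTopIdx x i) :
    vecCol (flagCol n) x = decide ((i : ℕ) % 2 = 0) := by
  have hx : x ≠ 0 := by rintro rfl; exact hi.1 rfl
  unfold vecCol
  rw [dif_pos hx, flagCol_eq hx hi]

lemma flag_free (n : ℕ) : BalancedLineFree (flagCol n) := by
  apply free_of_good
  rintro x y ⟨hx, hy, hs, hd⟩
  obtain ⟨i, hi⟩ := exists_isTopIdx x hx
  obtain ⟨j, hj⟩ := exists_isTopIdx y hy
  rcases lt_trichotomy i j with h | h | h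
  · have h1 : IsTopIdx (x + y) j := ⟨by simpa [hi.2 j h] using hj.1, fun k hk => by
      simp [hi.2 k (h.trans hk), hj.2 k hk]⟩
    have h2 : IsTopIdx (x - y) j := ⟨by simpa [hi.2 j h] using hj.1, fun k hk => by
      simp [hi.2 k (h.trans hk), hj.2 k hk]⟩
    rw [vecCol_flag hj, vecCol_flag h1, vecCol_flag h2]
    unfold NB4; grind
  · subst h
    have ha : ∀ a b : ZMod 3, a ≠ 0 → b ≠ 0 → a + b ≠ 0 ∨ a - b ≠ 0 := by decide
    rcases ha _ _ hi.1 hj.1 with h | h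
    · have h1 : IsTopIdx (x + y) i := ⟨h, fun k hk => by simp [hi.2 k hk, hj.2 k hk]⟩
      rw [vecCol_flag hi, vecCol_flag hj, vecCol_flag h1]
      unfold NB4; grind
    · have h1 : IsTopIdx (x - y) i := ⟨h, fun k hk => by simp [hi.2 k hk, hj.2 k hk]⟩
      rw [vecCol_flag hi, vecCol_flag hj, vecCol_flag h1]
      unfold NB4; grind
  · have h1 : IsTopIdx (x + y) i := ⟨by simpa [hj.2 i h] using hi.1, fun k hk => by
      simp [hj.2 k (h.trans hk), hi.2 k hk]⟩
    have h2 : IsTopIdx (x - y) i := ⟨by simpa [hj.2 i h] using hi.1, fun k hk => by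
      simp [hj.2 k (h.trans hk), hi.2 k hk]⟩
    rw [vecCol_flag hi, vecCol_flag h1, vecCol_flag h2]
    unfold NB4; grind

lemma flag_bound (n : ℕ) (W : Submodule (ZMod 3) (Fin n → ZMod 3))
    (hW : ∀ P Q : ProjPoint3 n, P.1 ≤ W → Q.1 ≤ W → flagCol n P = flagCol n Q) :
    Module.finrank (ZMod 3) W ≤ (n + 1) / 2 := by
  have : Fact (Nat.Prime 3) := ⟨Nat.prime_three⟩
  obtain ⟨e, he⟩ : ∃ e : ℕ, ∀ x ∈ W, ∀ i, IsTopIdx x i → (i : ℕ) % 2 = e := by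
    by_cases h : ∃ x ∈ W, ∃ i, IsTopIdx x i
    · obtain ⟨x, hx, i, hi⟩ := h
      refine ⟨(i : ℕ) % 2, fun y hy j hj => ?_⟩
      have hx0 : x ≠ 0 := by rintro rfl; exact hi.1 rfl
      have hy0 : y ≠ 0 := by rintro rfl; exact hj.1 rfl
      have := hW (mkPt x hx0) (mkPt y hy0) ((mkPt_le _ _).2 hx) ((mkPt_le _ _).2 hy)
      rw [flagCol_eq hx0 hi, flagCol_eq hy0 hj, decide_eq_decide] at this
      omega
    · exact ⟨0, fun x hx i hi => absurd ⟨x, hx, i, hi⟩ h⟩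
  let g : (Fin n → ZMod 3) →ₗ[ZMod 3] (Fin ((n + 1) / 2) → ZMod 3) :=
    LinearMap.pi fun j => if h : 2 * (j : ℕ) + e < n then LinearMap.proj ⟨2 * (j : ℕ) + e, h⟩ else 0
  have hinj : Function.Injective (g ∘ₗ W.subtype) := by
    rw [← LinearMap.ker_eq_bot, LinearMap.ker_eq_bot']
    rintro ⟨x, hx⟩ h
    by_contra hne
    have hx0 : x ≠ 0 := fun h => hne (Subtype.ext h)
    obtain ⟨i, hi⟩ := exists_isTopIdx x hx0
    have h1 := he x hx i hi
    have hin := i.2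
    have h2 := congrFun h ⟨(i : ℕ) / 2, by omega⟩
    have h3 : 2 * ((i : ℕ) / 2) + e = i := by omega
    simp [g, h3] at h2
    exact hi.1 h2
  simpa using LinearMap.finrank_le_finrank_of_injective hinj

theorem stmt7 {n : ℕ} (hn : 2 ≤ n) (c : ProjPoint3 n → Bool)
    (hc : BalancedLineFree c) :
    (∃ W : Submodule (ZMod 3) (Fin n → ZMod 3),
      (n + 1) / 2 ≤ Module.finrank (ZMod 3) W ∧
      ∀ P Q : ProjPoint3 n, P.1 ≤ W → Q.1 ≤ W → c P = c Q) ∧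
    (∃ c' : ProjPoint3 n → Bool, BalancedLineFree c' ∧
      ∀ W : Submodule (ZMod 3) (Fin n → ZMod 3),
        (∀ P Q : ProjPoint3 n, P.1 ≤ W → Q.1 ≤ W → c' P = c' Q) →
        Module.finrank (ZMod 3) W ≤ (n + 1) / 2) := by
  refine ⟨?_, flagCol n, flag_free n, flag_bound n⟩
  have : Fact (Nat.Prime 3) := ⟨Nat.prime_three⟩
  obtain ⟨A, hA, hd⟩ := exists_mono n (Fin n → ZMod 3) (vecCol c) (good_of_free c hc) (by simp)
  have hcol : ∀ b, ∀ P : ProjPoint3 n, P.1 ≤ A b → c P = b := by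
    intro b P hP
    obtain ⟨x, hx, rfl⟩ := exists_mkPt P
    have := hA b x ((mkPt_le hx _).1 hP) hx
    unfold vecCol at this
    rwa [dif_pos hx] at this
  obtain ⟨b, hb⟩ : ∃ b, (n + 1) / 2 ≤ Module.finrank (ZMod 3) (A b) := by
    by_cases h : (n + 1) / 2 ≤ Module.finrank (ZMod 3) (A true)
    · exact ⟨true, h⟩
    · exact ⟨false, by omega⟩
  exact ⟨A b, hb, fun P Q hP hQ => (hcol b P hP).trans (hcol b Q hQ).symm⟩
end
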